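/- Let n ≥ 1, 0 < p ≤ 1, 0 < q ≤ ∞, and let ψ be smooth, compactly supported on ℝⁿ with ∫ψ ≠ 0. Let f ∈ L¹_loc(ℝⁿ) satisfy ‖Nf‖_{p,q} < ∞. Then there exist H^p atoms a_{j,k} with defining cubes I_{j,k}, and coefficients λ_{j,k} = 2^k |I_{j,k}|^{1/p} ≥ 0, such that: (i) for each fixed k the cubes {I_{j,k}}_j have bounded overlap, Σ_j χ_{I_{j,k}} ≤ C with C independent of k; (ii) for every smooth compactly supported test function g one has ∫ f g = lim_{n→∞} Σ_{|k|≤n} Σ_j λ_{j,k} ∫ a_{j,k} g; and (iii) (Σ_k (Σ_j λ_{j,k}^p)^{q/p})^{1/q} is comparable to ‖Nf‖_{p,q}, i.e. c₁ ‖Nf‖_{p,q} ≤ (Σ_k (Σ_j λ_{j,k}^p)^{q/p})^{1/q} ≤ c₂ ‖Nf‖_{p,q} with constants depending only on n, p, q, ψ (with the usual supremum interpretation of the outer ℓ^q sum when q = ∞). -/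

import Mathlib

open MeasureTheory ENNReal Set

noncomputable section

abbrev Euc (n : ℕ) := EuclideanSpace ℝ (Fin n)

/-- Distribution function `m(F, lam) = |{x : lam < F x}|` (Lebesgue measure). -/
def distFn {n : ℕ} (F : Euc n → ℝ≥0∞) (lam : ℝ≥0∞) : ℝ≥0∞ :=
  volume {x | lam < F x}

/-- View a real-valued function as an `ℝ≥0∞`-valued one via its absolute value. -/
def eF {n : ℕ} (g : Euc n → ℝ) : Euc n → ℝ≥0∞ :=
  fun x => ENNReal.ofReal |g x|

/-- Dyadic Lorentz `L^{p,q}` quasinorm. -/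
def lorentzNorm {n : ℕ} (p : ℝ) (q : ℝ≥0∞) (F : Euc n → ℝ≥0∞) : ℝ≥0∞ :=
  if q = ∞ then ⨆ k : ℤ, (2 : ℝ≥0∞) ^ k * (distFn F ((2 : ℝ≥0∞) ^ k)) ^ (1/p)
  else (∑' k : ℤ, ((2 : ℝ≥0∞) ^ k * (distFn F ((2 : ℝ≥0∞) ^ k)) ^ (1/p)) ^ q.toReal) ^ (1/q.toReal)

/-- `ℓ^q(ℤ)` norm of a nonnegative sequence. -/
def ellq (q : ℝ≥0∞) (a : ℤ → ℝ≥0∞) : ℝ≥0∞ :=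
  if q = ∞ then ⨆ k : ℤ, a k else (∑' k : ℤ, (a k) ^ q.toReal) ^ (1/q.toReal)

/-- The axis-parallel closed cube centered at `c` with half side-length `r`. -/
def cube {n : ℕ} (c : Euc n) (r : ℝ) : Set (Euc n) := {y | ∀ i, |y i - c i| ≤ r}

/-- `H^p` atom with defining cube `cube c r`; `|cube c r| = (2r)^n`. -/
def IsHpAtom {n : ℕ} (p : ℝ) (a : Euc n → ℝ) (c : Euc n) (r : ℝ) : Prop :=
  0 < r ∧ Measurable a ∧ (∀ x, x ∉ cube c r → a x = 0) ∧
    (∀ᵐ x ∂(volume : Measure (Euc n)), |a x| ≤ ((((2*r)^n : ℝ)) ^ (1/p))⁻¹) ∧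
    ∀ α : Fin n → ℕ, (∑ i, α i) ≤ ⌊(n : ℝ) * (1/p - 1)⌋₊ →
      (∫ y : Euc n, (∏ i, y i ^ α i) * a y) = 0

/-- `(f * ψ_t)(y)` where `ψ_t(x) = t⁻ⁿ ψ(x/t)`. -/
def convAt {n : ℕ} (ψ f : Euc n → ℝ) (t : ℝ) (y : Euc n) : ℝ :=
  ∫ z : Euc n, f z * ((t ^ n)⁻¹ * ψ (t⁻¹ • (y - z)))

/-- Non-tangential maximal function. -/
def ntMax {n : ℕ} (ψ f : Euc n → ℝ) (x : Euc n) : ℝ≥0∞ :=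
  ⨆ (y : Euc n) (t : ℝ) (_ : 0 < t) (_ : dist x y < t), ENNReal.ofReal |convAt ψ f t y|

/-- Radial maximal function. -/
def radMax {n : ℕ} (φ f : Euc n → ℝ) (x : Euc n) : ℝ≥0∞ :=
  ⨆ (t : ℝ) (_ : 0 < t), ENNReal.ofReal |convAt φ f t x|

/-!
The proof is a Calderón–Zygmund decomposition at all heights `2 ^ κ` at once. Instead of `Nf` one
decomposes along a tangential maximal function, whose aperture `2 ^ s` is allowed only above the
larger height `2 ^ (κ + M * s)`. Its level sets `Ω κ` are open and contain those of `Nf`, and change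
of aperture shows that for large `M` they have the same size in the sense of the Lorentz norm.

Every smooth bump living at scale `r` is synthesised from averages of the dilates of `ψ` at the
scales `r / 2 ^ s`. Hence the tangential bound at a single point off `Ω κ` forces the integral of
`f` against a bump adapted to a Whitney ball of `Ω κ` to be `O(2 ^ κ)` times the volume of the ball.
So the moments of `f` localised by a Whitney partition of unity can be cancelled by functions of
size `O(2 ^ κ)`, built from a system dual to the monomials.

Subtracting the corrected pieces on `Ω (κ + 1)` from those on `Ω κ`, with the pieces on `Ω (κ + 1)`
first cut by the partition of unity of `Ω κ`, leaves functions of size `O(2 ^ κ)` with vanishing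
moments on the Whitney cubes of `Ω κ`: these are the atoms, up to normalisation. The sum over `κ`
telescopes. At `κ → ∞` the remainder vanishes because `|Ω κ| → 0`, and at `κ → -∞` because what is
left of `f` outside the corrected pieces is `O(2 ^ κ)`. The norms agree because the Whitney cubes of
`Ω κ` have total volume comparable to `|Ω κ|`.
-/

/-! ### Sequence spaces -/

theorem ellq_mono (q : ℝ≥0∞) {a b : ℤ → ℝ≥0∞} (h : ∀ k, a k ≤ b k) : ellq q a ≤ ellq q b := by
  unfold ellq
  split_ifs
  · exact iSup_mono h
  · gcongr with k
    exact h k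

theorem le_ellq {q : ℝ≥0∞} (hq : 0 < q) (a : ℤ → ℝ≥0∞) (k : ℤ) : a k ≤ ellq q a := by
  unfold ellq
  split_ifs with h
  · exact le_iSup a k
  · rw [one_div, ENNReal.le_rpow_inv_iff (ENNReal.toReal_pos hq.ne' h)]
    exact ENNReal.le_tsum (f := fun k => a k ^ q.toReal) k

theorem iSup_pow_mul_rpow_le_tsum {r : ℝ} (hr : 0 < r) (θ : ℝ≥0∞) (a : ℕ → ℝ≥0∞) :
    (⨆ s, θ ^ s * a s) ^ r ≤ ∑' s, (θ ^ r) ^ s * a s ^ r := by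
  rw [← ENNReal.le_rpow_inv_iff hr]
  refine iSup_le fun s => ?_
  rw [ENNReal.le_rpow_inv_iff hr, ENNReal.mul_rpow_of_nonneg _ _ hr.le, ← ENNReal.rpow_natCast,
    ← ENNReal.rpow_mul, mul_comm (s : ℝ), ENNReal.rpow_mul, ENNReal.rpow_natCast]
  exact ENNReal.le_tsum (f := fun s => (θ ^ r) ^ s * a s ^ r) s

theorem tsum_rpow_le_of_le_iSup_shift {r : ℝ} (hr : 0 < r) (θ : ℝ≥0∞) {C : ℝ≥0∞}
    {a b : ℤ → ℝ≥0∞} {τ : ℕ → ℤ} (h : ∀ k, b k ≤ C * ⨆ s : ℕ, θ ^ s * a (k + τ s)) :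
    ∑' k, b k ^ r ≤ C ^ r * ((1 - θ ^ r)⁻¹ * ∑' k, a k ^ r) := by
  have h_term : ∀ k, b k ^ r ≤ C ^ r * ∑' s : ℕ, (θ ^ r) ^ s * a (k + τ s) ^ r := fun k =>
    calc b k ^ r ≤ (C * ⨆ s : ℕ, θ ^ s * a (k + τ s)) ^ r := by gcongr; exact h k
      _ = C ^ r * (⨆ s : ℕ, θ ^ s * a (k + τ s)) ^ r := ENNReal.mul_rpow_of_nonneg _ _ hr.le
      _ ≤ _ := by gcongr; exact iSup_pow_mul_rpow_le_tsum hr θ _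
  calc ∑' k, b k ^ r ≤ ∑' k, C ^ r * ∑' s : ℕ, (θ ^ r) ^ s * a (k + τ s) ^ r :=
        ENNReal.tsum_le_tsum h_term
    _ = C ^ r * ∑' s : ℕ, (θ ^ r) ^ s * ∑' k, a (k + τ s) ^ r := by
        simp only [ENNReal.tsum_mul_left, ENNReal.tsum_comm (α := ℤ)]
    _ = C ^ r * ∑' s : ℕ, (θ ^ r) ^ s * ∑' k, a k ^ r := by
        congr! 3 with s
        exact congrArg _ ((Equiv.addRight (τ s)).tsum_eq fun k => a k ^ r)
    _ = _ := by rw [ENNReal.tsum_mul_right, ENNReal.tsum_geometric]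

theorem exists_ellq_le_of_le_iSup_shift {q : ℝ≥0∞} (hq : 0 < q) {θ : ℝ≥0∞} (hθ : θ < 1) :
    ∃ D : ℝ≥0∞, D ≠ ∞ ∧ ∀ (C : ℝ≥0∞) (a b : ℤ → ℝ≥0∞) (τ : ℕ → ℤ),
      (∀ k, b k ≤ C * ⨆ s : ℕ, θ ^ s * a (k + τ s)) → ellq q b ≤ C * D * ellq q a := by
  by_cases hqt : q = ∞
  · refine ⟨1, one_ne_top, fun C a b τ h => ?_⟩
    simp only [ellq, hqt, if_true, mul_one]
    refine iSup_le fun k => (h k).trans ?_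
    gcongr
    exact iSup_le fun s => (mul_le_of_le_one_left' (pow_le_one₀ zero_le hθ.le)).trans (le_iSup a _)
  · have hr : 0 < q.toReal := ENNReal.toReal_pos hq.ne' hqt
    set r := q.toReal
    refine ⟨((1 - θ ^ r)⁻¹) ^ (1 / r), ?_, fun C a b τ h => ?_⟩
    · refine ENNReal.rpow_ne_top_of_nonneg (by positivity) (ENNReal.inv_ne_top.2 ?_)
      exact (tsub_pos_of_lt (ENNReal.rpow_lt_one hθ hr)).ne'
    · simp only [ellq, hqt, if_false]
      calc (∑' k, b k ^ r) ^ (1 / r)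
          ≤ (C ^ r * ((1 - θ ^ r)⁻¹ * ∑' k, a k ^ r)) ^ (1 / r) := by
            gcongr
            exact tsum_rpow_le_of_le_iSup_shift hr θ h
        _ = _ := by
            rw [ENNReal.mul_rpow_of_nonneg _ _ (by positivity),
              ENNReal.mul_rpow_of_nonneg _ _ (by positivity), ← ENNReal.rpow_mul,
              mul_one_div_cancel hr.ne', ENNReal.rpow_one, mul_assoc]

/-! ### Change of aperture -/

section HaarMeasure

variable {E : Type*} [NormedAddCommGroup E] [NormedSpace ℝ E] [FiniteDimensional ℝ E]
  [Nontrivial E] [MeasurableSpace E] [BorelSpace E] (μ : Measure E) [μ.IsAddHaarMeasure]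

theorem exists_forall_ball_subset_radius_le {U : Set E} (hU : μ U ≠ ∞) :
    ∃ R : ℝ, ∀ (y : E) (t : ℝ), 0 < t → Metric.ball y t ⊆ U → t ≤ R := by
  set ω := μ (Metric.ball (0 : E) 1)
  have hω : ω ≠ 0 := (Metric.measure_ball_pos _ _ one_pos).ne'
  refine ⟨max 1 (μ U / ω).toReal, fun y t ht hy => ?_⟩
  rcases le_total t 1 with ht1 | ht1
  · exact le_max_of_le_left ht1
  have h_vol : ENNReal.ofReal (t ^ Module.finrank ℝ E) ≤ μ U / ω := by
    rw [ENNReal.le_div_iff_mul_le (Or.inl hω) (Or.inl measure_ball_lt_top.ne),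
      ← Measure.addHaar_ball_of_pos μ y ht]
    exact measure_mono hy
  calc t ≤ t ^ Module.finrank ℝ E := le_self_pow₀ ht1 Module.finrank_pos.ne'
    _ ≤ (μ U / ω).toReal := (ENNReal.ofReal_le_iff_le_toReal (ENNReal.div_ne_top hU hω)).1 h_vol
    _ ≤ _ := le_max_right _ _

theorem measure_biUnion_ball_mul_le {I : Set (E × ℝ)} (hI : ∀ z ∈ I, 0 < z.2) {α : ℝ}
    (hα : 1 ≤ α) :
    μ (⋃ z ∈ I, Metric.ball z.1 (α * z.2)) ≤
      ENNReal.ofReal ((5 * α) ^ Module.finrank ℝ E) * μ (⋃ z ∈ I, Metric.ball z.1 z.2) := by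
  have : 0 < α := one_pos.trans_le hα
  by_cases hU : μ (⋃ z ∈ I, Metric.ball z.1 z.2) = ∞
  · rw [hU, ENNReal.mul_top (ENNReal.ofReal_pos.2 (by positivity)).ne']
    exact le_top
  obtain ⟨R, hR⟩ := exists_forall_ball_subset_radius_le μ hU
  obtain ⟨u, huI, hdisj, hcov⟩ := Vitali.exists_disjoint_subfamily_covering_enlargement_closedBall I
    (fun z => z.1) (fun z => α * z.2) (α * R)
    (fun z hz => by
      gcongr
      exact hR z.1 z.2 (hI z hz) (subset_biUnion_of_mem (u := fun z => Metric.ball z.1 z.2) hz))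
    5 (by norm_num)
  have hdisj' : u.PairwiseDisjoint fun z => Metric.ball z.1 z.2 :=
    hdisj.mono_on fun z hz => Metric.ball_subset_closedBall.trans
      (Metric.closedBall_subset_closedBall (le_mul_of_one_le_left (hI z (huI hz)).le hα))
  have hcount : u.Countable := hdisj'.countable_of_isOpen (fun _ _ => Metric.isOpen_ball)
    fun z hz => ⟨z.1, Metric.mem_ball_self (hI z (huI hz))⟩
  calc μ (⋃ z ∈ I, Metric.ball z.1 (α * z.2))
      ≤ μ (⋃ z ∈ u, Metric.closedBall z.1 (5 * (α * z.2))) := by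
        refine measure_mono (iUnion₂_subset fun z hz => ?_)
        obtain ⟨b, hb, hzb⟩ := hcov z hz
        exact Metric.ball_subset_closedBall.trans <| hzb.trans <|
          subset_biUnion_of_mem (u := fun z => Metric.closedBall z.1 (5 * (α * z.2))) hb
    _ ≤ ∑' z : u, μ (Metric.closedBall z.1.1 (5 * (α * z.1.2))) := measure_biUnion_le _ hcount _
    _ = ∑' z : u, ENNReal.ofReal ((5 * α) ^ Module.finrank ℝ E) * μ (Metric.ball z.1.1 z.1.2) := by
        refine tsum_congr fun z => ?_
        have hz := hI z (huI z.2)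
        rw [Measure.addHaar_closedBall _ _ (by positivity), Measure.addHaar_ball_of_pos _ _ hz,
          ← mul_assoc, ← mul_assoc, ← ENNReal.ofReal_mul (by positivity), ← mul_pow]
    _ = ENNReal.ofReal ((5 * α) ^ Module.finrank ℝ E) * μ (⋃ z ∈ u, Metric.ball z.1 z.2) := by
        rw [ENNReal.tsum_mul_left, measure_biUnion hcount hdisj' fun _ _ => measurableSet_ball]
    _ ≤ _ := mul_le_mul_right (measure_mono (biUnion_subset_biUnion_left huI)) _

end HaarMeasure

section TangentialSet

variable {n : ℕ}

/-- The set where the non-tangential maximal function of aperture `α` exceeds `v`. It is kept as a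
set, rather than a superlevel set of a function, because it is then visibly a union of balls. -/
def apertureSet (ψ f : Euc n → ℝ) (α v : ℝ) : Set (Euc n) :=
  ⋃ z ∈ {z : Euc n × ℝ | 0 < z.2 ∧ v < |convAt ψ f z.2 z.1|}, Metric.ball z.1 (α * z.2)

theorem mem_apertureSet {ψ f : Euc n → ℝ} {α v : ℝ} {x : Euc n} :
    x ∈ apertureSet ψ f α v ↔ ∃ y t, 0 < t ∧ dist x y < α * t ∧ v < |convAt ψ f t y| := by
  simp only [apertureSet, mem_ofPred_eq, mem_iUnion, Metric.mem_ball, exists_prop, Prod.exists]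
  tauto

theorem isOpen_apertureSet (ψ f : Euc n → ℝ) (α v : ℝ) : IsOpen (apertureSet ψ f α v) :=
  isOpen_biUnion fun _ _ => Metric.isOpen_ball

theorem apertureSet_anti (ψ f : Euc n → ℝ) (α : ℝ) {v w : ℝ} (h : v ≤ w) :
    apertureSet ψ f α w ⊆ apertureSet ψ f α v :=
  biUnion_subset_biUnion_left fun _ hz => ⟨hz.1, h.trans_lt hz.2⟩

theorem volume_apertureSet_le [NeZero n] (ψ f : Euc n → ℝ) {α : ℝ} (hα : 1 ≤ α) (v : ℝ) :
    volume (apertureSet ψ f α v) ≤ ENNReal.ofReal ((5 * α) ^ n) * volume (apertureSet ψ f 1 v) := by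
  simpa [apertureSet] using measure_biUnion_ball_mul_le (volume : Measure (Euc n))
    (I := {z | 0 < z.2 ∧ v < |convAt ψ f z.2 z.1|}) (fun _ hz => hz.1) hα

theorem two_zpow_eq_ofReal (k : ℤ) : (2 : ℝ≥0∞) ^ k = ENNReal.ofReal ((2 : ℝ) ^ k) := by
  rw [← ENNReal.rpow_intCast, ← Real.rpow_intCast, ← ENNReal.ofReal_rpow_of_pos two_pos,
    ENNReal.ofReal_ofNat]

theorem distFn_ntMax {v : ℝ} (hv : 0 ≤ v) (ψ f : Euc n → ℝ) :
    distFn (ntMax ψ f) (ENNReal.ofReal v) = volume (apertureSet ψ f 1 v) := by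
  unfold distFn
  congr 1
  ext x
  simp only [mem_ofPred_eq, ntMax, lt_iSup_iff, mem_apertureSet, one_mul, exists_prop,
    ENNReal.ofReal_lt_ofReal_iff_of_nonneg hv]

theorem lorentzNorm_ntMax (p : ℝ) (q : ℝ≥0∞) (ψ f : Euc n → ℝ) :
    lorentzNorm p q (ntMax ψ f) =
      ellq q fun k => (2 : ℝ≥0∞) ^ k * volume (apertureSet ψ f 1 ((2 : ℝ) ^ k)) ^ (1 / p) := by
  have h (k : ℤ) : distFn (ntMax ψ f) ((2 : ℝ≥0∞) ^ k) =
      volume (apertureSet ψ f 1 ((2 : ℝ) ^ k)) := by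
    rw [two_zpow_eq_ofReal, distFn_ntMax (by positivity)]
  simp only [lorentzNorm, ellq, h]

/-! ### Tangential exceptional sets -/

/-- The exceptional set at height `2^κ` of the tangential maximal function with decay exponent `M`:
off this set `|f * ψ_t|` is at most `2^κ (2^M)^s` at distance `2^s t`. -/
def tangentialSet (ψ f : Euc n → ℝ) (M : ℕ) (κ : ℤ) : Set (Euc n) :=
  ⋃ s : ℕ, apertureSet ψ f (2 ^ s) ((2 : ℝ) ^ (κ + s * M : ℤ))

theorem isOpen_tangentialSet (ψ f : Euc n → ℝ) (M : ℕ) (κ : ℤ) : IsOpen (tangentialSet ψ f M κ) :=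
  isOpen_iUnion fun _ => isOpen_apertureSet _ _ _ _

theorem tangentialSet_anti (ψ f : Euc n → ℝ) (M : ℕ) : Antitone (tangentialSet ψ f M) :=
  fun _ _ h => iUnion_mono fun _ => apertureSet_anti _ _ _ <|
    zpow_le_zpow_right₀ one_le_two (add_le_add_left h _)

theorem apertureSet_subset_tangentialSet (ψ f : Euc n → ℝ) (M : ℕ) (κ : ℤ) :
    apertureSet ψ f 1 ((2 : ℝ) ^ κ) ⊆ tangentialSet ψ f M κ :=
  subset_iUnion_of_subset 0 (by simp)

theorem abs_convAt_le_of_notMem_tangentialSet {ψ f : Euc n → ℝ} {M : ℕ} {κ : ℤ} {x : Euc n}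
    (hx : x ∉ tangentialSet ψ f M κ) (s : ℕ) {y : Euc n} {t : ℝ} (ht : 0 < t)
    (hd : dist x y < 2 ^ s * t) : |convAt ψ f t y| ≤ (2 : ℝ) ^ κ * (2 ^ M) ^ s := by
  have h_pow : (2 : ℝ) ^ κ * (2 ^ M) ^ s = (2 : ℝ) ^ (κ + s * M : ℤ) := by
    rw [zpow_add₀ two_ne_zero, ← pow_mul, mul_comm M s]
    norm_cast
  rw [h_pow]
  by_contra! h
  exact hx (mem_iUnion.2 ⟨s, mem_apertureSet.2 ⟨y, t, ht, hd, h⟩⟩)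

section LorentzBounds

variable {p : ℝ} {M : ℕ}

theorem pow_mul_mul_rpow_rpow (hp : 0 < p) (x y u : ℝ≥0∞) (s : ℕ) :
    ((x ^ (1 / p)) ^ s * (y * u ^ (1 / p))) ^ p = x ^ s * (y ^ p * u) := by
  have h_cancel (z : ℝ≥0∞) : (z ^ (1 / p)) ^ p = z := by
    rw [one_div, ENNReal.rpow_inv_rpow hp.ne']
  rw [ENNReal.mul_rpow_of_nonneg _ _ hp.le, ENNReal.mul_rpow_of_nonneg _ _ hp.le, h_cancel,
    ← ENNReal.rpow_natCast, ← ENNReal.rpow_mul, mul_comm (s : ℝ), ENNReal.rpow_mul, h_cancel,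
    ENNReal.rpow_natCast]

-- The aperture constant `(2^s)^n` is absorbed by the height `2^{sM}`, with `4⁻ˢ` to spare.
theorem two_zpow_rpow_mul_le (hM : (n : ℝ) + 2 ≤ M * p) (κ : ℤ) (s : ℕ) :
    ((2 : ℝ≥0∞) ^ κ) ^ p * ENNReal.ofReal ((2 ^ s) ^ n) ≤
      2⁻¹ ^ s * 2⁻¹ ^ s * ((2 : ℝ≥0∞) ^ (κ + s * M : ℤ)) ^ p := by
  have h_ofReal : ENNReal.ofReal ((2 ^ s) ^ n) = (2 : ℝ≥0∞) ^ ((s : ℝ) * n) := by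
    rw [ENNReal.ofReal_pow (by positivity), ENNReal.ofReal_pow (by positivity), ← pow_mul,
      ← ENNReal.rpow_natCast]
    simp
  have h_zpow (m : ℤ) : ((2 : ℝ≥0∞) ^ m) ^ p = (2 : ℝ≥0∞) ^ ((m : ℝ) * p) := by
    rw [← ENNReal.rpow_intCast, ← ENNReal.rpow_mul]
  have h_inv : (2⁻¹ : ℝ≥0∞) ^ s = (2 : ℝ≥0∞) ^ (-(s : ℝ)) := by
    rw [ENNReal.rpow_neg, ENNReal.rpow_natCast, ENNReal.inv_pow]
  rw [h_ofReal, h_zpow, h_zpow, h_inv]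
  simp only [← ENNReal.rpow_add _ _ two_ne_zero ENNReal.ofNat_ne_top]
  refine ENNReal.rpow_le_rpow_of_exponent_le one_le_two ?_
  push_cast
  have : (s : ℝ) * (n + 2) ≤ s * (M * p) := by gcongr
  linarith

theorem two_zpow_rpow_mul_volume_tangentialSet_le [NeZero n] (hp : 0 < p)
    (hM : (n : ℝ) + 2 ≤ M * p) (ψ f : Euc n → ℝ) (κ : ℤ) :
    ((2 : ℝ≥0∞) ^ κ) ^ p * volume (tangentialSet ψ f M κ) ≤
      ENNReal.ofReal (5 ^ n) * 2 * (⨆ s : ℕ, ((2⁻¹ : ℝ≥0∞) ^ (1 / p)) ^ s *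
        ((2 : ℝ≥0∞) ^ (κ + s * M : ℤ) *
          volume (apertureSet ψ f 1 ((2 : ℝ) ^ (κ + s * M : ℤ))) ^ (1 / p))) ^ p := by
  set u : ℕ → ℝ≥0∞ := fun s => volume (apertureSet ψ f 1 ((2 : ℝ) ^ (κ + s * M : ℤ)))
  set Z : ℝ≥0∞ := ⨆ s : ℕ, ((2⁻¹ : ℝ≥0∞) ^ (1 / p)) ^ s *
    ((2 : ℝ≥0∞) ^ (κ + s * M : ℤ) * u s ^ (1 / p))
  have hZ (s : ℕ) : 2⁻¹ ^ s * (((2 : ℝ≥0∞) ^ (κ + s * M : ℤ)) ^ p * u s) ≤ Z ^ p :=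
    calc _ = (((2⁻¹ : ℝ≥0∞) ^ (1 / p)) ^ s * ((2 : ℝ≥0∞) ^ (κ + s * M : ℤ) * u s ^ (1 / p))) ^ p :=
          (pow_mul_mul_rpow_rpow hp ..).symm
      _ ≤ Z ^ p := by
          gcongr
          exact le_iSup (fun s : ℕ => ((2⁻¹ : ℝ≥0∞) ^ (1 / p)) ^ s *
            ((2 : ℝ≥0∞) ^ (κ + s * M : ℤ) * u s ^ (1 / p))) s
  have h_term (s : ℕ) : ((2 : ℝ≥0∞) ^ κ) ^ p *
      volume (apertureSet ψ f (2 ^ s) ((2 : ℝ) ^ (κ + s * M : ℤ))) ≤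
        ENNReal.ofReal (5 ^ n) * (2⁻¹ ^ s * Z ^ p) :=
    calc _ ≤ ((2 : ℝ≥0∞) ^ κ) ^ p * (ENNReal.ofReal ((5 * 2 ^ s) ^ n) * u s) := by
          gcongr; exact volume_apertureSet_le ψ f (one_le_pow₀ one_le_two) _
      _ = ENNReal.ofReal (5 ^ n) * (((2 : ℝ≥0∞) ^ κ) ^ p * ENNReal.ofReal ((2 ^ s) ^ n)) * u s := by
          rw [mul_pow, ENNReal.ofReal_mul (by positivity)]; ring
      _ ≤ ENNReal.ofReal (5 ^ n) *
            (2⁻¹ ^ s * 2⁻¹ ^ s * ((2 : ℝ≥0∞) ^ (κ + s * M : ℤ)) ^ p) * u s := by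
          gcongr _ * ?_ * _; exact two_zpow_rpow_mul_le hM κ s
      _ = ENNReal.ofReal (5 ^ n) *
            (2⁻¹ ^ s * (2⁻¹ ^ s * (((2 : ℝ≥0∞) ^ (κ + s * M : ℤ)) ^ p * u s))) := by ring
      _ ≤ _ := by gcongr; exact hZ s
  calc _ ≤ ((2 : ℝ≥0∞) ^ κ) ^ p *
          ∑' s : ℕ, volume (apertureSet ψ f (2 ^ s) ((2 : ℝ) ^ (κ + s * M : ℤ))) := by
        gcongr; exact measure_iUnion_le _
    _ ≤ ∑' s : ℕ, ENNReal.ofReal (5 ^ n) * (2⁻¹ ^ s * Z ^ p) := by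
        rw [← ENNReal.tsum_mul_left]; exact ENNReal.tsum_le_tsum h_term
    _ = _ := by
        rw [ENNReal.tsum_mul_left, ENNReal.tsum_mul_right, ENNReal.tsum_geometric,
          ENNReal.one_sub_inv_two, inv_inv, mul_assoc]

theorem exists_ellq_volume_tangentialSet_le [NeZero n] (hp : 0 < p) {q : ℝ≥0∞} (hq : 0 < q)
    (hM : (n : ℝ) + 2 ≤ M * p) (s₀ : ℕ) {C : ℝ≥0∞} (hC : C ≠ ∞) :
    ∃ D : ℝ≥0∞, D ≠ ∞ ∧ ∀ ψ f : Euc n → ℝ,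
      ellq q (fun k =>
        (((2 : ℝ≥0∞) ^ k) ^ p * (C * volume (tangentialSet ψ f M (k - s₀)))) ^ (1 / p)) ≤
          D * lorentzNorm p q (ntMax ψ f) := by
  obtain ⟨D, hD, hDb⟩ := exists_ellq_le_of_le_iSup_shift hq (θ := (2⁻¹ : ℝ≥0∞) ^ (1 / p))
    (ENNReal.rpow_lt_one (by simp) (by positivity))
  set C' : ℝ≥0∞ := C * ((2 : ℝ≥0∞) ^ s₀) ^ p * (ENNReal.ofReal (5 ^ n) * 2)
  have hC' : C' ≠ ∞ := by
    refine ENNReal.mul_ne_top (ENNReal.mul_ne_top hC ?_) (ENNReal.mul_ne_top (by simp) (by simp))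
    exact ENNReal.rpow_ne_top_of_nonneg hp.le (by simp)
  refine ⟨C' ^ (1 / p) * D, ENNReal.mul_ne_top
    (ENNReal.rpow_ne_top_of_nonneg (by positivity) hC') hD, fun ψ f => ?_⟩
  rw [lorentzNorm_ntMax]
  refine hDb (C' ^ (1 / p)) _ _ (fun s => -(s₀ : ℤ) + s * M) fun k => ?_
  have h_split :
      ((2 : ℝ≥0∞) ^ k) ^ p = ((2 : ℝ≥0∞) ^ s₀) ^ p * ((2 : ℝ≥0∞) ^ (k - s₀ : ℤ)) ^ p := by
    rw [← ENNReal.mul_rpow_of_nonneg _ _ hp.le, ← zpow_natCast,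
      ← ENNReal.zpow_add two_ne_zero ENNReal.ofNat_ne_top, add_sub_cancel]
  simp only [← add_assoc, ← sub_eq_add_neg]
  rw [one_div, ENNReal.rpow_inv_le_iff hp, ENNReal.mul_rpow_of_nonneg _ _ hp.le,
    ENNReal.rpow_inv_rpow hp.ne']
  calc ((2 : ℝ≥0∞) ^ k) ^ p * (C * volume (tangentialSet ψ f M (k - s₀)))
      = C * ((2 : ℝ≥0∞) ^ s₀) ^ p *
          (((2 : ℝ≥0∞) ^ (k - s₀ : ℤ)) ^ p * volume (tangentialSet ψ f M (k - s₀))) := by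
        rw [h_split]; ring
    _ ≤ _ := by
        rw [mul_assoc (C * _)]
        refine mul_le_mul_right ?_ _
        simpa only [one_div] using two_zpow_rpow_mul_volume_tangentialSet_le hp hM ψ f (k - s₀)

theorem exists_volume_tangentialSet_le_div [NeZero n] (hp : 0 < p) {q : ℝ≥0∞} (hq : 0 < q)
    (hM : (n : ℝ) + 2 ≤ M * p) {ψ f : Euc n → ℝ} (hl : lorentzNorm p q (ntMax ψ f) < ∞) :
    ∃ W : ℝ≥0∞, W ≠ ∞ ∧ ∀ κ : ℤ, volume (tangentialSet ψ f M κ) ≤ W / ((2 : ℝ≥0∞) ^ κ) ^ p := by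
  obtain ⟨D, hD, h⟩ := exists_ellq_volume_tangentialSet_le hp hq hM 0 one_ne_top
  refine ⟨(D * lorentzNorm p q (ntMax ψ f)) ^ p,
    ENNReal.rpow_ne_top_of_nonneg hp.le (ENNReal.mul_ne_top hD hl.ne), fun κ => ?_⟩
  refine ENNReal.le_div_iff_mul_le (Or.inl ?_) (Or.inl ?_) |>.2 ?_
  · exact (ENNReal.rpow_pos (ENNReal.zpow_pos two_ne_zero ENNReal.ofNat_ne_top κ)
      (ENNReal.zpow_ne_top two_ne_zero ENNReal.ofNat_ne_top κ)).ne'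
  · exact ENNReal.rpow_ne_top_of_nonneg hp.le
      (ENNReal.zpow_ne_top two_ne_zero ENNReal.ofNat_ne_top κ)
  · have := (le_ellq hq _ κ).trans (h ψ f)
    rwa [one_div, ENNReal.rpow_inv_le_iff hp, one_mul, Nat.cast_zero, sub_zero, mul_comm] at this

theorem volume_tangentialSet_ne_top [NeZero n] (hp : 0 < p) {q : ℝ≥0∞} (hq : 0 < q)
    (hM : (n : ℝ) + 2 ≤ M * p) {ψ f : Euc n → ℝ} (hl : lorentzNorm p q (ntMax ψ f) < ∞) (κ : ℤ) :
    volume (tangentialSet ψ f M κ) ≠ ∞ := by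
  obtain ⟨W, hW, h⟩ := exists_volume_tangentialSet_le_div hp hq hM hl
  refine ((h κ).trans_lt (ENNReal.div_lt_top hW ?_)).ne
  exact (ENNReal.rpow_pos (ENNReal.zpow_pos two_ne_zero ENNReal.ofNat_ne_top κ)
    (ENNReal.zpow_ne_top two_ne_zero ENNReal.ofNat_ne_top κ)).ne'

theorem tendsto_volume_tangentialSet [NeZero n] (hp : 0 < p) {q : ℝ≥0∞} (hq : 0 < q)
    (hM : (n : ℝ) + 2 ≤ M * p) {ψ f : Euc n → ℝ} (hl : lorentzNorm p q (ntMax ψ f) < ∞) :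
    Filter.Tendsto (fun m : ℕ => volume (tangentialSet ψ f M m)) Filter.atTop (nhds 0) := by
  obtain ⟨W, hW, h⟩ := exists_volume_tangentialSet_le_div hp hq hM hl
  have h_geom (m : ℕ) : W / ((2 : ℝ≥0∞) ^ (m : ℤ)) ^ p = W * (((2 : ℝ≥0∞) ^ p)⁻¹) ^ m := by
    rw [zpow_natCast, div_eq_mul_inv, ← ENNReal.inv_pow, ← ENNReal.rpow_natCast,
      ← ENNReal.rpow_natCast, ← ENNReal.rpow_mul, ← ENNReal.rpow_mul, mul_comm p]
  have h_ratio : ((2 : ℝ≥0∞) ^ p)⁻¹ < 1 :=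
    ENNReal.inv_lt_one.2 (ENNReal.one_lt_rpow one_lt_two hp)
  have h_lim := ENNReal.Tendsto.const_mul (a := W)
    (ENNReal.tendsto_pow_atTop_nhds_zero_of_lt_one h_ratio) (Or.inr hW)
  rw [mul_zero] at h_lim
  exact tendsto_of_tendsto_of_tendsto_of_le_of_le tendsto_const_nhds h_lim (fun _ => zero_le)
    fun m => (h m).trans (h_geom m).le

end LorentzBounds

end TangentialSet

/-! ### Smoothness measured by iterated differences -/

section DiffBound

variable {E F X : Type*} [NormedAddCommGroup E] [NormedAddCommGroup F] {m : ℕ} {K K' : ℝ}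

/-- `DiffBound m K g` says that the `m`-th iterated differences of `g` with steps `w₁, …, wₘ` are at
most `K ‖w₁‖ ⋯ ‖wₘ‖`. It stands in for a bound on the `m`-th derivative because it passes through
averages over translates with no differentiation under the integral. -/
def DiffBound : ℕ → ℝ → (E → F) → Prop
  | 0, K, g => ∀ x, ‖g x‖ ≤ K
  | m + 1, K, g => ∀ w, DiffBound m (K * ‖w‖) fun x => g x - g (x + w)

theorem DiffBound.mono {g : E → F} (h : DiffBound m K g) (hK : K ≤ K') : DiffBound m K' g := by
  induction m generalizing K K' g with
  | zero => exact fun x => (h x).trans hK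
  | succ m ih => exact fun w => ih (h w) (by gcongr)

theorem DiffBound.sub {g h : E → F} (hg : DiffBound m K g) (hh : DiffBound m K' h) :
    DiffBound m (K + K') fun x => g x - h x := by
  induction m generalizing K K' g h with
  | zero => exact fun x => (norm_sub_le _ _).trans (add_le_add (hg x) (hh x))
  | succ m ih =>
    intro w
    simpa only [add_mul, sub_sub_sub_comm] using ih (hg w) (hh w)

theorem DiffBound.comp_add_right {g : E → F} (h : DiffBound m K g) (v : E) :
    DiffBound m K fun x => g (x + v) := by
  induction m generalizing K g with
  | zero => exact fun x => h _
  | succ m ih =>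
    intro w
    simpa only [add_right_comm] using ih (h w)

theorem DiffBound.integral_smul [NormedSpace ℝ F] [MeasurableSpace X] {μ : Measure X} {ρ k : X → ℝ}
    {G : X → E → F} (h : ∀ w, DiffBound m (k w) (G w)) (hk : Integrable (fun w => |ρ w| * k w) μ)
    (hG : ∀ x, Integrable (fun w => ρ w • G w x) μ) :
    DiffBound m (∫ w, |ρ w| * k w ∂μ) fun x => ∫ w, ρ w • G w x ∂μ := by
  induction m generalizing k G with
  | zero =>
    refine fun x => norm_integral_le_of_norm_le hk (Filter.Eventually.of_forall fun w => ?_)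
    rw [norm_smul, Real.norm_eq_abs]
    gcongr
    exact h w x
  | succ m ih =>
    intro v
    have h_diff := ih (fun w => h w v) (by simpa only [mul_assoc] using hk.mul_const ‖v‖)
      fun x => by simpa only [smul_sub] using (hG x).sub' (hG (x + v))
    simp only [smul_sub, integral_sub (hG _) (hG _)] at h_diff
    simpa only [← mul_assoc, integral_mul_const] using h_diff

theorem DiffBound.of_contDiff [NormedSpace ℝ E] [NormedSpace ℝ F] {g : E → F} (hg : ContDiff ℝ m g)
    (h : ∀ x, ‖iteratedFDeriv ℝ m g x‖ ≤ K) : DiffBound m K g := by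
  induction m generalizing K g with
  | zero => exact fun x => by simpa using h x
  | succ m ih =>
    intro w
    have hgm : ContDiff ℝ m g := hg.of_le (by exact_mod_cast m.le_succ)
    have hgw : ContDiff ℝ m fun x => g (x + w) := hgm.comp (contDiff_id.add contDiff_const)
    refine ih (hgm.sub hgw) fun x => ?_
    have h_eq : iteratedFDeriv ℝ m (fun x => g x - g (x + w)) x =
        iteratedFDeriv ℝ m g x - iteratedFDeriv ℝ m g (x + w) := by
      rw [← iteratedFDeriv_comp_add_right]
      exact iteratedFDeriv_sub_apply hgm.contDiffAt hgw.contDiffAt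
    have h_mvt := convex_univ.norm_image_sub_le_of_norm_fderiv_le (𝕜 := ℝ)
      (fun z _ => (hg.differentiable_iteratedFDeriv (by exact_mod_cast m.lt_succ_self)) z)
      (fun z _ => by rw [norm_fderiv_iteratedFDeriv]; exact h z) (mem_univ (x + w)) (mem_univ x)
    rw [h_eq]
    simpa using h_mvt

end DiffBound

/-! ### Averaging operators -/

section Averaging

variable {n : ℕ} {ψ f g : Euc n → ℝ} {R a t : ℝ} {x₀ : Euc n}

/-- Continuous functions vanishing outside the closed ball of centre `x₀` and radius `a`. -/
structure IsTestFun (x₀ : Euc n) (a : ℝ) (g : Euc n → ℝ) : Prop where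
  continuous : Continuous g
  eq_zero : ∀ x, a < dist x x₀ → g x = 0

theorem exists_isTestFun_of_hasCompactSupport (hg : Continuous g) (hc : HasCompactSupport g) :
    ∃ R, 0 ≤ R ∧ IsTestFun 0 R g := by
  obtain ⟨R, hR, hgR⟩ := hc.isCompact.isBounded.subset_closedBall_lt 0 0
  refine ⟨R, hR.le, hg, fun x hx => of_not_not fun h => ?_⟩
  exact hx.not_ge (hgR (subset_tsupport g h))

namespace IsTestFun

theorem mono {b : ℝ} (hg : IsTestFun x₀ a g) (h : a ≤ b) : IsTestFun x₀ b g :=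
  ⟨hg.continuous, fun x hx => hg.eq_zero x (h.trans_lt hx)⟩

theorem eq_zero_of_notMem_closedBall (hg : IsTestFun x₀ a g) {x : Euc n}
    (hx : x ∉ Metric.closedBall x₀ a) : g x = 0 :=
  hg.eq_zero x (by simpa using hx)

theorem hasCompactSupport (hg : IsTestFun x₀ a g) : HasCompactSupport g :=
  HasCompactSupport.intro (isCompact_closedBall x₀ a) fun _ => hg.eq_zero_of_notMem_closedBall

theorem exists_abs_le (hg : IsTestFun x₀ a g) : ∃ C, ∀ x, |g x| ≤ C :=
  hg.hasCompactSupport.exists_bound_of_continuous hg.continuous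

theorem integrable (hg : IsTestFun x₀ a g) : Integrable g :=
  hg.continuous.integrable_of_hasCompactSupport hg.hasCompactSupport

theorem integrable_mul (hg : IsTestFun x₀ a g) (hf : LocallyIntegrable f) :
    Integrable fun z => f z * g z :=
  hf.integrable_smul_right_of_hasCompactSupport hg.continuous hg.hasCompactSupport

end IsTestFun

/-- The `L¹`-normalised dilate `ψ_t`. -/
def dilate (ψ : Euc n → ℝ) (t : ℝ) (w : Euc n) : ℝ := (t ^ n)⁻¹ * ψ (t⁻¹ • w)

/-- The average of `g` against the dilate `ψ_t`; as an operator it is dual to `f ↦ f * ψ_t`. -/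
def dilateAvg (ψ : Euc n → ℝ) (t : ℝ) (g : Euc n → ℝ) (z : Euc n) : ℝ :=
  ∫ w, dilate ψ t w * g (z + w)

/-- The remainder `g - dilateAvg ψ t g` when `∫ ψ = 1`, written so that it is visibly an average of
differences of `g`. -/
def dilateAvgRem (ψ : Euc n → ℝ) (t : ℝ) (g : Euc n → ℝ) (z : Euc n) : ℝ :=
  ∫ w, dilate ψ t w * (g z - g (z + w))

theorem integral_dilate (ψ : Euc n → ℝ) (ht : 0 < t) : ∫ w, dilate ψ t w = ∫ u, ψ u := by
  simp only [dilate]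
  rw [integral_const_mul, Measure.integral_comp_inv_smul_of_nonneg volume ψ ht.le,
    finrank_euclideanSpace_fin, smul_eq_mul, inv_mul_cancel_left₀ (by positivity)]

theorem integrable_dilate (hψ : Integrable ψ) (ht : 0 < t) : Integrable (dilate ψ t) :=
  (hψ.comp_smul (inv_ne_zero ht.ne')).const_mul _

theorem abs_dilate (ψ : Euc n → ℝ) (ht : 0 < t) (w : Euc n) :
    |dilate ψ t w| = dilate (fun u => |ψ u|) t w := by
  rw [dilate, dilate, abs_mul, abs_of_pos (a := (t ^ n)⁻¹) (by positivity)]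

theorem dilate_mul_norm (ψ : Euc n → ℝ) (ht : 0 < t) (w : Euc n) :
    dilate ψ t w * ‖w‖ = t * dilate (fun u => ψ u * ‖u‖) t w := by
  rw [dilate, dilate, norm_smul, norm_inv, Real.norm_of_nonneg ht.le]
  field_simp

theorem isTestFun_dilate (hψ : IsTestFun 0 R ψ) (ht : 0 < t) :
    IsTestFun 0 (t * R) (dilate ψ t) where
  continuous := by
    have := hψ.continuous
    unfold dilate
    fun_prop
  eq_zero w hw := by
    rw [dilate, hψ.eq_zero, mul_zero]
    rwa [dist_zero_right, norm_smul, norm_inv, Real.norm_of_nonneg ht.le, inv_mul_eq_div,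
      lt_div_iff₀' ht, ← dist_zero_right]

theorem integrable_dilate_mul (hψ : Integrable ψ) (ht : 0 < t) (hg : Continuous g) {C : ℝ}
    (hC : ∀ x, |g x| ≤ C) : Integrable fun w => dilate ψ t w * g w :=
  (integrable_dilate hψ ht).mul_bdd hg.aestronglyMeasurable (Filter.Eventually.of_forall hC)

theorem integrable_dilate_mul_sub (hψ : Integrable ψ) (ht : 0 < t) (hg : IsTestFun x₀ a g)
    (z : Euc n) : Integrable fun w => dilate ψ t w * (g z - g (z + w)) := by
  obtain ⟨C, hC⟩ := hg.exists_abs_le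
  have := hg.continuous
  exact integrable_dilate_mul hψ ht (g := fun w => g z - g (z + w)) (by fun_prop)
    fun w => (abs_sub _ _).trans (add_le_add (hC _) (hC _))

theorem dilateAvgRem_eq (hψ : Integrable ψ) (h_one : ∫ u, ψ u = 1) (ht : 0 < t)
    (hg : IsTestFun x₀ a g) (z : Euc n) : dilateAvgRem ψ t g z = g z - dilateAvg ψ t g z := by
  obtain ⟨C, hC⟩ := hg.exists_abs_le
  have := hg.continuous
  have h_int : Integrable fun w => dilate ψ t w * g (z + w) :=
    integrable_dilate_mul hψ ht (by fun_prop) fun w => hC (z + w)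
  simp only [dilateAvgRem, dilateAvg, mul_sub]
  rw [integral_sub ((integrable_dilate hψ ht).mul_const _) h_int, integral_mul_const,
    integral_dilate ψ ht, h_one, one_mul]

theorem continuous_dilateAvg (hg : IsTestFun x₀ a g) (hψ : IsTestFun 0 R ψ) (ht : 0 < t) :
    Continuous (dilateAvg ψ t g) := by
  obtain ⟨C, hC⟩ := hg.exists_abs_le
  have hg_cont := hg.continuous
  refine continuous_of_dominated (bound := fun w => |dilate ψ t w| * C) (fun z => ?_)
    (fun z => Filter.Eventually.of_forall fun w => ?_)
    ((integrable_dilate hψ.integrable ht).abs.mul_const _)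
    (Filter.Eventually.of_forall fun w => by fun_prop)
  · exact ((isTestFun_dilate hψ ht).continuous.mul (by fun_prop)).aestronglyMeasurable
  · rw [norm_mul]
    exact mul_le_mul_of_nonneg_left (hC _) (norm_nonneg _)

theorem isTestFun_dilateAvgRem (hg : IsTestFun x₀ a g) (hψ : IsTestFun 0 R ψ) (h_one : ∫ u, ψ u = 1)
    (hR : 0 ≤ R) (ht : 0 < t) : IsTestFun x₀ (a + t * R) (dilateAvgRem ψ t g) where
  continuous := by
    rw [funext (dilateAvgRem_eq hψ.integrable h_one ht hg)]
    exact hg.continuous.sub (continuous_dilateAvg hg hψ ht)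
  eq_zero x hx := by
    refine integral_eq_zero_of_ae (Filter.Eventually.of_forall fun w => ?_)
    have htR := mul_nonneg ht.le hR
    rcases lt_or_ge (t * R) ‖w‖ with hw | hw
    · simp [(isTestFun_dilate hψ ht).eq_zero w (by simpa using hw)]
    · have h_tri := dist_triangle x (x + w) x₀
      rw [dist_self_add_right] at h_tri
      simp [hg.eq_zero x (by linarith), hg.eq_zero (x + w) (by linarith)]

theorem diffBound_dilateAvgRem {m : ℕ} {K : ℝ} (h : DiffBound m K g) (hg : IsTestFun x₀ a g)
    (hψ : Integrable ψ) (ht : 0 < t) :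
    DiffBound m ((2 * ∫ u, |ψ u|) * K) (dilateAvgRem ψ t g) := by
  have h_avg := DiffBound.integral_smul (μ := volume) (fun w => h.sub (h.comp_add_right w))
    ((integrable_dilate hψ ht).abs.mul_const (K + K)) (integrable_dilate_mul_sub hψ ht hg)
  simp only [abs_dilate ψ ht, integral_mul_const, integral_dilate _ ht] at h_avg
  exact h_avg.mono (by linarith)

theorem diffBound_dilateAvgRem_of_succ {m : ℕ} {K : ℝ} (h : DiffBound (m + 1) K g)
    (hg : IsTestFun x₀ a g) (hψ : IsTestFun 0 R ψ) (ht : 0 < t) :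
    DiffBound m (((∫ u, |ψ u| * ‖u‖) * t) * K) (dilateAvgRem ψ t g) := by
  have h_int : Integrable fun u => |ψ u| * ‖u‖ :=
    (hψ.continuous.abs.mul continuous_norm).integrable_of_hasCompactSupport
      hψ.hasCompactSupport.norm.mul_right
  have h_eq (w : Euc n) : |dilate ψ t w| * (K * ‖w‖) =
      K * t * dilate (fun u => |ψ u| * ‖u‖) t w := by
    rw [abs_dilate ψ ht, mul_left_comm, dilate_mul_norm _ ht]
    ring
  have h_avg := DiffBound.integral_smul (μ := volume) h
    (by simpa only [h_eq] using (integrable_dilate h_int ht).const_mul _)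
    (integrable_dilate_mul_sub hψ.integrable ht hg)
  simp only [h_eq, integral_const_mul, integral_dilate _ ht] at h_avg
  exact h_avg.mono (by linarith)

theorem integrable_mul_dilate_sub_mul (hψ : IsTestFun 0 R ψ) (ht : 0 < t)
    (hf : LocallyIntegrable f) (hg : IsTestFun x₀ a g) :
    Integrable (fun z : Euc n × Euc n => f z.1 * (dilate ψ t (z.2 - z.1) * g z.2))
      (volume.prod volume) := by
  obtain ⟨P, hP⟩ := (isTestFun_dilate hψ ht).exists_abs_le
  set B := Metric.closedBall x₀ (a + t * R)
  have hfB : Integrable (B.indicator f) :=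
    (hf.integrableOn_isCompact (isCompact_closedBall _ _)).integrable_indicator
      measurableSet_closedBall
  have h_prod := (hfB.mul_prod hg.integrable).mul_bdd (c := P)
    (g := fun z : Euc n × Euc n => dilate ψ t (z.2 - z.1))
    ((isTestFun_dilate hψ ht).continuous.comp
      (continuous_snd.sub continuous_fst)).aestronglyMeasurable
    (Filter.Eventually.of_forall fun z => hP _)
  refine h_prod.congr (Filter.Eventually.of_forall fun z => ?_)
  by_cases hz : z.1 ∈ B
  · simp only [indicator_of_mem hz]
    ring
  rcases lt_or_ge (t * R) ‖z.2 - z.1‖ with hw | hw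
  · simp [(isTestFun_dilate hψ ht).eq_zero _ (by simpa using hw)]
  · have h_tri := dist_triangle z.1 z.2 x₀
    rw [dist_comm z.1 z.2, dist_eq_norm z.2 z.1] at h_tri
    have hz' : a + t * R < dist z.1 x₀ := by simpa [B] using hz
    simp [hg.eq_zero z.2 (by linarith)]

theorem integral_mul_dilateAvg (hψ : IsTestFun 0 R ψ) (ht : 0 < t) (hf : LocallyIntegrable f)
    (hg : IsTestFun x₀ a g) : ∫ z, f z * dilateAvg ψ t g z = ∫ y, g y * convAt ψ f t y := by
  calc ∫ z, f z * dilateAvg ψ t g z = ∫ z, ∫ y, f z * (dilate ψ t (y - z) * g y) := by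
        refine integral_congr_ae (Filter.Eventually.of_forall fun z => ?_)
        simp only [integral_const_mul, dilateAvg]
        rw [← integral_sub_right_eq_self _ z]
        simp only [add_sub_cancel]
    _ = ∫ y, ∫ z, f z * (dilate ψ t (y - z) * g y) :=
        integral_integral_swap (integrable_mul_dilate_sub_mul hψ ht hf hg)
    _ = ∫ y, g y * convAt ψ f t y := by
        refine integral_congr_ae (Filter.Eventually.of_forall fun y => ?_)
        simp only [convAt, ← integral_const_mul, dilate]
        congr! 2
        ring

end Averaging

/-! ### Pairings of `f` with bumps -/

section IterRem

variable {n : ℕ} {ψ f φ : Euc n → ℝ} {R a r K : ℝ} {x₀ : Euc n} {m : ℕ}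

/-- The remainder of `φ` after `s` averaging steps at the scales `r, r/2, r/4, …`. -/
def iterRem (ψ : Euc n → ℝ) (r : ℝ) (φ : Euc n → ℝ) : ℕ → Euc n → ℝ
  | 0 => φ
  | s + 1 => dilateAvgRem ψ (r / 2 ^ s) (iterRem ψ r φ s)

theorem isTestFun_iterRem (hψ : IsTestFun 0 R ψ) (h_one : ∫ u, ψ u = 1) (hR : 0 ≤ R) (hr : 0 < r)
    (hφ : IsTestFun x₀ (a * r) φ) (s : ℕ) : IsTestFun x₀ ((a + 2 * R) * r) (iterRem ψ r φ s) := by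
  suffices h : IsTestFun x₀ (a * r + r * R * (2 - 2 / 2 ^ s)) (iterRem ψ r φ s) by
    have : 0 ≤ r * R * (2 / 2 ^ s) := by positivity
    exact h.mono (by linarith)
  induction s with
  | zero => simpa [iterRem] using hφ
  | succ s ih =>
    have h_rad : a * r + r * R * (2 - 2 / 2 ^ s) + r / 2 ^ s * R =
        a * r + r * R * (2 - 2 / 2 ^ (s + 1)) := by
      field_simp
      ring
    exact h_rad ▸ isTestFun_dilateAvgRem ih hψ h_one hR (by positivity)

theorem diffBound_iterRem (hψ : IsTestFun 0 R ψ) (h_one : ∫ u, ψ u = 1) (hR : 0 ≤ R) (hr : 0 < r)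
    (hφ : IsTestFun x₀ (a * r) φ) (h : DiffBound m K φ) (s : ℕ) :
    DiffBound m ((2 * ∫ u, |ψ u|) ^ s * K) (iterRem ψ r φ s) := by
  induction s with
  | zero => simpa [iterRem] using h
  | succ s ih =>
    rw [pow_succ', mul_assoc]
    exact diffBound_dilateAvgRem ih (isTestFun_iterRem hψ h_one hR hr hφ s) hψ.integrable
      (by positivity)

theorem diffBound_iterRem_add (hψ : IsTestFun 0 R ψ) (h_one : ∫ u, ψ u = 1) (hR : 0 ≤ R)
    (hr : 0 < r) (hφ : IsTestFun x₀ (a * r) φ) (hK : 0 ≤ K) {s i : ℕ}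
    (h : DiffBound (m + i) K (iterRem ψ r φ s)) :
    DiffBound m (((∫ u, |ψ u| * ‖u‖) * (r / 2 ^ s)) ^ i * K) (iterRem ψ r φ (s + i)) := by
  have : 0 ≤ ∫ u, |ψ u| * ‖u‖ := integral_nonneg fun _ => by positivity
  induction i generalizing m with
  | zero => simpa using h
  | succ i ih =>
    have h_step := diffBound_dilateAvgRem_of_succ (t := r / 2 ^ (s + i))
      (ih (m := m + 1) (by rwa [add_assoc, add_comm 1 i]))
      (isTestFun_iterRem hψ h_one hR hr hφ (s + i)) hψ (by positivity)
    refine h_step.mono ?_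
    rw [pow_succ', mul_assoc _ _ K]
    gcongr
    exacts [one_le_two, s.le_add_right i]

-- Each step costs a factor `b`, but the last `L` steps can instead gain a factor `2⁻ˢ` each.
theorem exists_abs_iterRem_le (hψ : IsTestFun 0 R ψ) (h_one : ∫ u, ψ u = 1) (hR : 0 ≤ R) (L : ℕ) :
    ∃ D, 0 ≤ D ∧ ∀ {x₀ : Euc n} {a r K : ℝ} {φ : Euc n → ℝ}, 0 < r → 0 ≤ K →
      IsTestFun x₀ (a * r) φ → DiffBound 0 K φ → DiffBound L (K * r⁻¹ ^ L) φ →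
      ∀ s x, |iterRem ψ r φ s x| ≤ K * D * ((2 * ∫ u, |ψ u|) / 2 ^ L) ^ s := by
  set b := 2 * ∫ u, |ψ u|
  set A := ∫ u, |ψ u| * ‖u‖
  have : 0 ≤ A := integral_nonneg fun _ => by positivity
  have hb1 : 1 ≤ b := by
    have := (le_abs_self (∫ u, ψ u)).trans abs_integral_le_integral_abs
    linarith
  refine ⟨(2 ^ L) ^ L * (1 + A) ^ L, by positivity,
    fun {x₀ a r K φ} hr hK hφ hφ₀ hφL s x => ?_⟩
  rcases le_or_gt s L with hs | hs
  · calc |iterRem ψ r φ s x| ≤ b ^ s * K := diffBound_iterRem hψ h_one hR hr hφ hφ₀ s x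
      _ = K * (((2 ^ L) ^ s * 1) * (b / 2 ^ L) ^ s) := by
        rw [div_pow]
        field_simp
      _ ≤ K * (((2 ^ L) ^ L * (1 + A) ^ L) * (b / 2 ^ L) ^ s) := by
        gcongr
        exacts [one_le_pow₀ one_le_two, one_le_pow₀ (by linarith : 1 ≤ 1 + A)]
      _ = _ := by ring
  · obtain ⟨s, rfl⟩ := Nat.exists_eq_add_of_le' hs.le
    have h_gain := diffBound_iterRem_add (m := 0) (i := L) hψ h_one hR hr hφ
      (K := b ^ s * (K * r⁻¹ ^ L)) (by positivity)
      (by rw [zero_add]; exact diffBound_iterRem hψ h_one hR hr hφ hφL s)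
    calc |iterRem ψ r φ (s + L) x| ≤ (A * (r / 2 ^ s)) ^ L * (b ^ s * (K * r⁻¹ ^ L)) := h_gain x
      _ = K * (1 * A ^ L * (b / 2 ^ L) ^ s) := by
        rw [mul_pow, div_pow, div_pow, inv_pow, pow_right_comm (2 : ℝ) s L]
        field_simp
      _ ≤ K * (b ^ L * (1 + A) ^ L * (b / 2 ^ L) ^ s) := by
        gcongr
        exacts [one_le_pow₀ hb1, by linarith]
      _ = _ := by
        rw [pow_add, div_pow b _ L]
        field_simp

theorem integral_mul_eq_sum_add_iterRem (hψ : IsTestFun 0 R ψ) (h_one : ∫ u, ψ u = 1) (hR : 0 ≤ R)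
    (hr : 0 < r) (hφ : IsTestFun x₀ (a * r) φ) (hf : LocallyIntegrable f) (S : ℕ) :
    ∫ z, f z * φ z = (∑ s ∈ Finset.range S, ∫ y, iterRem ψ r φ s y * convAt ψ f (r / 2 ^ s) y) +
      ∫ z, f z * iterRem ψ r φ S z := by
  induction S with
  | zero => simp [iterRem]
  | succ S ih =>
    have ht : 0 < r / 2 ^ S := by positivity
    have h_test := isTestFun_iterRem hψ h_one hR hr hφ
    have h_avg (z : Euc n) : iterRem ψ r φ S z - iterRem ψ r φ (S + 1) z =
        dilateAvg ψ (r / 2 ^ S) (iterRem ψ r φ S) z := by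
      rw [iterRem, dilateAvgRem_eq hψ.integrable h_one ht (h_test S)]
      ring
    rw [ih, Finset.sum_range_succ, add_assoc, ← integral_mul_dilateAvg hψ ht hf (h_test S)]
    simp only [← h_avg, mul_sub]
    rw [integral_sub ((h_test S).integrable_mul hf) ((h_test (S + 1)).integrable_mul hf),
      sub_add_cancel]

theorem tendsto_integral_mul_iterRem (hψ : IsTestFun 0 R ψ) (h_one : ∫ u, ψ u = 1) (hR : 0 ≤ R)
    (hr : 0 < r) (hφ : IsTestFun x₀ (a * r) φ) (hf : LocallyIntegrable f) {D β : ℝ} (hβ : 0 ≤ β)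
    (hβ1 : β < 1) (h_sup : ∀ s x, |iterRem ψ r φ s x| ≤ D * β ^ s) :
    Filter.Tendsto (fun S => ∫ z, f z * iterRem ψ r φ S z) Filter.atTop (nhds 0) := by
  set B := Metric.closedBall x₀ ((a + 2 * R) * r)
  have h_int : IntegrableOn f B := hf.integrableOn_isCompact (isCompact_closedBall _ _)
  have h_bound (S : ℕ) : ‖∫ z, f z * iterRem ψ r φ S z‖ ≤ (∫ z in B, |f z|) * D * β ^ S := by
    have h_supp (z : Euc n) (hz : z ∉ B) : f z * iterRem ψ r φ S z = 0 := by
      rw [(isTestFun_iterRem hψ h_one hR hr hφ S).eq_zero_of_notMem_closedBall hz, mul_zero]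
    rw [← setIntegral_eq_integral_of_forall_compl_eq_zero h_supp, mul_assoc, ← integral_mul_const]
    refine norm_integral_le_of_norm_le (h_int.abs.mul_const _)
      (Filter.Eventually.of_forall fun z => ?_)
    rw [norm_mul, Real.norm_eq_abs]
    exact mul_le_mul_of_nonneg_left (h_sup S z) (abs_nonneg _)
  refine squeeze_zero_norm h_bound ?_
  simpa using (tendsto_pow_atTop_nhds_zero_of_lt_one hβ hβ1).const_mul ((∫ z in B, |f z|) * D)

theorem abs_integral_iterRem_mul_convAt_le (hψ : IsTestFun 0 R ψ) (h_one : ∫ u, ψ u = 1)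
    (hR : 0 ≤ R) (hr : 0 < r) (hφ : IsTestFun x₀ (a * r) φ) {c M : ℕ}
    (hc : a + 2 * R < 2 ^ c) {D β V : ℝ}
    (h_sup : ∀ s x, |iterRem ψ r φ s x| ≤ D * β ^ s)
    (hf : ∀ (s : ℕ) (y : Euc n) (t : ℝ), 0 < t → dist x₀ y < 2 ^ s * t →
      |convAt ψ f t y| ≤ V * (2 ^ M) ^ s) (s : ℕ) :
    |∫ y, iterRem ψ r φ s y * convAt ψ f (r / 2 ^ s) y| ≤
      D * V * (2 ^ M) ^ c * volume.real (Metric.closedBall x₀ ((a + 2 * R) * r)) *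
        (β * 2 ^ M) ^ s := by
  have h_supp (y : Euc n) (hy : y ∉ Metric.closedBall x₀ ((a + 2 * R) * r)) :
      iterRem ψ r φ s y * convAt ψ f (r / 2 ^ s) y = 0 := by
    rw [(isTestFun_iterRem hψ h_one hR hr hφ s).eq_zero_of_notMem_closedBall hy, zero_mul]
  have h_le : ∀ y ∈ Metric.closedBall x₀ ((a + 2 * R) * r),
      ‖iterRem ψ r φ s y * convAt ψ f (r / 2 ^ s) y‖ ≤ D * β ^ s * (V * (2 ^ M) ^ (c + s)) := by
    intro y hy
    have h_dist : dist x₀ y < 2 ^ (c + s) * (r / 2 ^ s) := by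
      calc dist x₀ y ≤ (a + 2 * R) * r := Metric.mem_closedBall'.1 hy
        _ < 2 ^ c * r := by gcongr
        _ = _ := by rw [pow_add]; field_simp
    rw [norm_mul]
    exact mul_le_mul (h_sup s y) (hf (c + s) y _ (by positivity) h_dist) (norm_nonneg _)
      ((abs_nonneg _).trans (h_sup s y))
  rw [← setIntegral_eq_integral_of_forall_compl_eq_zero h_supp]
  refine (norm_setIntegral_le_of_norm_le_const measure_closedBall_lt_top h_le).trans_eq ?_
  rw [mul_pow, pow_add]
  ring

-- `φ` telescopes into averages at the scales `r/2ˢ`. Moving an average onto `f` yields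
-- `f * ψ_t`, which the tangential bound controls; its growth `2^{Ms}` is beaten by the decay `βˢ`.
theorem abs_integral_mul_le_of_abs_iterRem_le (hψ : IsTestFun 0 R ψ) (h_one : ∫ u, ψ u = 1)
    (hR : 0 ≤ R) (hr : 0 < r) (hφ : IsTestFun x₀ (a * r) φ) (hf : LocallyIntegrable f) {c M : ℕ}
    (hc : a + 2 * R < 2 ^ c) {D β V : ℝ} (hD : 0 ≤ D) (hV : 0 ≤ V) (hβ : 0 ≤ β)
    (hβM : β * 2 ^ M ≤ 1 / 2) (h_sup : ∀ s x, |iterRem ψ r φ s x| ≤ D * β ^ s)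
    (h_conv : ∀ (s : ℕ) (y : Euc n) (t : ℝ), 0 < t → dist x₀ y < 2 ^ s * t →
      |convAt ψ f t y| ≤ V * (2 ^ M) ^ s) :
    |∫ z, f z * φ z| ≤
      D * V * (2 ^ M) ^ c * volume.real (Metric.closedBall x₀ ((a + 2 * R) * r)) * 2 := by
  set Q := D * V * (2 ^ M) ^ c * volume.real (Metric.closedBall x₀ ((a + 2 * R) * r))
  have hβ_half : β ≤ 1 / 2 := (le_mul_of_one_le_right hβ (one_le_pow₀ one_le_two)).trans hβM
  have h_term (s : ℕ) : |∫ y, iterRem ψ r φ s y * convAt ψ f (r / 2 ^ s) y| ≤ Q * (1 / 2) ^ s := by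
    refine (abs_integral_iterRem_mul_convAt_le hψ h_one hR hr hφ hc h_sup h_conv s).trans ?_
    gcongr
  have h_sum (S : ℕ) : |∫ z, f z * φ z| ≤ Q * 2 + |∫ z, f z * iterRem ψ r φ S z| := by
    rw [integral_mul_eq_sum_add_iterRem hψ h_one hR hr hφ hf S]
    refine (abs_add_le _ _).trans (add_le_add_left ?_ _)
    calc _ ≤ ∑ s ∈ Finset.range S, Q * (1 / 2) ^ s :=
          (Finset.abs_sum_le_sum_abs _ _).trans (Finset.sum_le_sum fun s _ => h_term s)
      _ ≤ Q * 2 := by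
        rw [← Finset.mul_sum]
        gcongr
        exact sum_geometric_two_le S
  have h_lim := (tendsto_integral_mul_iterRem hψ h_one hR hr hφ hf hβ
    (hβ_half.trans_lt one_half_lt_one) h_sup).abs.const_add (Q * 2)
  rw [abs_zero, add_zero] at h_lim
  exact ge_of_tendsto' h_lim h_sum

theorem exists_abs_integral_mul_le (hψ : Continuous ψ) (hψc : HasCompactSupport ψ)
    (h_one : ∫ u, ψ u = 1) (M : ℕ) :
    ∃ L : ℕ, ∀ a : ℝ, 0 ≤ a → ∃ C : ℝ, 0 ≤ C ∧ ∀ f : Euc n → ℝ, LocallyIntegrable f →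
      ∀ (x₀ : Euc n) (r V K : ℝ), 0 < r → 0 ≤ V → 0 ≤ K →
      (∀ (s : ℕ) (y : Euc n) (t : ℝ), 0 < t → dist x₀ y < 2 ^ s * t →
        |convAt ψ f t y| ≤ V * (2 ^ M) ^ s) →
      ∀ φ : Euc n → ℝ, IsTestFun x₀ (a * r) φ → DiffBound 0 K φ →
        DiffBound L (K * r⁻¹ ^ L) φ → |∫ z, f z * φ z| ≤ C * K * V * r ^ n := by
  obtain ⟨R, hR, hψR⟩ := exists_isTestFun_of_hasCompactSupport hψ hψc
  set b := 2 * ∫ u, |ψ u|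
  have : 0 ≤ b := mul_nonneg zero_le_two (integral_nonneg fun _ => abs_nonneg _)
  obtain ⟨L, hL⟩ := pow_unbounded_of_one_lt (2 * b * 2 ^ M) one_lt_two
  obtain ⟨D, hD, h_sup⟩ := exists_abs_iterRem_le hψR h_one hR L
  have h_decay : b / 2 ^ L * 2 ^ M ≤ 1 / 2 := by
    rw [div_mul_eq_mul_div, div_le_iff₀ (by positivity)]
    linarith
  refine ⟨L, fun a ha => ?_⟩
  obtain ⟨c, hc⟩ := pow_unbounded_of_one_lt (a + 2 * R) one_lt_two
  refine ⟨D * (2 ^ M) ^ c * ((a + 2 * R) ^ n * volume.real (Metric.ball (0 : Euc n) 1)) * 2,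
    by positivity, fun f hf x₀ r V K hr hV hK h_conv φ hφ hφ₀ hφL => ?_⟩
  refine (abs_integral_mul_le_of_abs_iterRem_le hψR h_one hR hr hφ hf hc (by positivity) hV
    (by positivity) h_decay (h_sup hr hK hφ hφ₀ hφL) h_conv).trans_eq ?_
  rw [Measure.addHaar_real_closedBall _ _ (by positivity), finrank_euclideanSpace_fin, mul_pow]
  ring

end IterRem

section SmoothAtScale

variable {E : Type*} [NormedAddCommGroup E] [NormedSpace ℝ E] {L : ℕ} {K K' r : ℝ} {φ χ : E → ℝ}

/-- Smooth functions whose derivatives of order `j ≤ L` are bounded by `K r⁻ʲ`, as for a bump living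
at the scale `r`. -/
structure SmoothAtScale (L : ℕ) (K r : ℝ) (φ : E → ℝ) : Prop where
  contDiff : ContDiff ℝ (⊤ : ℕ∞) φ
  norm_iteratedFDeriv_le : ∀ j ≤ L, ∀ x, ‖iteratedFDeriv ℝ j φ x‖ ≤ K * r⁻¹ ^ j

namespace SmoothAtScale

theorem abs_le (h : SmoothAtScale L K r φ) (x : E) : |φ x| ≤ K := by
  simpa using h.norm_iteratedFDeriv_le 0 L.zero_le x

theorem nonneg (h : SmoothAtScale L K r φ) : 0 ≤ K :=
  (abs_nonneg _).trans (h.abs_le 0)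

theorem diffBound (h : SmoothAtScale L K r φ) : DiffBound L (K * r⁻¹ ^ L) φ :=
  .of_contDiff (h.contDiff.of_le (by exact_mod_cast le_top)) (h.norm_iteratedFDeriv_le L le_rfl)

theorem mono (hr : 0 < r) (h : SmoothAtScale L K r φ) (hK : K ≤ K') : SmoothAtScale L K' r φ :=
  ⟨h.contDiff, fun j hj x => (h.norm_iteratedFDeriv_le j hj x).trans (by gcongr)⟩

theorem mul (hr : 0 < r) (hφ : SmoothAtScale L K r φ) (hχ : SmoothAtScale L K' r χ) :
    SmoothAtScale L (2 ^ L * K * K') r fun x => φ x * χ x := by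
  have hK := hφ.nonneg
  have hK' := hχ.nonneg
  refine ⟨hφ.contDiff.mul hχ.contDiff, fun j hj x => ?_⟩
  calc ‖iteratedFDeriv ℝ j (fun x => φ x * χ x) x‖
      ≤ ∑ i ∈ Finset.range (j + 1), (j.choose i : ℝ) * ‖iteratedFDeriv ℝ i φ x‖ *
          ‖iteratedFDeriv ℝ (j - i) χ x‖ :=
        norm_iteratedFDeriv_mul_le hφ.contDiff hχ.contDiff x (by exact_mod_cast le_top)
    _ ≤ ∑ i ∈ Finset.range (j + 1), (j.choose i : ℝ) * (K * r⁻¹ ^ i) * (K' * r⁻¹ ^ (j - i)) := by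
        gcongr with i hi
        · exact hφ.norm_iteratedFDeriv_le i (by grind) x
        · exact hχ.norm_iteratedFDeriv_le (j - i) (by omega) x
    _ = ∑ i ∈ Finset.range (j + 1), (j.choose i : ℝ) * (K * K' * r⁻¹ ^ j) := by
        refine Finset.sum_congr rfl fun i hi => ?_
        rw [← pow_mul_pow_sub r⁻¹ (Finset.mem_range_succ_iff.1 hi)]
        ring
    _ = 2 ^ j * (K * K' * r⁻¹ ^ j) := by
        rw [← Finset.sum_mul]
        exact_mod_cast congrArg (· * _) (congrArg Nat.cast (Nat.sum_range_choose j))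
    _ ≤ 2 ^ L * (K * K' * r⁻¹ ^ j) := by
        gcongr
        exact one_le_two
    _ = _ := by ring

theorem const (a : ℝ) (hr : 0 < r) : SmoothAtScale L |a| r fun _ : E => a := by
  refine ⟨contDiff_const, fun j _ x => ?_⟩
  rcases j.eq_zero_or_pos with rfl | hj
  · simp
  · rw [iteratedFDeriv_const_of_ne hj.ne', Pi.zero_apply, norm_zero]
    positivity

theorem sub (hφ : SmoothAtScale L K r φ) (hχ : SmoothAtScale L K' r χ) :
    SmoothAtScale L (K + K') r fun x => φ x - χ x := by
  refine ⟨hφ.contDiff.sub hχ.contDiff, fun j hj x => ?_⟩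
  have h_eq : iteratedFDeriv ℝ j (fun x => φ x - χ x) x =
      iteratedFDeriv ℝ j φ x - iteratedFDeriv ℝ j χ x :=
    iteratedFDeriv_sub_apply (hφ.contDiff.of_le (by exact_mod_cast le_top)).contDiffAt
      (hχ.contDiff.of_le (by exact_mod_cast le_top)).contDiffAt
  rw [h_eq, add_mul]
  exact (norm_sub_le _ _).trans
    (add_le_add (hφ.norm_iteratedFDeriv_le j hj x) (hχ.norm_iteratedFDeriv_le j hj x))

theorem of_le_two_mul {r' : ℝ} (hr : 0 < r) (hr' : 0 < r') (hrr : r' ≤ 2 * r)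
    (h : SmoothAtScale L K r φ) : SmoothAtScale L (2 ^ L * K) r' φ := by
  have hK := h.nonneg
  refine ⟨h.contDiff, fun j hj x => (h.norm_iteratedFDeriv_le j hj x).trans ?_⟩
  calc K * r⁻¹ ^ j ≤ K * (2 * r'⁻¹) ^ j := by
        gcongr
        rw [← div_eq_mul_inv, le_div_iff₀ hr', inv_mul_le_iff₀ hr]
        linarith
    _ = 2 ^ j * K * r'⁻¹ ^ j := by ring
    _ ≤ _ := by
        gcongr
        exact one_le_two

theorem prod (hr : 0 < r) {ι : Type*} (F : Finset ι) {φ : ι → E → ℝ}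
    (h : ∀ i ∈ F, SmoothAtScale L K r (φ i)) :
    SmoothAtScale L ((2 ^ L * K) ^ F.card) r fun x => ∏ i ∈ F, φ i x := by
  classical
  induction F using Finset.induction_on with
  | empty => simpa using const (E := E) (L := L) 1 hr
  | insert a F ha ih =>
    simpa only [Finset.prod_insert ha, Finset.card_insert_of_notMem ha, pow_succ'] using
      (h a (F.mem_insert_self _)).mul hr (ih fun i hi => h i (Finset.mem_insert_of_mem hi))

theorem exists_comp_smul_sub {Φ : E → ℝ} (hΦ : ContDiff ℝ (⊤ : ℕ∞) Φ) (hc : HasCompactSupport Φ)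
    (L : ℕ) : ∃ K, ∀ (c : E) (r : ℝ), 0 < r → SmoothAtScale L K r fun x => Φ (r⁻¹ • (x - c)) := by
  have h_bdd (j : ℕ) : ∃ K, ∀ x, ‖iteratedFDeriv ℝ j Φ x‖ ≤ K :=
    (hc.iteratedFDeriv j).exists_bound_of_continuous
      (hΦ.continuous_iteratedFDeriv (by exact_mod_cast le_top))
  choose K hK using h_bdd
  refine ⟨∑ j ∈ Finset.range (L + 1), K j, fun c r hr => ⟨hΦ.comp (by fun_prop), fun j hj x => ?_⟩⟩
  have h_scale := congrFun (iteratedFDeriv_comp_const_smul (i := j) r⁻¹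
    (hΦ.of_le (by exact_mod_cast le_top))) (x - c)
  rw [iteratedFDeriv_comp_sub (f := fun x => Φ (r⁻¹ • x)), h_scale, norm_smul, norm_pow, norm_inv,
    Real.norm_of_nonneg hr.le, mul_comm]
  gcongr
  exact (hK j _).trans (Finset.single_le_sum (f := K) (fun i _ => (norm_nonneg _).trans (hK i 0))
    (Finset.mem_range_succ_iff.2 hj))

end SmoothAtScale

end SmoothAtScale

theorem exists_abs_integral_mul_le_of_notMem_tangentialSet {n : ℕ} {ψ : Euc n → ℝ}
    (hψ : Continuous ψ) (hψc : HasCompactSupport ψ) (hψ0 : ∫ u, ψ u ≠ 0) (M : ℕ) :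
    ∃ L : ℕ, ∀ a : ℝ, 0 ≤ a → ∃ C : ℝ, 0 ≤ C ∧ ∀ {f : Euc n → ℝ}, LocallyIntegrable f →
      ∀ {κ : ℤ} {x₀ : Euc n}, x₀ ∉ tangentialSet ψ f M κ → ∀ {r K : ℝ}, 0 < r →
      ∀ {φ : Euc n → ℝ}, IsTestFun x₀ (a * r) φ → SmoothAtScale L K r φ →
        |∫ z, f z * φ z| ≤ C * K * 2 ^ κ * r ^ n := by
  set I := ∫ u, ψ u
  obtain ⟨L, hL⟩ := exists_abs_integral_mul_le (ψ := fun u => I⁻¹ * ψ u) (continuous_const.mul hψ)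
    hψc.mul_left (by rw [integral_const_mul, inv_mul_cancel₀ hψ0]) M
  refine ⟨L, fun a ha => ?_⟩
  obtain ⟨C, hC0, hC⟩ := hL a ha
  refine ⟨C * |I⁻¹|, by positivity, fun {f} hf {κ x₀} hx₀ {r K} hr {φ} hφ hφs => ?_⟩
  have h_conv (s : ℕ) (y : Euc n) (t : ℝ) (ht : 0 < t) (hd : dist x₀ y < 2 ^ s * t) :
      |convAt (fun u => I⁻¹ * ψ u) f t y| ≤ |I⁻¹| * 2 ^ κ * (2 ^ M) ^ s := by
    have h_mul : convAt (fun u => I⁻¹ * ψ u) f t y = I⁻¹ * convAt ψ f t y := by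
      simp only [convAt, ← integral_const_mul, mul_left_comm _ I⁻¹]
    rw [h_mul, abs_mul, mul_assoc]
    gcongr
    exact abs_convAt_le_of_notMem_tangentialSet hx₀ s ht hd
  refine (hC f hf x₀ r _ K hr (by positivity) hφs.nonneg h_conv φ hφ hφs.abs_le
    hφs.diffBound).trans_eq ?_
  ring

/-! ### Whitney families -/

section Whitney

open Metric (infDist closedBall)

variable {E : Type*} {ε Λ : ℝ}

/-- Whitney families: disjoint balls with centre `c j` and radius `r j = ε dist(c j, Ωᶜ)` whose
fivefold enlargements cover `Ω`. They are indexed by a set `J` of natural numbers, so that sums over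
several families are sums over `ℕ`. -/
structure IsWhitneyFamily [PseudoMetricSpace E] (ε : ℝ) (Ω : Set E) (J : Set ℕ) (c : ℕ → E)
    (r : ℕ → ℝ) : Prop where
  compl_nonempty : Ωᶜ.Nonempty
  isOpen : IsOpen Ω
  eps_pos : 0 < ε
  eps_le : ε ≤ 1 / 100
  center_mem : ∀ j ∈ J, c j ∈ Ω
  radius_eq : ∀ j ∈ J, r j = ε * infDist (c j) Ωᶜ
  disjoint : J.PairwiseDisjoint fun j => closedBall (c j) (r j)
  exists_dist_le : ∀ x ∈ Ω, ∃ j ∈ J, dist x (c j) ≤ 5 * r j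

theorem infDist_compl_pos [PseudoMetricSpace E] {Ω : Set E} (hΩ : IsOpen Ω) (hne : Ωᶜ.Nonempty)
    {x : E} (hx : x ∈ Ω) : 0 < infDist x Ωᶜ :=
  (hΩ.isClosed_compl.notMem_iff_infDist_pos hne).1 (notMem_compl_iff.2 hx)

theorem exists_isWhitneyFamily_of_infDist_le [PseudoMetricSpace E]
    [TopologicalSpace.SeparableSpace E] (hε : 0 < ε) (hε' : ε ≤ 1 / 100) {Ω : Set E}
    (hΩ : IsOpen Ω) (hne : Ωᶜ.Nonempty) {R : ℝ} (hR : ∀ x ∈ Ω, infDist x Ωᶜ ≤ R) :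
    ∃ J c r, IsWhitneyFamily ε Ω J c r := by
  obtain ⟨u, hu, hdisj, hcov⟩ := Vitali.exists_disjoint_subfamily_covering_enlargement_closedBall Ω
    (fun x => x) (fun x => ε * infDist x Ωᶜ) (ε * R) (fun x hx => by gcongr; exact hR x hx) 5
    (by norm_num)
  have hcount : u.Countable :=
    (hdisj.mono_on fun _ _ => Metric.ball_subset_closedBall).countable_of_isOpen
      (fun _ _ => Metric.isOpen_ball)
      fun z hz => ⟨z, Metric.mem_ball_self (mul_pos hε (infDist_compl_pos hΩ hne (hu hz)))⟩
  obtain ⟨e, he⟩ := countable_iff_exists_injOn.1 hcount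
  have : Nonempty E := hne.nonempty
  have h_inv {x : E} (hx : x ∈ u) : Function.invFunOn e u (e x) = x := he.leftInvOn_invFunOn hx
  refine ⟨e '' u, Function.invFunOn e u, fun j => ε * infDist (Function.invFunOn e u j) Ωᶜ,
    hne, hΩ, hε, hε', fun j hj => hu (Function.invFunOn_mem hj), fun _ _ => rfl, ?_, ?_⟩
  · rintro _ ⟨x, hx, rfl⟩ _ ⟨y, hy, rfl⟩ hxy
    simp only [Function.onFun, h_inv hx, h_inv hy]
    exact hdisj hx hy fun h => hxy (congrArg e h)
  · intro x hx
    obtain ⟨b, hb, hxb⟩ := hcov x hx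
    refine ⟨e b, mem_image_of_mem e hb, ?_⟩
    rw [h_inv hb]
    exact hxb (Metric.mem_closedBall_self (mul_nonneg hε.le Metric.infDist_nonneg))

theorem exists_isWhitneyFamily [NormedAddCommGroup E] [NormedSpace ℝ E] [FiniteDimensional ℝ E]
    [Nontrivial E] [MeasurableSpace E] [BorelSpace E] (μ : Measure E) [μ.IsAddHaarMeasure]
    (hε : 0 < ε) (hε' : ε ≤ 1 / 100) {Ω : Set E} (hΩ : IsOpen Ω) (hΩ_fin : μ Ω ≠ ∞) :
    ∃ J c r, IsWhitneyFamily ε Ω J c r := by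
  obtain ⟨R, hR⟩ := exists_forall_ball_subset_radius_le μ hΩ_fin
  have hne : Ωᶜ.Nonempty := by
    rw [nonempty_compl]
    rintro rfl
    linarith [hR 0 (|R| + 1) (by positivity) (subset_univ _), le_abs_self R]
  have : ProperSpace E := FiniteDimensional.proper ℝ E
  refine exists_isWhitneyFamily_of_infDist_le hε hε' hΩ hne (R := R) fun x hx =>
    hR x _ (infDist_compl_pos hΩ hne hx) ?_
  simpa using Metric.ball_infDist_compl_subset (s := Ω) (x := x)

namespace IsWhitneyFamily

section Metric

variable [PseudoMetricSpace E] {Ω : Set E} {J : Set ℕ} {c : ℕ → E} {r : ℕ → ℝ}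

theorem radius_pos (h : IsWhitneyFamily ε Ω J c r) {j : ℕ} (hj : j ∈ J) : 0 < r j := by
  rw [h.radius_eq j hj]
  exact mul_pos h.eps_pos (infDist_compl_pos h.isOpen h.compl_nonempty (h.center_mem j hj))

theorem mem_of_dist_lt (h : IsWhitneyFamily ε Ω J c r) {j : ℕ} (hj : j ∈ J) {x : E}
    (hx : dist x (c j) < 100 * r j) : x ∈ Ω := by
  by_contra hx'
  have h_dist : infDist (c j) Ωᶜ ≤ dist (c j) x := Metric.infDist_le_dist_of_mem hx'
  have h_rad : r j ≤ 1 / 100 * infDist (c j) Ωᶜ := by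
    rw [h.radius_eq j hj]
    gcongr
    exacts [Metric.infDist_nonneg, h.eps_le]
  rw [dist_comm] at h_dist
  linarith

theorem radius_le_two_mul {Ω' : Set E} {J' : Set ℕ} {c' : ℕ → E} {r' : ℕ → ℝ}
    (h : IsWhitneyFamily ε Ω J c r) (h' : IsWhitneyFamily ε Ω' J' c' r') (hsub : Ω ⊆ Ω')
    {i j : ℕ} (hi : i ∈ J) (hj : j ∈ J') (hd : dist (c i) (c' j) ≤ 6 * r i + 6 * r' j) :
    r i ≤ 2 * r' j := by
  have h_infDist : infDist (c i) Ωᶜ ≤ infDist (c' j) Ω'ᶜ + (6 * r i + 6 * r' j) := by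
    calc infDist (c i) Ωᶜ ≤ infDist (c i) Ω'ᶜ :=
          Metric.infDist_le_infDist_of_subset (compl_subset_compl.2 hsub) h'.compl_nonempty
      _ ≤ infDist (c' j) Ω'ᶜ + dist (c i) (c' j) := Metric.infDist_le_infDist_add_dist
      _ ≤ _ := by gcongr
  have h_rad : r i ≤ r' j + ε * (6 * r i + 6 * r' j) := by
    rw [h'.radius_eq j hj, ← mul_add, ← h'.radius_eq j hj]
    nth_rw 1 [h.radius_eq i hi]
    exact mul_le_mul_of_nonneg_left h_infDist h.eps_pos.le
  nlinarith [h.eps_le, h.radius_pos hi, h'.radius_pos hj]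

theorem radius_mem_Icc (h : IsWhitneyFamily ε Ω J c r) (hΛ : Λ * ε ≤ 1 / 2) {j : ℕ} (hj : j ∈ J)
    {x : E} (hx : dist x (c j) ≤ Λ * r j) :
    r j ∈ Icc (2 / 3 * (ε * infDist x Ωᶜ)) (2 * (ε * infDist x Ωᶜ)) := by
  have hc : infDist (c j) Ωᶜ ≤ infDist x Ωᶜ + dist (c j) x := Metric.infDist_le_infDist_add_dist
  have hx' : infDist x Ωᶜ ≤ infDist (c j) Ωᶜ + dist x (c j) := Metric.infDist_le_infDist_add_dist
  have h_dist : dist x (c j) ≤ 1 / 2 * infDist (c j) Ωᶜ := by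
    rw [h.radius_eq j hj, ← mul_assoc] at hx
    exact hx.trans (mul_le_mul_of_nonneg_right hΛ Metric.infDist_nonneg)
  rw [dist_comm] at hc
  rw [h.radius_eq j hj, mem_Icc]
  constructor <;> nlinarith [h.eps_pos]

end Metric

section Normed

variable [NormedAddCommGroup E] [NormedSpace ℝ E] [FiniteDimensional ℝ E]
  {Ω : Set E} {J : Set ℕ} {c : ℕ → E} {r : ℕ → ℝ}

theorem card_le (h : IsWhitneyFamily ε Ω J c r) (hΛ : 0 ≤ Λ) (hΛε : Λ * ε ≤ 1 / 2) (x : E)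
    {F : Finset ℕ} (hF : ∀ j ∈ F, j ∈ J ∧ dist x (c j) ≤ Λ * r j) :
    (F.card : ℝ) ≤ (3 * (Λ + 1)) ^ Module.finrank ℝ E := by
  rcases F.eq_empty_or_nonempty with rfl | ⟨j₀, hj₀⟩
  · rw [Finset.card_empty, Nat.cast_zero]
    positivity
  borelize E
  set μ : Measure E := Measure.addHaar
  set d := ε * infDist x Ωᶜ
  have h_rad (j : ℕ) (hj : j ∈ F) : r j ∈ Icc (2 / 3 * d) (2 * d) :=
    h.radius_mem_Icc hΛε (hF j hj).1 (hF j hj).2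
  have hd : 0 < d := by linarith [(h_rad j₀ hj₀).2, h.radius_pos (hF j₀ hj₀).1]
  have h_sub : (⋃ j ∈ F, closedBall (c j) (r j)) ⊆ closedBall x ((Λ + 1) * (2 * d)) := by
    refine iUnion₂_subset fun j hj => Metric.closedBall_subset_closedBall' ?_
    have := (hF j hj).2
    rw [dist_comm]
    nlinarith [(h_rad j hj).2]
  have h_vol : (F.card : ℝ) * ((2 / 3 * d) ^ Module.finrank ℝ E * μ.real (Metric.ball 0 1)) ≤
      ((Λ + 1) * (2 * d)) ^ Module.finrank ℝ E * μ.real (Metric.ball 0 1) := by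
    calc _ = ∑ j ∈ F, μ.real (closedBall (c j) (2 / 3 * d)) := by
          simp [Measure.addHaar_real_closedBall μ _ (by positivity : 0 ≤ 2 / 3 * d)]
      _ ≤ ∑ j ∈ F, μ.real (closedBall (c j) (r j)) :=
          Finset.sum_le_sum fun j hj => measureReal_mono
            (Metric.closedBall_subset_closedBall (h_rad j hj).1) measure_closedBall_lt_top.ne
      _ = μ.real (⋃ j ∈ F, closedBall (c j) (r j)) :=
          (measureReal_biUnion_finset (fun i hi j hj => h.disjoint (hF i hi).1 (hF j hj).1)
            (fun _ _ => measurableSet_closedBall) fun _ _ => measure_closedBall_lt_top.ne).symm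
      _ ≤ μ.real (closedBall x ((Λ + 1) * (2 * d))) :=
          measureReal_mono h_sub measure_closedBall_lt_top.ne
      _ = _ := Measure.addHaar_real_closedBall μ _ (by positivity)
  have h_ball : 0 < μ.real (Metric.ball 0 1) :=
    ENNReal.toReal_pos (Metric.measure_ball_pos μ 0 one_pos).ne' measure_ball_lt_top.ne
  have h_fac : (Λ + 1) * (2 * d) = 3 * (Λ + 1) * (2 / 3 * d) := by ring
  rw [h_fac, mul_pow _ (2 / 3 * d), mul_assoc] at h_vol
  exact le_of_mul_le_mul_right h_vol (by positivity)

end Normed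

end IsWhitneyFamily

end Whitney

/-! ### Partitions of unity on Whitney families -/

section PartitionOfUnity

theorem hasSum_mul_prod_one_sub {f : ℕ → ℝ} {i : ℕ} (hi : f i = 1) :
    HasSum (fun j => f j * ∏ k ∈ Finset.range j, (1 - f k)) 1 := by
  have h_zero {j : ℕ} (hj : i < j) : ∏ k ∈ Finset.range j, (1 - f k) = 0 :=
    Finset.prod_eq_zero (Finset.mem_range.2 hj) (by rw [hi, sub_self])
  have h_tele : ∑ j ∈ Finset.range (i + 1), f j * ∏ k ∈ Finset.range j, (1 - f k) = 1 := by
    calc _ = ∑ j ∈ Finset.range (i + 1), (∏ k ∈ Finset.range j, (1 - f k) -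
          ∏ k ∈ Finset.range (j + 1), (1 - f k)) := by
          refine Finset.sum_congr rfl fun j _ => ?_
          rw [Finset.prod_range_succ]
          ring
      _ = 1 := by
          rw [Finset.sum_range_sub', h_zero i.lt_succ_self, sub_zero, Finset.prod_range_zero]
  have h_off (j : ℕ) (hj : j ∉ Finset.range (i + 1)) :
      f j * ∏ k ∈ Finset.range j, (1 - f k) = 0 := by
    rw [h_zero (by simpa [Nat.lt_succ_iff] using hj), mul_zero]
  exact h_tele.subst (motive := HasSum _) (hasSum_sum_of_ne_finset_zero h_off)

theorem norm_inv_smul_sub {E : Type*} [SeminormedAddCommGroup E] [NormedSpace ℝ E] {s : ℝ}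
    (hs : 0 < s) (x y : E) : ‖s⁻¹ • (x - y)‖ = dist x y / s := by
  rw [norm_smul, norm_inv, Real.norm_of_nonneg hs.le, ← dist_eq_norm, inv_mul_eq_div]

variable {E : Type*} [NormedAddCommGroup E] [NormedSpace ℝ E] [HasContDiffBump E]
  {ε : ℝ} {Ω : Set E} {J : Set ℕ} {c : ℕ → E} {r : ℕ → ℝ}

/-- A fixed smooth bump equal to `1` on the ball of radius `5`, the covering dilation of a Whitney
family, and supported in the ball of radius `6`. -/
def unitBump (E : Type*) [NormedAddCommGroup E] [NormedSpace ℝ E] [HasContDiffBump E] :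
    ContDiffBump (0 : E) :=
  ⟨5, 6, by norm_num, by norm_num⟩

open Classical in
/-- The bump adapted to the `j`-th ball of a Whitney family. -/
def whitneyBump (J : Set ℕ) (c : ℕ → E) (r : ℕ → ℝ) (j : ℕ) (x : E) : ℝ :=
  if j ∈ J then unitBump E ((r j)⁻¹ • (x - c j)) else 0

/-- The partition of unity obtained from the bumps of a Whitney family by successive subtraction. -/
def whitneyWeight (J : Set ℕ) (c : ℕ → E) (r : ℕ → ℝ) (j : ℕ) (x : E) : ℝ :=
  whitneyBump J c r j x * ∏ i ∈ Finset.range j, (1 - whitneyBump J c r i x)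

theorem whitneyBump_nonneg (j : ℕ) (x : E) : 0 ≤ whitneyBump J c r j x := by
  rw [whitneyBump]
  split_ifs
  exacts [(unitBump E).nonneg, le_rfl]

theorem whitneyBump_le_one (j : ℕ) (x : E) : whitneyBump J c r j x ≤ 1 := by
  rw [whitneyBump]
  split_ifs
  exacts [(unitBump E).le_one, zero_le_one]

theorem whitneyWeight_nonneg (j : ℕ) (x : E) : 0 ≤ whitneyWeight J c r j x :=
  mul_nonneg (whitneyBump_nonneg j x)
    (Finset.prod_nonneg fun i _ => sub_nonneg.2 (whitneyBump_le_one i x))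

namespace IsWhitneyFamily

theorem of_whitneyBump_ne_zero (h : IsWhitneyFamily ε Ω J c r) {j : ℕ} {x : E}
    (hx : whitneyBump J c r j x ≠ 0) : j ∈ J ∧ dist x (c j) ≤ 6 * r j := by
  rw [whitneyBump] at hx
  split_ifs at hx with hj
  · refine ⟨hj, ?_⟩
    by_contra! h_lt
    refine hx ((unitBump E).zero_of_le_dist ?_)
    rw [dist_zero_right, norm_inv_smul_sub (h.radius_pos hj), le_div_iff₀ (h.radius_pos hj)]
    exact h_lt.le
  · exact absurd rfl hx

theorem exists_whitneyBump_eq_one (h : IsWhitneyFamily ε Ω J c r) {x : E} (hx : x ∈ Ω) :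
    ∃ j, whitneyBump J c r j x = 1 := by
  obtain ⟨j, hj, hd⟩ := h.exists_dist_le x hx
  refine ⟨j, ?_⟩
  rw [whitneyBump, if_pos hj]
  refine (unitBump E).one_of_mem_closedBall ?_
  rw [Metric.mem_closedBall, dist_zero_right, norm_inv_smul_sub (h.radius_pos hj),
    div_le_iff₀ (h.radius_pos hj)]
  exact hd

open Classical in
theorem whitneyWeight_eq (h : IsWhitneyFamily ε Ω J c r) (j : ℕ) :
    whitneyWeight J c r j = fun x => whitneyBump J c r j x *
      ∏ i ∈ Finset.range j with i ∈ J ∧ dist (c j) (c i) ≤ 6 * r i + 6 * r j,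
        (1 - whitneyBump J c r i x) := by
  funext x
  rw [whitneyWeight]
  by_cases hj : whitneyBump J c r j x = 0
  · rw [hj, zero_mul, zero_mul]
  congr 1
  symm
  refine Finset.prod_subset (Finset.filter_subset _ _) fun i hi hi' => ?_
  by_contra h_ne
  obtain ⟨hiJ, hid⟩ := h.of_whitneyBump_ne_zero (j := i) (x := x) fun h0 => h_ne (by simp [h0])
  obtain ⟨-, hjd⟩ := h.of_whitneyBump_ne_zero hj
  refine hi' (Finset.mem_filter.2 ⟨hi, hiJ, ?_⟩)
  linarith [dist_triangle_left (c j) (c i) x]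

theorem hasSum_whitneyWeight (h : IsWhitneyFamily ε Ω J c r) {x : E} (hx : x ∈ Ω) :
    HasSum (fun j => whitneyWeight J c r j x) 1 :=
  let ⟨_, hi⟩ := h.exists_whitneyBump_eq_one hx
  hasSum_mul_prod_one_sub hi

end IsWhitneyFamily

theorem exists_smoothAtScale_whitneyWeight (E : Type*) [NormedAddCommGroup E] [NormedSpace ℝ E]
    [FiniteDimensional ℝ E] (L : ℕ) :
    ∃ K : ℝ, 0 ≤ K ∧ ∀ {ε : ℝ} {Ω : Set E} {J : Set ℕ} {c : ℕ → E} {r : ℕ → ℝ},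
      IsWhitneyFamily ε Ω J c r → ∀ j ∈ J, SmoothAtScale L K (r j) (whitneyWeight J c r j) := by
  classical
  obtain ⟨K₀, hK₀⟩ := SmoothAtScale.exists_comp_smul_sub (unitBump E).contDiff
    (unitBump E).hasCompactSupport L
  have hK₀_nonneg : 0 ≤ K₀ := (hK₀ 0 1 one_pos).nonneg
  obtain ⟨m, hm⟩ := exists_nat_ge (((3 : ℝ) * (18 + 1)) ^ Module.finrank ℝ E)
  set K₁ : ℝ := 2 ^ L * (2 ^ L * (1 + K₀))
  have h_two : (1 : ℝ) ≤ 2 ^ L := one_le_pow₀ one_le_two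
  have hK₁ : 1 ≤ K₁ :=
    one_le_mul_of_one_le_of_one_le h_two
      (one_le_mul_of_one_le_of_one_le h_two (le_add_of_nonneg_right hK₀_nonneg))
  refine ⟨2 ^ L * K₀ * K₁ ^ m, by positivity, fun {ε Ω J c r} h j hj => ?_⟩
  have hrj := h.radius_pos hj
  have h_bump (i : ℕ) (hi : i ∈ J) : SmoothAtScale L K₀ (r i) (whitneyBump J c r i) := by
    unfold whitneyBump
    simpa only [if_pos hi] using hK₀ (c i) (r i) (h.radius_pos hi)
  have h_rad {i : ℕ} (hi : i ∈ J) (hd : dist (c j) (c i) ≤ 6 * r i + 6 * r j) : r j ≤ 2 * r i :=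
    h.radius_le_two_mul h Subset.rfl hj hi (by linarith)
  rw [h.whitneyWeight_eq]
  set F := {i ∈ Finset.range j | i ∈ J ∧ dist (c j) (c i) ≤ 6 * r i + 6 * r j}
  have h_one_sub (i : ℕ) (hi : i ∈ F) :
      SmoothAtScale L (2 ^ L * (1 + K₀)) (r j) fun x => 1 - whitneyBump J c r i x := by
    obtain ⟨-, hiJ, hd⟩ := Finset.mem_filter.1 hi
    have h_sub := (SmoothAtScale.const (E := E) (L := L) 1 (h.radius_pos hiJ)).sub (h_bump i hiJ)
    rw [abs_one] at h_sub
    exact h_sub.of_le_two_mul (h.radius_pos hiJ) hrj (h_rad hiJ hd)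
  have h_card : F.card ≤ m := by
    have h_card' := h.card_le (Λ := 18) (by norm_num) (by linarith [h.eps_le]) (c j) (F := F) ?_
    · exact_mod_cast h_card'.trans hm
    · intro i hi
      obtain ⟨-, hiJ, hd⟩ := Finset.mem_filter.1 hi
      exact ⟨hiJ, by linarith [h_rad hiJ hd]⟩
  exact (h_bump j hj).mul hrj
    ((SmoothAtScale.prod hrj F h_one_sub).mono hrj (pow_le_pow_right₀ hK₁ h_card))

end PartitionOfUnity

/-! ### Functions dual to the monomials -/

section DualSystem

open Polynomial in
theorem eq_zero_of_integral_mul_pow_eq_zero {N : ℕ} {P : ℝ[X]} (hP : P ∈ degreeLT ℝ N)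
    (h : ∀ j : Fin N, ∫ u in (0 : ℝ)..1, P.eval u * u ^ (j : ℕ) = 0) : P = 0 := by
  have h_sq : ∫ u in (0 : ℝ)..1, P.eval u ^ 2 = 0 := by
    calc ∫ u in (0 : ℝ)..1, P.eval u ^ 2
        = ∫ u in (0 : ℝ)..1, ∑ j, degreeLTEquiv ℝ N ⟨P, hP⟩ j * (P.eval u * u ^ (j : ℕ)) := by
          congr 1 with u
          rw [sq]
          nth_rw 2 [eval_eq_sum_degreeLTEquiv hP]
          rw [Finset.mul_sum]
          exact Finset.sum_congr rfl fun j _ => by ring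
      _ = 0 := by
          rw [intervalIntegral.integral_finsetSum
            fun j _ => (by fun_prop : Continuous _).intervalIntegrable _ _]
          simp only [intervalIntegral.integral_const_mul, h, mul_zero, Finset.sum_const_zero]
  have h_root (u : ℝ) (hu : u ∈ Icc (0 : ℝ) 1) : P.IsRoot u := by
    by_contra h_ne
    exact h_sq.not_gt (intervalIntegral.integral_pos zero_lt_one
      (P.continuous.pow 2).continuousOn (fun x _ => sq_nonneg _) ⟨u, hu, sq_pos_of_ne_zero h_ne⟩)
  exact eq_zero_of_infinite_isRoot P ((Icc_infinite zero_lt_one).mono h_root)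

open Polynomial in
theorem exists_polynomial_integral_mul_pow_eq {N : ℕ} (v : Fin N → ℝ) :
    ∃ P : ℝ[X], ∀ j : Fin N, ∫ u in (0 : ℝ)..1, P.eval u * u ^ (j : ℕ) = v j := by
  have h_int (P : ℝ[X]) (j : Fin N) :
      IntervalIntegrable (fun u => P.eval u * u ^ (j : ℕ)) volume 0 1 :=
    (by fun_prop : Continuous _).intervalIntegrable _ _
  let T : degreeLT ℝ N →ₗ[ℝ] Fin N → ℝ :=
    { toFun := fun P j => ∫ u in (0 : ℝ)..1, (P : ℝ[X]).eval u * u ^ (j : ℕ)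
      map_add' := fun P Q => by
        ext j
        simp only [Submodule.coe_add, eval_add, add_mul, Pi.add_apply]
        exact intervalIntegral.integral_add (h_int P j) (h_int Q j)
      map_smul' := fun a P => by
        ext j
        simp only [Submodule.coe_smul, eval_smul, smul_eq_mul, mul_assoc, RingHom.id_apply,
          Pi.smul_apply, intervalIntegral.integral_const_mul] }
  have h_inj : Function.Injective T := by
    refine LinearMap.ker_eq_bot.1 ((LinearMap.ker_eq_bot').2 fun P hP => ?_)
    exact Subtype.ext (eq_zero_of_integral_mul_pow_eq_zero P.2 fun j => congrFun hP j)
  have := (degreeLTEquiv ℝ N).symm.finiteDimensional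
  obtain ⟨P, hP⟩ := (LinearMap.injective_iff_surjective_of_finrank_eq_finrank
    (degreeLTEquiv ℝ N).finrank_eq).1 h_inj v
  exact ⟨P, fun j => congrFun hP j⟩

theorem exists_dual_pow (N : ℕ) : ∃ (B : ℝ) (ϑ : Fin N → ℝ → ℝ), (∀ m, Measurable (ϑ m)) ∧
    (∀ m u, |ϑ m u| ≤ B) ∧ (∀ m u, 1 < |u| → ϑ m u = 0) ∧
      ∀ m m' : Fin N, ∫ u, ϑ m u * u ^ (m' : ℕ) = if m = m' then 1 else 0 := by
  choose P hP using fun m : Fin N => exists_polynomial_integral_mul_pow_eq (Pi.single m 1)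
  obtain ⟨B, hB⟩ := (isCompact_Icc (a := (0 : ℝ)) (b := 1)).exists_bound_of_continuousOn
    (continuous_pi fun m => (P m).continuous).continuousOn
  have hB_nonneg : 0 ≤ B := (norm_nonneg _).trans (hB 0 (left_mem_Icc.2 zero_le_one))
  refine ⟨B, fun m => (Ioc 0 1).indicator fun u => (P m).eval u,
    fun m => (P m).continuous.measurable.indicator measurableSet_Ioc, fun m u => ?_,
    fun m u hu => ?_, fun m m' => ?_⟩
  · beta_reduce
    by_cases hu : u ∈ Ioc (0 : ℝ) 1
    · rw [indicator_of_mem hu]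
      exact (norm_le_pi_norm _ m).trans (hB u (Ioc_subset_Icc_self hu))
    · rwa [indicator_of_notMem hu, abs_zero]
  · refine indicator_of_notMem (fun h => ?_) _
    rw [abs_of_pos h.1] at hu
    exact hu.not_ge h.2
  · simp only [← indicator_mul_left (Ioc (0 : ℝ) 1) (fun u => (P m).eval u) fun u => u ^ (m' : ℕ)]
    rw [integral_indicator measurableSet_Ioc, ← intervalIntegral.integral_of_le zero_le_one, hP,
      Pi.single_apply]
    simp only [eq_comm]

/-- Multi-indices all of whose entries are at most `N`; this box contains the multi-indices of order
at most `N` and, unlike those, is a product. -/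
abbrev MultiIdx (n N : ℕ) := Fin n → Fin (N + 1)

variable {n N : ℕ} {B : ℝ} {θ : MultiIdx n N → Euc n → ℝ}

/-- The monomial `u ↦ u ^ α`. -/
def coordMonomial (α : MultiIdx n N) (u : Euc n) : ℝ := ∏ i, u i ^ (α i : ℕ)

theorem contDiff_coordMonomial (α : MultiIdx n N) :
    ContDiff ℝ (⊤ : ℕ∞) (coordMonomial (n := n) α) := by
  unfold coordMonomial
  fun_prop

theorem abs_coordMonomial_le (α : MultiIdx n N) {u : Euc n} {R : ℝ} (hR : 1 ≤ R) (hu : ‖u‖ ≤ R) :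
    |coordMonomial α u| ≤ R ^ (N * n) := by
  rw [coordMonomial, Finset.abs_prod]
  calc ∏ i, |u i ^ (α i : ℕ)| ≤ ∏ _i : Fin n, R ^ N := by
        refine Finset.prod_le_prod (fun _ _ => abs_nonneg _) fun i _ => ?_
        rw [abs_pow]
        calc |u i| ^ (α i : ℕ) ≤ R ^ (α i : ℕ) := by
              gcongr
              exact (PiLp.norm_apply_le u i).trans hu
          _ ≤ R ^ N := pow_le_pow_right₀ hR (α i).is_le
    _ = R ^ (N * n) := by simp [pow_mul]

/-- A bounded system supported in the unit cube and biorthogonal to the monomials. -/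
structure IsDualSystem (B : ℝ) (θ : MultiIdx n N → Euc n → ℝ) : Prop where
  measurable : ∀ α, Measurable (θ α)
  abs_le : ∀ α u, |θ α u| ≤ B
  eq_zero : ∀ α, ∀ u ∉ cube 0 1, θ α u = 0
  integral_mul : ∀ α β, ∫ u, θ α u * coordMonomial β u = if α = β then 1 else 0

theorem exists_isDualSystem (n N : ℕ) :
    ∃ (B : ℝ) (θ : MultiIdx n N → Euc n → ℝ), IsDualSystem B θ := by
  obtain ⟨B, ϑ, h_meas, hB, h_supp, h_dual⟩ := exists_dual_pow (N + 1)
  refine ⟨B ^ n, fun α u => ∏ i, ϑ (α i) (u i), fun α => ?_, fun α u => ?_, fun α u hu => ?_,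
    fun α β => ?_⟩
  · exact Finset.measurable_prod _ fun i _ => (h_meas _).comp (by fun_prop)
  · rw [Finset.abs_prod]
    calc ∏ i, |ϑ (α i) (u i)| ≤ ∏ _i : Fin n, B :=
          Finset.prod_le_prod (fun _ _ => abs_nonneg _) fun i _ => hB _ _
      _ = B ^ n := by simp
  · simp only [cube, mem_ofPred_eq, not_forall, not_le] at hu
    obtain ⟨i, hi⟩ := hu
    exact Finset.prod_eq_zero (Finset.mem_univ i) (h_supp _ _ (by simpa using hi))
  · calc ∫ u : Euc n, (∏ i, ϑ (α i) (u i)) * coordMonomial β u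
        = ∫ u : Euc n, ∏ i, (ϑ (α i) (u i) * u i ^ (β i : ℕ)) := by
          simp only [coordMonomial, Finset.prod_mul_distrib]
      _ = ∫ v : Fin n → ℝ, ∏ i, (ϑ (α i) (v i) * v i ^ (β i : ℕ)) :=
          (PiLp.volume_preserving_ofLp (Fin n)).integral_comp
            (MeasurableEquiv.toLp 2 (Fin n → ℝ)).symm.measurableEmbedding
            fun v => ∏ i, (ϑ (α i) (v i) * v i ^ (β i : ℕ))
      _ = ∏ i, if α i = β i then (1 : ℝ) else 0 := by
          rw [integral_fintype_prod_volume_eq_prod fun i u => ϑ (α i) u * u ^ (β i : ℕ)]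
          simp only [h_dual]
      _ = if α = β then 1 else 0 := by simp [Finset.prod_ite_zero, funext_iff]

end DualSystem

/-! ### Cancelling moments -/

section CancelMoments

variable {n N : ℕ} {B : ℝ} {θ : MultiIdx n N → Euc n → ℝ} {c x : Euc n} {r : ℝ}

theorem dist_le_of_mem_cube (hr : 0 ≤ r) (hx : x ∈ cube c r) : dist x c ≤ n * r := by
  rw [EuclideanSpace.dist_eq]
  refine Real.sqrt_le_iff.2 ⟨by positivity, ?_⟩
  calc ∑ i, dist (x i) (c i) ^ 2 ≤ ∑ _i : Fin n, r ^ 2 := by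
        gcongr with i
        exact hx i
    _ = n * r ^ 2 := by simp
    _ ≤ n ^ 2 * r ^ 2 := by
        gcongr
        exact_mod_cast Nat.le_self_pow two_ne_zero n
    _ = (n * r) ^ 2 := (mul_pow _ _ _).symm

theorem mem_cube_of_dist_le (h : dist x c ≤ r) : x ∈ cube c r := fun i =>
  (PiLp.norm_apply_le (x - c) i).trans ((dist_eq_norm x c).symm.trans_le h)

theorem inv_smul_sub_mem_cube_iff (hr : 0 < r) : r⁻¹ • (x - c) ∈ cube 0 1 ↔ x ∈ cube c r := by
  refine forall_congr' fun i => ?_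
  simp only [PiLp.smul_apply, PiLp.sub_apply, smul_eq_mul, PiLp.zero_apply, sub_zero, abs_mul,
    abs_inv, abs_of_pos hr]
  rw [inv_mul_le_iff₀ hr, mul_one]

theorem integral_comp_inv_smul_sub (F : Euc n → ℝ) (c : Euc n) (hr : 0 < r) :
    ∫ x, F (r⁻¹ • (x - c)) = r ^ n * ∫ u, F u := by
  rw [integral_sub_right_eq_self (fun x => F (r⁻¹ • x)) c, Measure.integral_comp_inv_smul,
    finrank_euclideanSpace_fin, smul_eq_mul, abs_of_pos (by positivity)]

theorem integrable_mul_continuous {h g : Euc n → ℝ} {R : ℝ} (hh : Integrable h)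
    (h_eq_zero : ∀ x, R < dist x c → h x = 0) (hg : Continuous g) :
    Integrable fun x => h x * g x := by
  refine (integrableOn_iff_integrable_of_support_subset fun x hx => ?_).1
    (hh.integrableOn.mul_continuousOn hg.continuousOn (isCompact_closedBall c R))
  exact not_lt.1 fun h_lt => left_ne_zero_of_mul hx (h_eq_zero x h_lt)

theorem IsDualSystem.nonneg (hθ : IsDualSystem B θ) : 0 ≤ B :=
  (abs_nonneg _).trans (hθ.abs_le 0 0)

theorem IsDualSystem.comp_eq_zero (hθ : IsDualSystem B θ) (hr : 0 < r) (α : MultiIdx n N)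
    (hx : n * r < dist x c) : θ α (r⁻¹ • (x - c)) = 0 :=
  hθ.eq_zero α _ fun h =>
    hx.not_ge (dist_le_of_mem_cube hr.le ((inv_smul_sub_mem_cube_iff hr).1 h))

theorem IsDualSystem.integrable_comp (hθ : IsDualSystem B θ) (c : Euc n) (hr : 0 < r)
    (α : MultiIdx n N) : Integrable fun x => θ α (r⁻¹ • (x - c)) := by
  have h_meas : Measurable fun x => θ α (r⁻¹ • (x - c)) := (hθ.measurable α).comp (by fun_prop)
  refine (integrableOn_iff_integrable_of_support_subset fun x hx => ?_).1
    (IntegrableOn.of_bound (isCompact_closedBall c (n * r)).measure_lt_top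
      h_meas.aestronglyMeasurable B (ae_of_all _ fun x => hθ.abs_le α _))
  exact not_lt.1 fun h_lt => hx (hθ.comp_eq_zero hr α h_lt)

/-- The `α`-th moment of `h` in the coordinates in which the cube `cube c r` becomes `cube 0 1`. -/
def scaledMoment (c : Euc n) (r : ℝ) (h : Euc n → ℝ) (α : MultiIdx n N) : ℝ :=
  (r ^ n)⁻¹ * ∫ y, h y * coordMonomial α (r⁻¹ • (y - c))

/-- The combination of rescaled dual functions, supported in `cube c r`, that has the same moments
as `h`. -/
def momentPart (θ : MultiIdx n N → Euc n → ℝ) (c : Euc n) (r : ℝ) (h : Euc n → ℝ) (x : Euc n) : ℝ :=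
  ∑ α, scaledMoment c r h α * θ α (r⁻¹ • (x - c))

/-- The pairing of `g` with the `α`-th dual function rescaled to `cube c r`. -/
def dualCoeff (θ : MultiIdx n N → Euc n → ℝ) (c : Euc n) (r : ℝ) (g : Euc n → ℝ)
    (α : MultiIdx n N) : ℝ :=
  ∫ u, θ α u * g (c + r • u)

/-- The transpose of `h ↦ h - momentPart θ c r h`: it subtracts from `g` a polynomial with the same
dual coefficients. -/
def cancelMoments (θ : MultiIdx n N → Euc n → ℝ) (c : Euc n) (r : ℝ) (g : Euc n → ℝ)
    (y : Euc n) : ℝ :=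
  g y - ∑ α, coordMonomial α (r⁻¹ • (y - c)) * dualCoeff θ c r g α

theorem momentPart_zero (θ : MultiIdx n N → Euc n → ℝ) (c : Euc n) (r : ℝ) (x : Euc n) :
    momentPart θ c r (fun _ => 0) x = 0 := by
  simp [momentPart, scaledMoment]

theorem integral_dual_comp_mul (θ : MultiIdx n N → Euc n → ℝ) (c : Euc n) (hr : 0 < r)
    (g : Euc n → ℝ) (α : MultiIdx n N) :
    ∫ x, θ α (r⁻¹ • (x - c)) * g x = r ^ n * dualCoeff θ c r g α := by
  rw [dualCoeff, ← integral_comp_inv_smul_sub _ c hr]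
  simp only [smul_inv_smul₀ hr.ne', add_sub_cancel]

theorem continuous_coordMonomial_comp (c : Euc n) (r : ℝ) (α : MultiIdx n N) :
    Continuous fun y => coordMonomial α (r⁻¹ • (y - c)) :=
  (contDiff_coordMonomial α).continuous.comp (by fun_prop)

theorem continuous_cancelMoments (θ : MultiIdx n N → Euc n → ℝ) (c : Euc n) (r : ℝ)
    {g : Euc n → ℝ} (hg : Continuous g) : Continuous (cancelMoments θ c r g) :=
  hg.sub (continuous_finsetSum _ fun α _ =>
    (continuous_coordMonomial_comp c r α).mul continuous_const)

namespace IsDualSystem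

theorem measurable_momentPart (hθ : IsDualSystem B θ) (c : Euc n) (r : ℝ) (h : Euc n → ℝ) :
    Measurable (momentPart θ c r h) :=
  Finset.measurable_sum _ fun α _ => ((hθ.measurable α).comp (by fun_prop)).const_mul _

theorem momentPart_eq_zero (hθ : IsDualSystem B θ) (hr : 0 < r) (h : Euc n → ℝ)
    (hx : x ∉ cube c r) : momentPart θ c r h x = 0 :=
  Finset.sum_eq_zero fun α _ => by
    rw [hθ.eq_zero α _ (by rwa [inv_smul_sub_mem_cube_iff hr]), mul_zero]

theorem abs_momentPart_le (hθ : IsDualSystem B θ) {h : Euc n → ℝ} {m : ℝ}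
    (hm : ∀ α : MultiIdx n N, |scaledMoment c r h α| ≤ m) (x : Euc n) :
    |momentPart θ c r h x| ≤ Fintype.card (MultiIdx n N) * (m * B) := by
  calc |momentPart θ c r h x| ≤ ∑ α, |scaledMoment c r h α * θ α (r⁻¹ • (x - c))| :=
        Finset.abs_sum_le_sum_abs _ _
    _ ≤ ∑ _α : MultiIdx n N, m * B := by
        gcongr with α
        rw [abs_mul]
        exact mul_le_mul (hm α) (hθ.abs_le _ _) (abs_nonneg _) ((abs_nonneg _).trans (hm α))
    _ = Fintype.card (MultiIdx n N) * (m * B) := by simp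

theorem integrable_comp_mul (hθ : IsDualSystem B θ) (c : Euc n) (hr : 0 < r) {g : Euc n → ℝ}
    (hg : Continuous g) (α : MultiIdx n N) : Integrable fun x => θ α (r⁻¹ • (x - c)) * g x :=
  integrable_mul_continuous (hθ.integrable_comp c hr α) (fun _ => hθ.comp_eq_zero hr α) hg

theorem integrable_momentPart_mul (hθ : IsDualSystem B θ) (hr : 0 < r) (h : Euc n → ℝ)
    {g : Euc n → ℝ} (hg : Continuous g) : Integrable fun x => momentPart θ c r h x * g x := by
  simp only [momentPart, Finset.sum_mul, mul_assoc]
  exact integrable_finsetSum _ fun α _ => (hθ.integrable_comp_mul c hr hg α).const_mul _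

theorem integral_momentPart_mul (hθ : IsDualSystem B θ) (hr : 0 < r) (h : Euc n → ℝ)
    {g : Euc n → ℝ} (hg : Continuous g) :
    ∫ x, momentPart θ c r h x * g x
      = ∑ α, (∫ y, h y * coordMonomial α (r⁻¹ • (y - c))) * dualCoeff θ c r g α := by
  simp only [momentPart, Finset.sum_mul, mul_assoc]
  rw [integral_finsetSum _ fun α _ => (hθ.integrable_comp_mul c hr hg α).const_mul _]
  refine Finset.sum_congr rfl fun α _ => ?_
  rw [integral_const_mul, integral_dual_comp_mul θ c hr, scaledMoment]
  field_simp

theorem integral_mul_cancelMoments (hθ : IsDualSystem B θ) (hr : 0 < r) {h g : Euc n → ℝ} {R : ℝ}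
    (hh : Integrable h) (h_eq_zero : ∀ x, R < dist x c → h x = 0) (hg : Continuous g) :
    ∫ y, h y * cancelMoments θ c r g y
      = (∫ x, h x * g x) - ∫ x, momentPart θ c r h x * g x := by
  have h_int (α : MultiIdx n N) :
      Integrable fun y => h y * coordMonomial α (r⁻¹ • (y - c)) * dualCoeff θ c r g α :=
    (integrable_mul_continuous hh h_eq_zero (continuous_coordMonomial_comp c r α)).mul_const _
  simp only [cancelMoments, mul_sub, Finset.mul_sum, ← mul_assoc]
  rw [integral_sub (integrable_mul_continuous hh h_eq_zero hg)
    (integrable_finsetSum _ fun α _ => h_int α), integral_finsetSum _ fun α _ => h_int α,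
    hθ.integral_momentPart_mul hr h hg]
  simp only [integral_mul_const]

theorem abs_dualCoeff_le (hθ : IsDualSystem B θ) (hr : 0 < r) {g : Euc n → ℝ} {S : ℝ}
    (hg : ∀ x, dist x c ≤ n * r → |g x| ≤ S) (α : MultiIdx n N) :
    |dualCoeff θ c r g α| ≤ B * S * volume.real (Metric.closedBall (0 : Euc n) n) := by
  rw [dualCoeff, ← setIntegral_eq_integral_of_forall_compl_eq_zero
    (s := Metric.closedBall (0 : Euc n) n) fun u hu => by
      rw [hθ.eq_zero α u fun h => hu (by simpa using dist_le_of_mem_cube zero_le_one h), zero_mul]]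
  refine norm_setIntegral_le_of_norm_le_const (E := ℝ)
    (isCompact_closedBall (0 : Euc n) n).measure_lt_top
    fun u hu => ?_
  rw [norm_mul]
  refine mul_le_mul (hθ.abs_le α u) (hg _ ?_) (abs_nonneg _) hθ.nonneg
  rw [dist_eq_norm, add_sub_cancel_left, norm_smul, Real.norm_of_nonneg hr.le, mul_comm]
  exact mul_le_mul_of_nonneg_right (mem_closedBall_zero_iff.1 hu) hr.le

theorem exists_abs_cancelMoments_le (hθ : IsDualSystem B θ) {Λ : ℝ} (hΛ : 1 ≤ Λ) :
    ∃ C, 0 ≤ C ∧ ∀ {c : Euc n} {r : ℝ}, 0 < r → ∀ {g : Euc n → ℝ} {S : ℝ},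
      (∀ x, dist x c ≤ (Λ + n) * r → |g x| ≤ S) →
        ∀ y, dist y c ≤ Λ * r → |cancelMoments θ c r g y| ≤ C * S := by
  set ω := volume.real (Metric.closedBall (0 : Euc n) n)
  have hB := hθ.nonneg
  refine ⟨1 + Fintype.card (MultiIdx n N) * (Λ ^ (N * n) * (B * ω)), by positivity,
    fun {c r} hr {g S} hg y hy => ?_⟩
  have : 0 ≤ S := (abs_nonneg _).trans (hg c (by rw [dist_self]; positivity))
  have h_term (α : MultiIdx n N) :
      |coordMonomial α (r⁻¹ • (y - c)) * dualCoeff θ c r g α| ≤ Λ ^ (N * n) * (B * S * ω) := by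
    rw [abs_mul]
    refine mul_le_mul (abs_coordMonomial_le α hΛ ?_) (hθ.abs_dualCoeff_le hr
      (fun x hx => hg x (hx.trans ?_)) α) (abs_nonneg _) (by positivity)
    · rwa [norm_inv_smul_sub hr, div_le_iff₀ hr]
    · gcongr
      linarith
  calc |cancelMoments θ c r g y|
      ≤ |g y| + |∑ α, coordMonomial α (r⁻¹ • (y - c)) * dualCoeff θ c r g α| := abs_sub _ _
    _ ≤ S + ∑ _α : MultiIdx n N, Λ ^ (N * n) * (B * S * ω) := by
        refine add_le_add (hg y (hy.trans ?_)) ((Finset.abs_sum_le_sum_abs _ _).trans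
          (Finset.sum_le_sum fun α _ => h_term α))
        gcongr
        simp
    _ = (1 + Fintype.card (MultiIdx n N) * (Λ ^ (N * n) * (B * ω))) * S := by
        rw [Finset.sum_const, Finset.card_univ, nsmul_eq_mul]
        ring

theorem dualCoeff_eq (hθ : IsDualSystem B θ) {g : Euc n → ℝ} {a : MultiIdx n N → ℝ}
    (ha : ∀ u, g (c + r • u) = ∑ γ, a γ * coordMonomial γ u) (α : MultiIdx n N) :
    dualCoeff θ c r g α = a α := by
  have h_int (γ : MultiIdx n N) : Integrable fun u => a γ * (θ α u * coordMonomial γ u) := by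
    have := hθ.integrable_comp_mul 0 one_pos (contDiff_coordMonomial γ).continuous α
    simpa using this.const_mul (a γ)
  simp only [dualCoeff, ha, Finset.mul_sum, mul_left_comm (θ α _)]
  rw [integral_finsetSum _ fun γ _ => h_int γ]
  simp [integral_const_mul, hθ.integral_mul]

theorem cancelMoments_eq_zero (hθ : IsDualSystem B θ) (hr : r ≠ 0) {g : Euc n → ℝ}
    {a : MultiIdx n N → ℝ} (ha : ∀ u, g (c + r • u) = ∑ γ, a γ * coordMonomial γ u) (y : Euc n) :
    cancelMoments θ c r g y = 0 := by
  have h := ha (r⁻¹ • (y - c))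
  rw [smul_inv_smul₀ hr, add_sub_cancel] at h
  simp only [cancelMoments, hθ.dualCoeff_eq ha, h, mul_comm, sub_self]

end IsDualSystem

theorem exists_eq_sum_coordMonomial {β : Fin n → ℕ} (hβ : ∀ i, β i ≤ N) (c : Euc n) (r : ℝ) :
    ∃ a : MultiIdx n N → ℝ, ∀ u : Euc n,
      ∏ i, (c + r • u) i ^ β i = ∑ γ, a γ * coordMonomial γ u := by
  refine ⟨fun γ => ∏ i, ((β i).choose (γ i) * r ^ (γ i : ℕ) * c i ^ (β i - γ i)), fun u => ?_⟩
  have h_binom (i : Fin n) : (c + r • u) i ^ β i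
      = ∑ m : Fin (N + 1), ((β i).choose m * r ^ (m : ℕ) * c i ^ (β i - m)) * u i ^ (m : ℕ) := by
    rw [Fin.sum_univ_eq_sum_range
      (fun m => ((β i).choose m * r ^ m * c i ^ (β i - m)) * u i ^ m) (N + 1),
      ← Finset.sum_subset (Finset.range_mono (Nat.succ_le_succ (hβ i)))]
    · simp only [PiLp.add_apply, PiLp.smul_apply, smul_eq_mul]
      rw [add_comm, add_pow]
      exact Finset.sum_congr rfl fun m _ => by rw [mul_pow]; ring
    · intro m _ hm
      rw [Nat.choose_eq_zero_of_lt (by simpa using hm)]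
      simp
  simp only [h_binom, Finset.prod_univ_sum, Fintype.piFinset_univ, coordMonomial,
    ← Finset.prod_mul_distrib]

end CancelMoments

/-! ### Bounds off the tangential level sets -/

section AeBound

variable {n : ℕ} {ψ f : Euc n → ℝ}

theorem exists_abs_dilate_le (hψ : Continuous ψ) (hψc : HasCompactSupport ψ) {R : ℝ} (hR : 0 < R) :
    ∃ K, ∀ (x : Euc n) (t : ℝ), 0 < t → ∀ w,
      |dilate ψ t w| ≤ K / volume.real (Metric.closedBall x (t * R)) := by
  obtain ⟨C, hC⟩ := hψc.exists_bound_of_continuous hψ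
  have : 0 ≤ C := (norm_nonneg _).trans (hC 0)
  set ω := volume.real (Metric.ball (0 : Euc n) 1)
  have : 0 < ω :=
    toReal_pos (Metric.measure_ball_pos _ _ one_pos).ne' Metric.isBounded_ball.measure_lt_top.ne
  refine ⟨C * (R ^ n * ω), fun x t ht w => ?_⟩
  rw [Measure.addHaar_real_closedBall _ _ (by positivity), finrank_euclideanSpace_fin, mul_pow]
  rw [dilate, abs_mul, abs_of_pos (a := (t ^ n)⁻¹) (by positivity)]
  calc (t ^ n)⁻¹ * |ψ (t⁻¹ • w)| ≤ (t ^ n)⁻¹ * C := by gcongr; exact hC _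
    _ = C * (R ^ n * ω) / (t ^ n * R ^ n * ω) := by field_simp

theorem ae_tendsto_convAt (hψ : Continuous ψ) (hψc : HasCompactSupport ψ) (hψ0 : ∫ x, ψ x ≠ 0)
    (hf : LocallyIntegrable f) :
    ∀ᵐ x, Filter.Tendsto (fun t => convAt ψ f t x) (nhdsWithin 0 (Ioi 0))
      (nhds (f x * ∫ y, ψ y)) := by
  obtain ⟨R₀, hR₀, hψR₀⟩ := exists_isTestFun_of_hasCompactSupport hψ hψc
  have hR : 0 < R₀ + 1 := by positivity
  have hψR := hψR₀.mono (le_add_of_nonneg_right zero_le_one)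
  obtain ⟨K, hK⟩ := exists_abs_dilate_le hψ hψc hR
  set I := ∫ y, ψ y
  filter_upwards [IsUnifLocDoublingMeasure.ae_tendsto_average_norm_sub volume hf 1] with x hx
  have h_pos : ∀ᶠ t : ℝ in nhdsWithin 0 (Ioi 0), 0 < t := self_mem_nhdsWithin
  have h_radius : Filter.Tendsto (fun t => t * (R₀ + 1)) (nhdsWithin 0 (Ioi 0))
      (nhdsWithin 0 (Ioi 0)) := by
    refine tendsto_nhdsWithin_iff.2 ⟨tendsto_nhdsWithin_of_tendsto_nhds ?_, ?_⟩
    · exact Continuous.tendsto' (by fun_prop) _ _ (zero_mul _)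
    · exact h_pos.mono fun t ht => mul_pos ht hR
  have h_lim := tendsto_integral_smul_of_tendsto_average_norm_sub (μ := volume)
    (g := fun t z => I⁻¹ * dilate ψ t (x - z)) (|I⁻¹| * K)
    (hx (fun _ => x) (fun t => t * (R₀ + 1)) h_radius
      (h_pos.mono fun t ht => Metric.mem_closedBall_self (by positivity)))
    (.of_forall fun t => hf.integrableOn_isCompact (isCompact_closedBall _ _))
    (tendsto_const_nhds.congr' (h_pos.mono fun t ht => ?_)) (h_pos.mono fun t ht z hz => ?_)
    (h_pos.mono fun t ht z => ?_)
  · refine ((mul_comm I (f x)) ▸ h_lim.const_mul I).congr fun t => ?_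
    simp only [smul_eq_mul, mul_assoc, integral_const_mul]
    rw [mul_inv_cancel_left₀ hψ0, convAt]
    simp only [dilate, mul_comm]
  · beta_reduce
    rw [integral_const_mul, integral_sub_left_eq_self (dilate ψ t) volume x, integral_dilate ψ ht,
      inv_mul_cancel₀ hψ0]
  · refine Metric.mem_closedBall.2 (not_lt.1 fun h_far => right_ne_zero_of_mul hz ?_)
    refine (isTestFun_dilate hψR ht).eq_zero _ ?_
    rwa [dist_zero_right, ← dist_eq_norm, dist_comm]
  · rw [abs_mul, mul_div_assoc]
    exact mul_le_mul_of_nonneg_left (hK x t ht _) (abs_nonneg _)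

theorem ae_abs_le_of_notMem_tangentialSet (hψ : Continuous ψ) (hψc : HasCompactSupport ψ)
    (hψ0 : ∫ x, ψ x ≠ 0) (hf : LocallyIntegrable f) (M : ℕ) :
    ∀ᵐ x, ∀ κ : ℤ, x ∉ tangentialSet ψ f M κ → |f x| ≤ |∫ y, ψ y|⁻¹ * 2 ^ κ := by
  filter_upwards [ae_tendsto_convAt hψ hψc hψ0 hf] with x hx κ hκ
  rw [le_inv_mul_iff₀' (abs_pos.2 hψ0), ← abs_mul]
  refine le_of_tendsto hx.abs (Filter.mem_of_superset self_mem_nhdsWithin fun t ht => ?_)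
  simpa using abs_convAt_le_of_notMem_tangentialSet hκ 0 ht (by simpa [dist_self] using ht)

end AeBound

/-! ### Whitney covers and uniform moment bounds -/

section WhitneyCover

/-- The Whitney decomposition of an open set `Ω` at a scale fixed by the dimension. The factor
`1 / (100 * n)` makes the cubes `cube (c j) (20 * r j)` stay inside `Ω`. -/
structure WhitneyCover (n : ℕ) where
  Ω : Set (Euc n)
  J : Set ℕ
  c : ℕ → Euc n
  r : ℕ → ℝ
  isWhitneyFamily : IsWhitneyFamily (1 / (100 * n)) Ω J c r

theorem exists_whitneyCover {n : ℕ} [NeZero n] {Ω : Set (Euc n)} (hΩ : IsOpen Ω)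
    (hΩ_fin : volume Ω ≠ ∞) : ∃ D : WhitneyCover n, D.Ω = Ω := by
  have hn : (1 : ℝ) ≤ n := Nat.one_le_cast.2 NeZero.one_le
  obtain ⟨J, c, r, h⟩ := exists_isWhitneyFamily volume (ε := 1 / (100 * n)) (by positivity)
    (one_div_le_one_div_of_le (by norm_num) (by linarith)) hΩ hΩ_fin
  exact ⟨⟨Ω, J, c, r, h⟩, rfl⟩

namespace WhitneyCover

variable {n N : ℕ} (D : WhitneyCover n) {j : ℕ} {x : Euc n}

/-- The partition of unity subordinate to a Whitney cover. -/
def weight (j : ℕ) (x : Euc n) : ℝ := whitneyWeight D.J D.c D.r j x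

theorem radius_pos (hj : j ∈ D.J) : 0 < D.r j := D.isWhitneyFamily.radius_pos hj

theorem of_weight_ne_zero (hx : D.weight j x ≠ 0) : j ∈ D.J ∧ dist x (D.c j) ≤ 6 * D.r j :=
  D.isWhitneyFamily.of_whitneyBump_ne_zero (left_ne_zero_of_mul hx)

theorem weight_eq_zero_of_notMem_index (hj : j ∉ D.J) (x : Euc n) : D.weight j x = 0 :=
  of_not_not fun h => hj (D.of_weight_ne_zero h).1

theorem weight_eq_zero_of_lt_dist (hx : 6 * D.r j < dist x (D.c j)) : D.weight j x = 0 :=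
  of_not_not fun h => hx.not_ge (D.of_weight_ne_zero h).2

theorem weight_eq_zero_of_notMem (hx : x ∉ D.Ω) (j : ℕ) : D.weight j x = 0 := by
  by_contra h
  obtain ⟨hj, hd⟩ := D.of_weight_ne_zero h
  exact hx (D.isWhitneyFamily.mem_of_dist_lt hj (by linarith [D.radius_pos hj]))

theorem hasSum_weight (x : Euc n) : HasSum (fun j => D.weight j x) (D.Ω.indicator 1 x) := by
  by_cases hx : x ∈ D.Ω
  · rw [indicator_of_mem hx]
    exact D.isWhitneyFamily.hasSum_whitneyWeight hx
  · simpa only [indicator_of_notMem hx, D.weight_eq_zero_of_notMem hx] using hasSum_zero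

theorem weight_nonneg (j : ℕ) (x : Euc n) : 0 ≤ D.weight j x := whitneyWeight_nonneg j x

theorem sum_weight_le (F : Finset ℕ) (x : Euc n) :
    ∑ j ∈ F, D.weight j x ≤ D.Ω.indicator 1 x :=
  sum_le_hasSum F (fun j _ => D.weight_nonneg j x) (D.hasSum_weight x)

theorem abs_weight_le_one (j : ℕ) (x : Euc n) : |D.weight j x| ≤ 1 := by
  rw [abs_of_nonneg (D.weight_nonneg j x)]
  calc D.weight j x ≤ D.Ω.indicator 1 x := by simpa using D.sum_weight_le {j} x
    _ ≤ 1 := indicator_le_self' (fun _ _ => zero_le_one) x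

theorem exists_smoothAtScale_weight (n L : ℕ) : ∃ K, 0 ≤ K ∧ ∀ (D : WhitneyCover n), ∀ j ∈ D.J,
    SmoothAtScale L K (D.r j) (D.weight j) := by
  obtain ⟨K, hK, h⟩ := exists_smoothAtScale_whitneyWeight (Euc n) L
  exact ⟨K, hK, fun D => h D.isWhitneyFamily⟩

theorem continuous_weight (j : ℕ) : Continuous (D.weight j) := by
  by_cases hj : j ∈ D.J
  · obtain ⟨K, -, hK⟩ := exists_smoothAtScale_weight n 0
    exact (hK D j hj).contDiff.continuous
  · exact continuous_zero.congr fun x => (D.weight_eq_zero_of_notMem_index hj x).symm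

/-- All rescaled moments of `f * χ`, localised by the partition of unity, are at most `V`. -/
def HasMomentBound (N : ℕ) (f χ : Euc n → ℝ) (V : ℝ) : Prop :=
  ∀ (j : ℕ) (α : MultiIdx n N),
    |scaledMoment (D.c j) (D.r j) (fun x => f x * (D.weight j x * χ x)) α| ≤ V

theorem exists_smoothAtScale_moment (N L : ℕ) : ∃ K, 0 ≤ K ∧ ∀ (D : WhitneyCover n), ∀ j ∈ D.J,
    ∀ α : MultiIdx n N, ∃ Φ : Euc n → ℝ, SmoothAtScale L K (D.r j) Φ ∧
      ∀ x, D.weight j x * Φ x = D.weight j x * coordMonomial α ((D.r j)⁻¹ • (x - D.c j)) := by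
  let Φ : ContDiffBump (0 : Euc n) := ⟨6, 7, by norm_num, by norm_num⟩
  choose K hK using fun α : MultiIdx n N => SmoothAtScale.exists_comp_smul_sub
    (Φ.contDiff.mul (contDiff_coordMonomial α)) Φ.hasCompactSupport.mul_right L
  refine ⟨∑ α, |K α|, by positivity, fun D j hj α => ⟨_, (hK α (D.c j) (D.r j)
    (D.radius_pos hj)).mono (D.radius_pos hj) ((le_abs_self _).trans
      (Finset.single_le_sum (fun β _ => abs_nonneg (K β)) (Finset.mem_univ α))), fun x => ?_⟩⟩
  by_cases hx : D.weight j x = 0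
  · simp only [hx, zero_mul]
  · have h_one : Φ ((D.r j)⁻¹ • (x - D.c j)) = 1 := by
      refine Φ.one_of_mem_closedBall ?_
      rw [mem_closedBall_zero_iff, norm_inv_smul_sub (D.radius_pos hj),
        div_le_iff₀ (D.radius_pos hj)]
      exact (D.of_weight_ne_zero hx).2
    rw [h_one, one_mul]

theorem exists_mem_compl_dist_eq [NeZero n] (hj : j ∈ D.J) :
    ∃ x₀ ∉ D.Ω, dist (D.c j) x₀ = 100 * n * D.r j := by
  have hn : (n : ℝ) ≠ 0 := NeZero.ne _
  obtain ⟨x₀, hx₀, hd⟩ := D.isWhitneyFamily.isOpen.isClosed_compl.exists_infDist_eq_dist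
    D.isWhitneyFamily.compl_nonempty (D.c j)
  refine ⟨x₀, hx₀, ?_⟩
  rw [D.isWhitneyFamily.radius_eq j hj, hd]
  field_simp

variable {ψ : Euc n → ℝ}

theorem exists_abs_scaledMoment_le [NeZero n] (hψ : Continuous ψ) (hψc : HasCompactSupport ψ)
    (hψ0 : ∫ x, ψ x ≠ 0) (M N : ℕ) : ∃ (L : ℕ) (A : ℝ), 0 ≤ A ∧
      ∀ {f : Euc n → ℝ}, LocallyIntegrable f → ∀ {κ : ℤ} {D : WhitneyCover n},
      D.Ω = tangentialSet ψ f M κ → ∀ j ∈ D.J, ∀ {K : ℝ} {χ : Euc n → ℝ},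
      SmoothAtScale L K (D.r j) χ → ∀ α : MultiIdx n N,
        |scaledMoment (D.c j) (D.r j) (fun x => f x * (D.weight j x * χ x)) α|
          ≤ A * K * 2 ^ κ := by
  obtain ⟨L, hL⟩ := exists_abs_integral_mul_le_of_notMem_tangentialSet hψ hψc hψ0 M
  obtain ⟨C, hC0, hC⟩ := hL (100 * n + 6) (by positivity)
  obtain ⟨K₁, hK₁, h_weight⟩ := exists_smoothAtScale_weight n L
  obtain ⟨K₂, hK₂, h_moment⟩ := exists_smoothAtScale_moment (n := n) N L
  refine ⟨L, C * (2 ^ L * (2 ^ L * K₁) * K₂), by positivity,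
    fun {f} hf {κ D} hD j hj {K χ} hχ α => ?_⟩
  have hr := D.radius_pos hj
  obtain ⟨x₀, hx₀, hd⟩ := D.exists_mem_compl_dist_eq hj
  obtain ⟨Φ, hΦ, h_eq⟩ := h_moment D j hj α
  have h_smooth := ((h_weight D j hj).mul hr hχ).mul hr hΦ
  have h_test : IsTestFun x₀ ((100 * n + 6) * D.r j) fun x => D.weight j x * χ x * Φ x := by
    refine ⟨h_smooth.contDiff.continuous, fun x hx => ?_⟩
    have := dist_triangle x (D.c j) x₀
    rw [D.weight_eq_zero_of_lt_dist (by linarith), zero_mul, zero_mul]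
  have h_int : (fun y => f y * (D.weight j y * χ y) * coordMonomial α ((D.r j)⁻¹ • (y - D.c j)))
      = fun y => f y * (D.weight j y * χ y * Φ y) := by
    ext y
    rw [mul_assoc, mul_right_comm, ← h_eq y, mul_right_comm]
  rw [scaledMoment, h_int, abs_mul, abs_of_pos (by positivity), inv_mul_le_iff₀ (by positivity)]
  refine (hC hf (hD ▸ hx₀) hr h_test h_smooth).trans_eq ?_
  ring

theorem hasMomentBound_of_forall_mem {f χ : Euc n → ℝ} {V : ℝ} (hV : 0 ≤ V)
    (h : ∀ j ∈ D.J, (∃ x, D.weight j x * χ x ≠ 0) → ∀ α : MultiIdx n N,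
      |scaledMoment (D.c j) (D.r j) (fun x => f x * (D.weight j x * χ x)) α| ≤ V) :
    D.HasMomentBound N f χ V := by
  intro j α
  by_cases hx : ∃ x, D.weight j x * χ x ≠ 0
  · obtain ⟨x, hx'⟩ := hx
    exact h j (D.of_weight_ne_zero (left_ne_zero_of_mul hx')).1 ⟨x, hx'⟩ α
  · simp only [not_exists, not_not] at hx
    simpa [scaledMoment, hx] using hV

theorem radius_le_two_mul_of_weight_ne_zero {D D' : WhitneyCover n} (h_sub : D.Ω ⊆ D'.Ω)
    {i : ℕ} (hj : D.weight j x ≠ 0) (hi : D'.weight i x ≠ 0) : D.r j ≤ 2 * D'.r i := by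
  obtain ⟨hj, hdj⟩ := D.of_weight_ne_zero hj
  obtain ⟨hi, hdi⟩ := D'.of_weight_ne_zero hi
  refine D.isWhitneyFamily.radius_le_two_mul D'.isWhitneyFamily h_sub hj hi ?_
  linarith [dist_triangle_left (D.c j) (D'.c i) x]

theorem exists_hasMomentBound [NeZero n] (hψ : Continuous ψ) (hψc : HasCompactSupport ψ)
    (hψ0 : ∫ x, ψ x ≠ 0) (M N : ℕ) : ∃ A : ℝ, 0 ≤ A ∧
      ∀ {f : Euc n → ℝ}, LocallyIntegrable f → ∀ {κ : ℤ} {D : WhitneyCover n},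
      D.Ω = tangentialSet ψ f M κ →
        D.HasMomentBound N f (fun _ => 1) (A * 2 ^ κ) ∧
        ∀ {D' : WhitneyCover n}, D.Ω ⊆ D'.Ω → ∀ i,
          D.HasMomentBound N f (D'.weight i) (A * 2 ^ κ) := by
  obtain ⟨L, A, hA, h⟩ := exists_abs_scaledMoment_le hψ hψc hψ0 M N
  obtain ⟨K, hK, h_weight⟩ := exists_smoothAtScale_weight n L
  refine ⟨A * (1 + 2 ^ L * K), by positivity, fun {f} hf {κ D} hD => ⟨?_, fun {D'} h_sub i => ?_⟩⟩
  · refine D.hasMomentBound_of_forall_mem (by positivity) fun j hj _ α => ?_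
    refine (h hf hD j hj (SmoothAtScale.const 1 (D.radius_pos hj)) α).trans ?_
    gcongr
    rw [abs_one]
    exact le_add_of_nonneg_right (by positivity)
  · refine D.hasMomentBound_of_forall_mem (by positivity) fun j hj ⟨x, hx⟩ α => ?_
    have hi := right_ne_zero_of_mul hx
    have hi' := (D'.of_weight_ne_zero hi).1
    refine (h hf hD j hj ((h_weight D' i hi').of_le_two_mul (D'.radius_pos hi') (D.radius_pos hj)
      (radius_le_two_mul_of_weight_ne_zero h_sub (left_ne_zero_of_mul hx) hi)) α).trans ?_
    gcongr
    exact le_add_of_nonneg_left zero_le_one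

end WhitneyCover

end WhitneyCover

/-! ### Interchanging sums and integrals -/

section SumIntegral

theorem abs_tsum_le_of_sum_abs_le {ι : Type*} {t : ι → ℝ} {C : ℝ}
    (h : ∀ s : Finset ι, ∑ i ∈ s, |t i| ≤ C) : |∑' i, t i| ≤ C := by
  have h_sum : Summable fun i => ‖t i‖ := summable_of_sum_le (fun _ => norm_nonneg _) h
  exact (norm_tsum_le_tsum_norm h_sum).trans (h_sum.tsum_le_of_sum_le h)

variable {X ι : Type*} [MeasurableSpace X] {μ : Measure X} {F : ι → X → ℝ} {H : X → ℝ}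

theorem measurable_tsum [Countable ι] (hF : ∀ i, Measurable (F i))
    (h_sum : ∀ x, Summable fun i => F i x) : Measurable fun x => ∑' i, F i x :=
  measurable_of_tendsto_metrizable' (f := fun (s : Finset ι) x => ∑ i ∈ s, F i x) Filter.atTop
    (fun s => Finset.measurable_sum s fun i _ => hF i)
    (tendsto_pi_nhds.2 fun x => (h_sum x).hasSum)

theorem sum_abs_integral_le (hF : ∀ i, Integrable (F i) μ) (hH : Integrable H μ)
    (h_le : ∀ (s : Finset ι) x, ∑ i ∈ s, |F i x| ≤ H x) (s : Finset ι) :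
    ∑ i ∈ s, |∫ x, F i x ∂μ| ≤ ∫ x, H x ∂μ :=
  calc ∑ i ∈ s, |∫ x, F i x ∂μ| ≤ ∑ i ∈ s, ∫ x, |F i x| ∂μ :=
        Finset.sum_le_sum fun _ _ => abs_integral_le_integral_abs
    _ = ∫ x, ∑ i ∈ s, |F i x| ∂μ := (integral_finsetSum _ fun i _ => (hF i).abs).symm
    _ ≤ ∫ x, H x ∂μ := integral_mono (integrable_finsetSum _ fun i _ => (hF i).abs) hH (h_le s)

theorem hasSum_integral_of_sum_abs_le [Countable ι] (hF : ∀ i, Integrable (F i) μ)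
    (hH : Integrable H μ) (h_le : ∀ (s : Finset ι) x, ∑ i ∈ s, |F i x| ≤ H x) :
    HasSum (fun i => ∫ x, F i x ∂μ) (∫ x, ∑' i, F i x ∂μ) := by
  refine hasSum_integral_of_summable_integral_norm hF (summable_of_sum_le (c := ∫ x, H x ∂μ)
    (fun i => integral_nonneg fun _ => norm_nonneg _) fun s => ?_)
  simpa only [Real.norm_eq_abs, abs_abs, abs_of_nonneg (integral_nonneg fun _ => abs_nonneg _)]
    using sum_abs_integral_le (fun i => (hF i).abs) hH (by simpa only [abs_abs] using h_le) s

end SumIntegral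

/-! ### Correcting the moments on a Whitney cover -/

section Correction

theorem measurableSet_cube {n : ℕ} (c : Euc n) (r : ℝ) : MeasurableSet (cube c r) := by
  simp only [cube, ofPred_forall]
  exact .iInter fun i => (isClosed_le (by fun_prop) continuous_const).measurableSet

namespace WhitneyCover

variable {n N : ℕ} (D : WhitneyCover n) {j : ℕ} {x : Euc n} {f χ g : Euc n → ℝ} {B V : ℝ}
  {θ : MultiIdx n N → Euc n → ℝ}

theorem card_le {Λ : ℝ} (hΛ : 0 ≤ Λ) (hΛn : Λ ≤ 20 * n) (x : Euc n) {F : Finset ℕ}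
    (hF : ∀ j ∈ F, j ∈ D.J ∧ dist x (D.c j) ≤ Λ * D.r j) : F.card ≤ (3 * (Λ + 1)) ^ n := by
  have h_eps : Λ * (1 / (100 * n)) ≤ 1 / 2 := by
    calc Λ * (1 / (100 * n)) ≤ 20 * n * (1 / (100 * n)) := by gcongr
      _ = n / n / 5 := by ring
      _ ≤ 1 / 2 := by linarith [div_self_le_one (n : ℝ)]
  simpa only [finrank_euclideanSpace_fin] using D.isWhitneyFamily.card_le hΛ h_eps x hF

theorem sum_abs_le_of_abs_le {Λ Q : ℝ} (hΛ : 0 ≤ Λ) (hΛn : Λ ≤ 20 * n) {t : ℕ → ℝ}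
    (ht : ∀ j, t j ≠ 0 → j ∈ D.J ∧ dist x (D.c j) ≤ Λ * D.r j) (hQ : ∀ j, |t j| ≤ Q)
    (F : Finset ℕ) : ∑ j ∈ F, |t j| ≤ (3 * (Λ + 1)) ^ n * Q := by
  have hQ0 : 0 ≤ Q := (abs_nonneg _).trans (hQ 0)
  rw [← Finset.sum_filter_ne_zero]
  calc ∑ j ∈ F with |t j| ≠ 0, |t j| ≤ ∑ _j ∈ F with |t _j| ≠ 0, Q :=
        Finset.sum_le_sum fun j _ => hQ j
    _ = (F.filter fun j => |t j| ≠ 0).card * Q := by rw [Finset.sum_const, nsmul_eq_mul]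
    _ ≤ (3 * (Λ + 1)) ^ n * Q := by
        gcongr
        exact D.card_le hΛ hΛn x fun j hj => ht j (abs_ne_zero.1 (Finset.mem_filter.1 hj).2)

theorem integrable_mul_weight_mul (hf : LocallyIntegrable f) (hχ : Continuous χ) (j : ℕ) :
    Integrable fun x => f x * (D.weight j x * χ x) :=
  IsTestFun.integrable_mul (x₀ := D.c j) (a := 6 * D.r j)
    ⟨(D.continuous_weight j).mul hχ, fun x hx => by
      rw [D.weight_eq_zero_of_lt_dist hx, zero_mul]⟩ hf

theorem sum_abs_mul_weight_le (h : Euc n → ℝ) (F : Finset ℕ) (x : Euc n) :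
    ∑ j ∈ F, |h x * D.weight j x| ≤ |D.Ω.indicator h x| := by
  simp only [abs_mul, abs_of_nonneg (D.weight_nonneg _ x), ← Finset.mul_sum]
  refine (mul_le_mul_of_nonneg_left (D.sum_weight_le F x) (abs_nonneg _)).trans_eq ?_
  by_cases hx : x ∈ D.Ω <;> simp [hx]

theorem hasSum_integral_mul_weight {h : Euc n → ℝ} (hh : Integrable h) :
    HasSum (fun j => ∫ x, h x * D.weight j x) (∫ x in D.Ω, h x) := by
  have hΩ := D.isWhitneyFamily.isOpen.measurableSet
  rw [← integral_indicator hΩ]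
  have h_tsum (x : Euc n) : ∑' j, h x * D.weight j x = D.Ω.indicator h x := by
    rw [tsum_mul_left, (D.hasSum_weight x).tsum_eq, ← indicator_mul_right]
    simp only [Pi.one_apply, mul_one]
  simpa only [h_tsum] using hasSum_integral_of_sum_abs_le (fun j => hh.mul_bdd (c := 1)
    (D.continuous_weight j).aestronglyMeasurable (ae_of_all _ (D.abs_weight_le_one j)))
    (hh.indicator hΩ).abs (D.sum_abs_mul_weight_le h)

/-- The function supported in the `l`-th Whitney cube with the same moments as the localisation of
`f * χ` by the `l`-th weight. -/
def correction (θ : MultiIdx n N → Euc n → ℝ) (f χ : Euc n → ℝ) (l : ℕ) (x : Euc n) : ℝ :=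
  momentPart θ (D.c l) (D.r l) (fun y => f y * (D.weight l y * χ y)) x

theorem correction_eq_zero {l : ℕ} (h : ∀ y, D.weight l y * χ y = 0) (x : Euc n) :
    D.correction θ f χ l x = 0 := by
  simp only [correction, h, mul_zero, momentPart_zero]

theorem correction_eq_zero_of_notMem_index {l : ℕ} (hl : l ∉ D.J) (x : Euc n) :
    D.correction θ f χ l x = 0 :=
  D.correction_eq_zero (fun y => by rw [D.weight_eq_zero_of_notMem_index hl, zero_mul]) x

theorem mem_of_correction_ne_zero (hθ : IsDualSystem B θ) {l : ℕ}
    (hx : D.correction θ f χ l x ≠ 0) : l ∈ D.J ∧ x ∈ cube (D.c l) (D.r l) := by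
  have hl : l ∈ D.J := of_not_not fun hl => hx (D.correction_eq_zero_of_notMem_index hl x)
  exact ⟨hl, of_not_not fun h => hx (hθ.momentPart_eq_zero (D.radius_pos hl) _ h)⟩

theorem abs_correction_le (hθ : IsDualSystem B θ) (hV : D.HasMomentBound N f χ V) (l : ℕ)
    (x : Euc n) : |D.correction θ f χ l x| ≤ Fintype.card (MultiIdx n N) * (V * B) :=
  hθ.abs_momentPart_le (hV l) x

theorem sum_abs_correction_le (hθ : IsDualSystem B θ) (hV : D.HasMomentBound N f χ V)
    (F : Finset ℕ) (x : Euc n) : ∑ l ∈ F, |D.correction θ f χ l x|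
      ≤ (3 * ((n : ℝ) + 1)) ^ n * (Fintype.card (MultiIdx n N) * (V * B)) := by
  refine D.sum_abs_le_of_abs_le (x := x) n.cast_nonneg (by linarith [n.cast_nonneg (α := ℝ)])
    (fun l hl => ?_) (fun l => D.abs_correction_le hθ hV l x) F
  obtain ⟨hl, hx⟩ := D.mem_of_correction_ne_zero hθ hl
  exact ⟨hl, dist_le_of_mem_cube (D.radius_pos hl).le hx⟩

theorem summable_correction (hθ : IsDualSystem B θ) (hV : D.HasMomentBound N f χ V) (x : Euc n) :
    Summable fun l => D.correction θ f χ l x :=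
  .of_abs (summable_of_sum_le (fun _ => abs_nonneg _) fun F => D.sum_abs_correction_le hθ hV F x)

theorem measurable_tsum_correction (hθ : IsDualSystem B θ) (hV : D.HasMomentBound N f χ V) :
    Measurable fun x => ∑' l, D.correction θ f χ l x :=
  measurable_tsum (fun _ => hθ.measurable_momentPart _ _ _) (D.summable_correction hθ hV)

theorem integrable_correction_mul (hθ : IsDualSystem B θ) (hg : Continuous g) (l : ℕ) :
    Integrable fun x => D.correction θ f χ l x * g x := by
  by_cases hl : l ∈ D.J
  · exact hθ.integrable_momentPart_mul (D.radius_pos hl) _ hg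
  · simp [D.correction_eq_zero_of_notMem_index hl]

theorem integral_mul_cancelMoments (hθ : IsDualSystem B θ) (hf : LocallyIntegrable f)
    (hχ : Continuous χ) (hg : Continuous g) (l : ℕ) :
    ∫ x, f x * (D.weight l x * χ x) * cancelMoments θ (D.c l) (D.r l) g x
      = (∫ x, f x * (D.weight l x * χ x) * g x) - ∫ x, D.correction θ f χ l x * g x := by
  by_cases hl : l ∈ D.J
  · refine hθ.integral_mul_cancelMoments (D.radius_pos hl) (R := 6 * D.r l)
      (D.integrable_mul_weight_mul hf hχ l) (fun x hx => ?_) hg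
    rw [D.weight_eq_zero_of_lt_dist hx, zero_mul, mul_zero]
  · simp [D.correction_eq_zero_of_notMem_index hl, D.weight_eq_zero_of_notMem_index hl]

section SupportedCorrections

variable {T : Set (Euc n)}

theorem sum_abs_correction_mul_le (hθ : IsDualSystem B θ) (hV : D.HasMomentBound N f χ V)
    (hT : ∀ l, ∀ x ∉ T, D.correction θ f χ l x = 0) (F : Finset ℕ) (x : Euc n) :
    ∑ l ∈ F, |D.correction θ f χ l x * g x| ≤ T.indicator (fun x =>
      (3 * ((n : ℝ) + 1)) ^ n * (Fintype.card (MultiIdx n N) * (V * B)) * |g x|) x := by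
  by_cases hx : x ∈ T
  · simp only [indicator_of_mem hx, abs_mul, ← Finset.sum_mul]
    gcongr
    exact D.sum_abs_correction_le hθ hV F x
  · simp [hx, hT _ x hx]

theorem hasSum_integral_correction_mul (hθ : IsDualSystem B θ)
    (hV : D.HasMomentBound N f χ V) (hT_meas : MeasurableSet T)
    (hT : ∀ l, ∀ x ∉ T, D.correction θ f χ l x = 0) (hg : Continuous g) (hgT : IntegrableOn g T) :
    HasSum (fun l => ∫ x, D.correction θ f χ l x * g x)
      (∫ x, (∑' l, D.correction θ f χ l x) * g x) := by
  simpa only [tsum_mul_right] using hasSum_integral_of_sum_abs_le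
    (D.integrable_correction_mul hθ hg)
    (IntegrableOn.integrable_indicator (hgT.abs.const_mul _) hT_meas)
    (D.sum_abs_correction_mul_le hθ hV hT)

theorem integrable_tsum_correction_mul (hθ : IsDualSystem B θ)
    (hV : D.HasMomentBound N f χ V) (hT_meas : MeasurableSet T)
    (hT : ∀ l, ∀ x ∉ T, D.correction θ f χ l x = 0) (hg : Continuous g) (hgT : IntegrableOn g T) :
    Integrable fun x => (∑' l, D.correction θ f χ l x) * g x := by
  have h_meas := ((D.measurable_tsum_correction hθ hV).mul hg.measurable).aestronglyMeasurable
    (μ := volume)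
  simp only [← tsum_mul_right, Pi.mul_def] at h_meas ⊢
  exact .mono' (IntegrableOn.integrable_indicator (hgT.abs.const_mul _) hT_meas) h_meas
    (ae_of_all _ fun x => abs_tsum_le_of_sum_abs_le fun F =>
      D.sum_abs_correction_mul_le hθ hV hT F x)

theorem hasSum_integral_mul_cancelMoments (hθ : IsDualSystem B θ) (hf : LocallyIntegrable f)
    (hχ : Continuous χ) (hV : D.HasMomentBound N f χ V) (hT_meas : MeasurableSet T)
    (hT : ∀ l, ∀ x ∉ T, D.correction θ f χ l x = 0) (hg : Continuous g) (hgT : IntegrableOn g T)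
    (h_int : Integrable fun x => f x * χ x * g x) :
    HasSum (fun l => ∫ x, f x * (D.weight l x * χ x) * cancelMoments θ (D.c l) (D.r l) g x)
      ((∫ x in D.Ω, f x * χ x * g x) - ∫ x, (∑' l, D.correction θ f χ l x) * g x) := by
  have h_comm (l : ℕ) (x : Euc n) :
      f x * (D.weight l x * χ x) * g x = f x * χ x * g x * D.weight l x := by ring
  simp only [D.integral_mul_cancelMoments hθ hf hχ hg, h_comm]
  exact (D.hasSum_integral_mul_weight h_int).sub
    (D.hasSum_integral_correction_mul hθ hV hT_meas hT hg hgT)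

end SupportedCorrections

end WhitneyCover

end Correction

/-! ### Unnormalised atoms -/

section RawAtom

theorem integrableOn_cube {n : ℕ} {g : Euc n → ℝ} (hg : Continuous g) (c : Euc n) (r : ℝ) :
    IntegrableOn g (cube c r) :=
  (hg.locallyIntegrable.integrableOn_isCompact (isCompact_closedBall c (n * |r|))).mono_set
    fun _ hx => dist_le_of_mem_cube (abs_nonneg r) fun i => (hx i).trans (le_abs_self r)

namespace WhitneyCover

variable {n N : ℕ} {D D' : WhitneyCover n} {j : ℕ} {x : Euc n} {f g : Euc n → ℝ} {B V V' Z : ℝ}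
  {θ : MultiIdx n N → Euc n → ℝ}

theorem mem_cube_of_correction_weight_ne_zero (h_sub : D'.Ω ⊆ D.Ω) (hθ : IsDualSystem B θ) {l : ℕ}
    (hx : D'.correction θ f (D.weight j) l x ≠ 0) : x ∈ cube (D.c j) (20 * D.r j) := by
  obtain ⟨z, hz⟩ : ∃ z, D'.weight l z * D.weight j z ≠ 0 := by
    by_contra! h
    exact hx (D'.correction_eq_zero h x)
  have hr := radius_le_two_mul_of_weight_ne_zero h_sub (left_ne_zero_of_mul hz)
    (right_ne_zero_of_mul hz)
  have hl := (D'.of_weight_ne_zero (left_ne_zero_of_mul hz)).2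
  have hj := (D.of_weight_ne_zero (right_ne_zero_of_mul hz)).2
  have h_dist : D'.c l ∈ cube (D.c j) (6 * D'.r l + 6 * D.r j) :=
    mem_cube_of_dist_le (by linarith [dist_triangle_left (D'.c l) (D.c j) z])
  intro i
  have h₁ := (D'.mem_of_correction_ne_zero hθ hx).2 i
  have h₂ := h_dist i
  linarith [abs_sub_le (x i) (D'.c l i) (D.c j i)]

variable (D D') in
/-- The part of `f` near the `j`-th cube of `D` that is not passed on to the next level `D'`, with
the moments removed on `D` and restored on `D'`. Normalised, it becomes an atom. -/
def rawAtom (θ : MultiIdx n N → Euc n → ℝ) (f : Euc n → ℝ) (j : ℕ) (x : Euc n) : ℝ :=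
  D'.Ωᶜ.indicator (fun x => f x * D.weight j x) x - D.correction θ f (fun _ => 1) j x
    + ∑' l, D'.correction θ f (D.weight j) l x

theorem measurable_rawAtom (hθ : IsDualSystem B θ) (hf : Measurable f)
    (hV : D'.HasMomentBound N f (D.weight j) V) : Measurable (D.rawAtom D' θ f j) :=
  (((hf.mul (D.continuous_weight j).measurable).indicator
    D'.isWhitneyFamily.isOpen.measurableSet.compl).sub (hθ.measurable_momentPart _ _ _)).add
    (D'.measurable_tsum_correction hθ hV)

theorem rawAtom_eq_zero (h_sub : D'.Ω ⊆ D.Ω) (hθ : IsDualSystem B θ) (hj : j ∈ D.J)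
    (hx : x ∉ cube (D.c j) (20 * D.r j)) : D.rawAtom D' θ f j x = 0 := by
  have hr := D.radius_pos hj
  have h_weight : D.weight j x = 0 := D.weight_eq_zero_of_lt_dist
    (not_le.1 fun h => hx (mem_cube_of_dist_le (by linarith)))
  have h_own : D.correction θ f (fun _ => 1) j x = 0 := of_not_not fun h =>
    hx fun i => ((D.mem_of_correction_ne_zero hθ h).2 i).trans (by linarith)
  have h_next (l : ℕ) : D'.correction θ f (D.weight j) l x = 0 := of_not_not fun h =>
    hx (mem_cube_of_correction_weight_ne_zero h_sub hθ h)
  simp [rawAtom, h_own, h_next, h_weight]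

theorem abs_rawAtom_le (hθ : IsDualSystem B θ) (hV : D.HasMomentBound N f (fun _ => 1) V)
    (hV' : D'.HasMomentBound N f (D.weight j) V') (hZ : 0 ≤ Z) (hx : x ∉ D'.Ω → |f x| ≤ Z) :
    |D.rawAtom D' θ f j x| ≤ Z + Fintype.card (MultiIdx n N) * (V * B)
      + (3 * ((n : ℝ) + 1)) ^ n * (Fintype.card (MultiIdx n N) * (V' * B)) := by
  have h_good : |D'.Ωᶜ.indicator (fun x => f x * D.weight j x) x| ≤ Z := by
    by_cases h : x ∈ D'.Ω
    · simpa [h] using hZ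
    · rw [indicator_of_mem (mem_compl h), abs_mul]
      exact (mul_le_of_le_one_right (abs_nonneg _) (D.abs_weight_le_one j x)).trans (hx h)
  refine (abs_add_le _ _).trans (add_le_add ((abs_sub _ _).trans (add_le_add h_good
    (D.abs_correction_le hθ hV j x))) ?_)
  exact abs_tsum_le_of_sum_abs_le fun F => D'.sum_abs_correction_le hθ hV' F x

theorem integrable_mul_weight_mul_continuous (D : WhitneyCover n) (hf : LocallyIntegrable f)
    (hg : Continuous g) (j : ℕ) : Integrable fun x => f x * D.weight j x * g x := by
  simpa only [mul_assoc] using D.integrable_mul_weight_mul hf hg j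

theorem integral_rawAtom_mul (h_sub : D'.Ω ⊆ D.Ω) (hθ : IsDualSystem B θ)
    (hf : LocallyIntegrable f) (hV : D'.HasMomentBound N f (D.weight j) V) (hg : Continuous g) :
    ∫ x, D.rawAtom D' θ f j x * g x
      = (∫ x in D'.Ωᶜ, f x * D.weight j x * g x)
        - (∫ x, D.correction θ f (fun _ => 1) j x * g x)
        + ∫ x, (∑' l, D'.correction θ f (D.weight j) l x) * g x := by
  have hΩ := D'.isWhitneyFamily.isOpen.measurableSet.compl
  have h_good : Integrable fun x => D'.Ωᶜ.indicator (fun x => f x * D.weight j x * g x) x :=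
    (D.integrable_mul_weight_mul_continuous hf hg j).indicator hΩ
  have h_own := D.integrable_correction_mul (f := f) (χ := fun _ => 1) hθ hg j
  have h_next := D'.integrable_tsum_correction_mul hθ hV (measurableSet_cube _ _)
    (fun l x hx => not_not.1 fun h => hx (mem_cube_of_correction_weight_ne_zero h_sub hθ h)) hg
    (integrableOn_cube hg (D.c j) (20 * D.r j))
  rw [← integral_indicator hΩ, ← integral_sub h_good h_own,
    ← integral_add (by exact h_good.sub h_own) h_next]
  simp only [rawAtom, add_mul, sub_mul, indicator_mul_left]

theorem hasSum_integral_mul_cancelMoments_rawAtom (h_sub : D'.Ω ⊆ D.Ω) (hθ : IsDualSystem B θ)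
    (hf : LocallyIntegrable f) (hV : D'.HasMomentBound N f (D.weight j) V) (hg : Continuous g) :
    HasSum (fun l => ∫ x, f x * (D'.weight l x * D.weight j x)
        * cancelMoments θ (D'.c l) (D'.r l) g x)
      ((∫ x, f x * D.weight j x * cancelMoments θ (D.c j) (D.r j) g x)
        - ∫ x, D.rawAtom D' θ f j x * g x) := by
  have h_int := D.integrable_mul_weight_mul_continuous hf hg j
  have h_own := D.integral_mul_cancelMoments hθ hf continuous_const (χ := fun _ => 1) hg j
  have h_split := integral_add_compl D'.isWhitneyFamily.isOpen.measurableSet h_int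
  simp only [mul_one] at h_own
  convert D'.hasSum_integral_mul_cancelMoments hθ hf (D.continuous_weight j) hV
    (measurableSet_cube (D.c j) (20 * D.r j))
    (fun l x hx => not_not.1 fun h => hx (mem_cube_of_correction_weight_ne_zero h_sub hθ h)) hg
    (integrableOn_cube hg _ _) h_int using 1
  rw [integral_rawAtom_mul h_sub hθ hf hV hg, h_own]
  linarith

theorem integral_rawAtom_mul_monomial (h_sub : D'.Ω ⊆ D.Ω) (hθ : IsDualSystem B θ)
    (hf : LocallyIntegrable f) (hV : D'.HasMomentBound N f (D.weight j) V) (hj : j ∈ D.J)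
    {β : Fin n → ℕ} (hβ : ∀ i, β i ≤ N) :
    ∫ x, D.rawAtom D' θ f j x * ∏ i, x i ^ β i = 0 := by
  have h_cancel {c : Euc n} {r : ℝ} (hr : 0 < r) (y : Euc n) :
      cancelMoments θ c r (fun x => ∏ i, x i ^ β i) y = 0 := by
    obtain ⟨a, ha⟩ := exists_eq_sum_coordMonomial hβ c r
    exact hθ.cancelMoments_eq_zero hr.ne' ha y
  have h_sum := hasSum_integral_mul_cancelMoments_rawAtom h_sub hθ hf hV
    (g := fun x => ∏ i, x i ^ β i) (by fun_prop)
  have h_next (l : ℕ) : ∫ x, f x * (D'.weight l x * D.weight j x)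
      * cancelMoments θ (D'.c l) (D'.r l) (fun x => ∏ i, x i ^ β i) x = 0 := by
    by_cases hl : l ∈ D'.J
    · simp [h_cancel (D'.radius_pos hl)]
    · simp [D'.weight_eq_zero_of_notMem_index hl]
  simp only [h_next, h_cancel (D.radius_pos hj), mul_zero, integral_zero, zero_sub] at h_sum
  exact neg_eq_zero.1 (h_sum.unique hasSum_zero)

end WhitneyCover

end RawAtom

/-! ### The part of `f` carried by the next levels -/

section Tail

namespace WhitneyCover

variable {n N : ℕ} {D D' : WhitneyCover n} {f g H : Euc n → ℝ} {B V Z R ϱ : ℝ}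
  {θ : MultiIdx n N → Euc n → ℝ}

variable (D) in
/-- The summand of `tail` before integration. -/
def tailTerm (θ : MultiIdx n N → Euc n → ℝ) (f g : Euc n → ℝ) (j : ℕ) (x : Euc n) : ℝ :=
  f x * D.weight j x * cancelMoments θ (D.c j) (D.r j) g x

variable (D) in
/-- The pairing with `g` of the moment-free part of `f` on the cover `D`. Consecutive tails differ
by the pairings of `g` with the raw atoms between the two levels. -/
def tail (θ : MultiIdx n N → Euc n → ℝ) (f g : Euc n → ℝ) : ℝ :=
  ∑' j, ∫ x, D.tailTerm θ f g j x

variable (D) in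
theorem integrable_tailTerm (hf : LocallyIntegrable f) (hg : Continuous g) (j : ℕ) :
    Integrable (D.tailTerm θ f g j) :=
  D.integrable_mul_weight_mul_continuous hf (continuous_cancelMoments θ _ _ hg) j

theorem abs_cancelMoments_le_indicator {C S : ℝ} (h_radius : ∀ j ∈ D.J, D.r j ≤ ϱ)
    (hC : ∀ {c : Euc n} {r : ℝ}, 0 < r → ∀ {g : Euc n → ℝ} {S : ℝ},
      (∀ x, dist x c ≤ (6 + n) * r → |g x| ≤ S) →
        ∀ y, dist y c ≤ 6 * r → |cancelMoments θ c r g y| ≤ C * S)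
    (hg : IsTestFun 0 R g) (hS : ∀ x, |g x| ≤ S) {j : ℕ} {x : Euc n} (hx : D.weight j x ≠ 0) :
    |cancelMoments θ (D.c j) (D.r j) g x|
      ≤ (Metric.closedBall 0 (R + (12 + n) * ϱ)).indicator (fun _ => C * S) x := by
  obtain ⟨hj, hx⟩ := D.of_weight_ne_zero hx
  by_cases h : x ∈ Metric.closedBall 0 (R + (12 + n) * ϱ)
  · simpa only [indicator_of_mem h] using hC (D.radius_pos hj) (fun y _ => hS y) x hx
  · have h_far (y : Euc n) (hy : dist y (D.c j) ≤ (6 + n) * D.r j) : |g y| ≤ 0 := by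
      rw [abs_nonpos_iff]
      refine hg.eq_zero y ?_
      rw [Metric.mem_closedBall, not_le] at h
      have : (12 + (n : ℝ)) * D.r j ≤ (12 + n) * ϱ := by gcongr; exact h_radius j hj
      linarith [dist_triangle x y 0, dist_triangle_right x y (D.c j)]
    simpa only [indicator_of_notMem h, mul_zero] using hC (D.radius_pos hj) h_far x hx

theorem exists_integrable_forall_sum_abs_tailTerm_le (hθ : IsDualSystem B θ)
    (hf : LocallyIntegrable f) (hg : IsTestFun 0 R g) (ϱ : ℝ) :
    ∃ H, Integrable H ∧ ∀ D : WhitneyCover n, (∀ j ∈ D.J, D.r j ≤ ϱ) →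
      ∀ (F : Finset ℕ) x, ∑ j ∈ F, |D.tailTerm θ f g j x| ≤ D.Ω.indicator H x := by
  obtain ⟨C, hC0, hC⟩ := hθ.exists_abs_cancelMoments_le (Λ := 6) (by norm_num)
  obtain ⟨S, hS⟩ := hg.exists_abs_le
  set T : Set (Euc n) := Metric.closedBall 0 (R + (12 + n) * ϱ)
  set H := T.indicator fun x => |f x| * (C * S)
  have hfT : IntegrableOn f T := hf.integrableOn_isCompact (isCompact_closedBall _ _)
  refine ⟨H, IntegrableOn.integrable_indicator (hfT.abs.mul_const _) measurableSet_closedBall,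
    fun D h_radius F x => ?_⟩
  have hH0 : 0 ≤ H x := indicator_nonneg (fun x _ =>
    mul_nonneg (abs_nonneg _) (mul_nonneg hC0 ((abs_nonneg _).trans (hS 0)))) x
  have h_term (j : ℕ) : |D.tailTerm θ f g j x| ≤ |H x * D.weight j x| := by
    by_cases hx : D.weight j x = 0
    · simp [tailTerm, hx]
    · have h_cancel := abs_cancelMoments_le_indicator h_radius hC hg hS hx
      rw [abs_mul _ (D.weight j x), abs_of_nonneg hH0, tailTerm, abs_mul, abs_mul, mul_right_comm]
      gcongr
      calc |f x| * |cancelMoments θ (D.c j) (D.r j) g x|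
          ≤ |f x| * T.indicator (fun _ => C * S) x := by gcongr
        _ = H x := (indicator_mul_right T (fun x => |f x|) (fun _ => C * S)).symm
  calc ∑ j ∈ F, |D.tailTerm θ f g j x| ≤ |D.Ω.indicator H x| :=
        (Finset.sum_le_sum fun j _ => h_term j).trans (D.sum_abs_mul_weight_le H F x)
    _ = D.Ω.indicator H x := abs_of_nonneg (indicator_apply_nonneg fun _ => hH0)

section Majorant

variable (hf : LocallyIntegrable f) (hg : Continuous g) (hH : Integrable H)
  (h_le : ∀ (F : Finset ℕ) x, ∑ j ∈ F, |D.tailTerm θ f g j x| ≤ D.Ω.indicator H x)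

include hf hg hH h_le

theorem sum_abs_integral_tailTerm_le (F : Finset ℕ) :
    ∑ j ∈ F, |∫ x, D.tailTerm θ f g j x| ≤ ∫ x in D.Ω, H x := by
  have hΩ := D.isWhitneyFamily.isOpen.measurableSet
  rw [← integral_indicator hΩ]
  exact sum_abs_integral_le (D.integrable_tailTerm hf hg) (hH.indicator hΩ) h_le F

theorem abs_tail_le : |D.tail θ f g| ≤ ∫ x in D.Ω, H x :=
  abs_tsum_le_of_sum_abs_le (sum_abs_integral_tailTerm_le hf hg hH h_le)

theorem hasSum_tail : HasSum (fun j => ∫ x, D.tailTerm θ f g j x) (D.tail θ f g) :=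
  (Summable.of_abs (summable_of_sum_le (fun _ => abs_nonneg _)
    (sum_abs_integral_tailTerm_le hf hg hH h_le))).hasSum

theorem summable_integral_abs_tailTerm :
    Summable fun j => ∫ x, |D.tailTerm θ f g j x| := by
  refine summable_of_sum_le (c := ∫ x in D.Ω, H x)
    (fun j => integral_nonneg fun _ => abs_nonneg _) fun F => ?_
  have hΩ := D.isWhitneyFamily.isOpen.measurableSet
  have h_int (j : ℕ) (_ : j ∈ F) := (D.integrable_tailTerm (θ := θ) hf hg j).abs
  rw [← integral_indicator hΩ, ← integral_finsetSum _ h_int]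
  exact integral_mono (integrable_finsetSum _ h_int) (hH.indicator hΩ) (h_le F)

end Majorant

variable (D) in
theorem summable_integral_mul_weight {F : ℕ → Euc n → ℝ} (hF : ∀ l, Integrable (F l))
    (h_sum : Summable fun l => ∫ x, |F l x|) :
    Summable fun i : ℕ × ℕ => ∫ x, F i.1 x * D.weight i.2 x := by
  have hF_weight (l j : ℕ) : Integrable fun x => F l x * D.weight j x :=
    (hF l).mul_bdd (c := 1) (D.continuous_weight j).aestronglyMeasurable
      (ae_of_all _ (D.abs_weight_le_one j))
  have h_fiber (l : ℕ) (s : Finset ℕ) : ∑ j ∈ s, |∫ x, F l x * D.weight j x| ≤ ∫ x, |F l x| :=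
    sum_abs_integral_le (hF_weight l) (hF l).abs (fun s x =>
      (D.sum_abs_mul_weight_le (F l) s x).trans (norm_indicator_le_norm_self (F l) x)) s
  have h_fiber_sum (l : ℕ) : Summable fun j => |∫ x, F l x * D.weight j x| :=
    summable_of_sum_le (fun _ => abs_nonneg _) (h_fiber l)
  exact .of_abs ((summable_prod_of_nonneg fun _ => abs_nonneg _).2 ⟨h_fiber_sum,
    h_sum.of_nonneg_of_le (fun _ => tsum_nonneg fun _ => abs_nonneg _)
      fun l => (h_fiber_sum l).tsum_le_of_sum_le (h_fiber l)⟩)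

theorem rawAtom_eq_zero_of_notMem_index {j : ℕ} (hj : j ∉ D.J) (x : Euc n) :
    D.rawAtom D' θ f j x = 0 := by
  have h_weight := D.weight_eq_zero_of_notMem_index hj
  simp [rawAtom, h_weight, D.correction_eq_zero_of_notMem_index hj, D'.correction_eq_zero]

theorem hasSum_integral_rawAtom_mul (h_sub : D'.Ω ⊆ D.Ω) (hθ : IsDualSystem B θ)
    (hf : LocallyIntegrable f) (hV : ∀ j, D'.HasMomentBound N f (D.weight j) V)
    (hg : Continuous g) (hH : Integrable H)
    (h_le : ∀ (F : Finset ℕ) x, ∑ j ∈ F, |D.tailTerm θ f g j x| ≤ D.Ω.indicator H x)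
    (h_le' : ∀ (F : Finset ℕ) x, ∑ j ∈ F, |D'.tailTerm θ f g j x| ≤ D'.Ω.indicator H x) :
    HasSum (fun j : D.J => ∫ x, D.rawAtom D' θ f j x * g x) (D.tail θ f g - D'.tail θ f g) := by
  have h_int := D'.integrable_tailTerm (θ := θ) hf hg
  have h_comm (l j : ℕ) (x : Euc n) : D'.tailTerm θ f g l x * D.weight j x
      = f x * (D'.weight l x * D.weight j x) * cancelMoments θ (D'.c l) (D'.r l) g x := by
    rw [tailTerm]; ring
  have h_prod := D.summable_integral_mul_weight h_int
    (summable_integral_abs_tailTerm hf hg hH h_le')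
  have h_first (l : ℕ) : HasSum (fun j => ∫ x, D'.tailTerm θ f g l x * D.weight j x)
      (∫ x, D'.tailTerm θ f g l x) := by
    rw [← setIntegral_eq_integral_of_forall_compl_eq_zero (s := D.Ω) fun x hx => by
      rw [tailTerm, D'.weight_eq_zero_of_notMem (fun h => hx (h_sub h)), mul_zero, zero_mul]]
    exact D.hasSum_integral_mul_weight (h_int l)
  have h_second (j : ℕ) : HasSum (fun l => ∫ x, D'.tailTerm θ f g l x * D.weight j x)
      ((∫ x, D.tailTerm θ f g j x) - ∫ x, D.rawAtom D' θ f j x * g x) := by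
    simp only [h_comm]
    exact hasSum_integral_mul_cancelMoments_rawAtom h_sub hθ hf (hV j) hg
  have h_next := (((Equiv.prodComm ℕ ℕ).hasSum_iff.2 h_prod.hasSum).prod_fiberwise h_second)
  rw [(h_prod.hasSum.prod_fiberwise h_first).unique (hasSum_tail hf hg hH h_le')] at h_next
  have h_all := (hasSum_tail hf hg hH h_le).sub h_next
  simp only [_root_.sub_sub_cancel] at h_all
  refine (hasSum_subtype_iff_of_support_subset fun j hj => of_not_not fun hjJ => hj ?_).2 h_all
  simp [rawAtom_eq_zero_of_notMem_index hjJ]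

theorem abs_integral_mul_sub_tail_le (hθ : IsDualSystem B θ) (hf : LocallyIntegrable f)
    (hV : D.HasMomentBound N f (fun _ => 1) V) (hZ0 : 0 ≤ Z) (hZ : ∀ᵐ x, x ∉ D.Ω → |f x| ≤ Z)
    (hg : IsTestFun 0 R g) :
    |(∫ x, f x * g x) - D.tail θ f g|
      ≤ (Z + (3 * ((n : ℝ) + 1)) ^ n * (Fintype.card (MultiIdx n N) * (V * B))) * ∫ x, |g x| := by
  have hΩ := D.isWhitneyFamily.isOpen.measurableSet
  have h_fg := hg.integrable_mul hf
  have h_corr : ∀ l, ∀ x ∉ univ, D.correction θ f (fun _ => 1) l x = 0 := by simp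
  have h_sum := D.hasSum_integral_mul_cancelMoments hθ hf continuous_const hV .univ h_corr
    hg.continuous hg.integrable.integrableOn (by simpa only [mul_one] using h_fg)
  simp only [mul_one] at h_sum
  have h_tail : D.tail θ f g = _ := h_sum.tsum_eq
  have h_bad : Integrable fun x => D.Ωᶜ.indicator (fun x => f x * g x) x :=
    h_fg.indicator hΩ.compl
  have h_eq : (∫ x, f x * g x) - D.tail θ f g = ∫ x, (D.Ωᶜ.indicator (fun x => f x * g x) x
      + (∑' l, D.correction θ f (fun _ => 1) l x) * g x) := by
    rw [integral_add h_bad (D.integrable_tsum_correction_mul hθ hV .univ h_corr hg.continuous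
      hg.integrable.integrableOn), integral_indicator hΩ.compl, ← integral_add_compl hΩ h_fg]
    linarith
  rw [h_eq, ← integral_const_mul, ← Real.norm_eq_abs]
  refine norm_integral_le_of_norm_le (hg.integrable.abs.const_mul _) (hZ.mono fun x hx => ?_)
  rw [add_mul]
  refine (norm_add_le _ _).trans (add_le_add ?_ ?_)
  · by_cases h : x ∈ D.Ω
    · simpa [h] using mul_nonneg hZ0 (abs_nonneg (g x))
    · rw [indicator_of_mem (mem_compl h), norm_mul]
      exact mul_le_mul_of_nonneg_right (hx h) (abs_nonneg _)
  · rw [norm_mul]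
    exact mul_le_mul_of_nonneg_right (abs_tsum_le_of_sum_abs_le fun F =>
      D.sum_abs_correction_le hθ hV F x) (abs_nonneg _)

end WhitneyCover

end Tail

/-! ### Whitney cubes -/

section WhitneyCube

theorem volume_cube {n : ℕ} (c : Euc n) {r : ℝ} (hr : 0 ≤ r) :
    volume (cube c r) = ENNReal.ofReal ((2 * r) ^ n) := by
  have h_preimage : cube c r = (@WithLp.ofLp 2 (Fin n → ℝ)) ⁻¹'
      Icc (fun i => c i - r) (fun i => c i + r) := by
    ext y
    simp only [cube, mem_ofPred_eq, mem_preimage, mem_Icc, Pi.le_def, ← forall_and, abs_le,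
      neg_le_sub_iff_le_add', sub_le_iff_le_add']
  have h_side (i : Fin n) : c i + r - (c i - r) = 2 * r := by ring
  rw [h_preimage, (PiLp.volume_preserving_ofLp (Fin n)).measure_preimage
    measurableSet_Icc.nullMeasurableSet, Real.volume_Icc_pi]
  simp only [h_side, Finset.prod_const, Finset.card_univ, Fintype.card_fin]
  exact (ENNReal.ofReal_pow (by positivity) n).symm

namespace WhitneyCover

variable {n : ℕ} (D : WhitneyCover n)

theorem volume_le_tsum_cube :
    volume D.Ω ≤ ∑' j : D.J, ENNReal.ofReal ((2 * (20 * D.r j)) ^ n) := by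
  have hr (j : D.J) : 0 ≤ 20 * D.r j := by linarith [D.radius_pos j.2]
  have h_cover : D.Ω ⊆ ⋃ j : D.J, cube (D.c j) (20 * D.r j) := fun x hx => by
    obtain ⟨j, hj, hd⟩ := D.isWhitneyFamily.exists_dist_le x hx
    exact mem_iUnion.2 ⟨⟨j, hj⟩, mem_cube_of_dist_le (by linarith [D.radius_pos hj])⟩
  calc volume D.Ω ≤ volume (⋃ j : D.J, cube (D.c j) (20 * D.r j)) := measure_mono h_cover
    _ ≤ ∑' j : D.J, volume (cube (D.c j) (20 * D.r j)) := measure_iUnion_le _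
    _ = ∑' j : D.J, ENNReal.ofReal ((2 * (20 * D.r j)) ^ n) :=
        tsum_congr fun j => volume_cube _ (hr j)

theorem tsum_cube_le : ∑' j : D.J, ENNReal.ofReal ((2 * (20 * D.r j)) ^ n)
    ≤ ENNReal.ofReal (40 ^ n) / volume (Metric.ball (0 : Euc n) 1) * volume D.Ω := by
  set ω := volume (Metric.ball (0 : Euc n) 1)
  have hω : ω ≠ 0 := (Metric.measure_ball_pos _ _ one_pos).ne'
  have h_ball (j : D.J) : ENNReal.ofReal ((2 * (20 * D.r j)) ^ n)
      = ENNReal.ofReal (40 ^ n) / ω * volume (Metric.closedBall (D.c j) (D.r j)) := by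
    rw [Measure.addHaar_closedBall volume _ (D.radius_pos j.2).le, finrank_euclideanSpace_fin,
      mul_comm _ ω, ← mul_assoc (_ / ω), ENNReal.div_mul_cancel hω measure_ball_lt_top.ne,
      ← ENNReal.ofReal_mul (by positivity), ← mul_pow, ← mul_assoc]
    norm_num
  have h_disj : Pairwise (Function.onFun Disjoint
      fun j : D.J => Metric.closedBall (D.c j) (D.r j)) :=
    fun i j hij => D.isWhitneyFamily.disjoint i.2 j.2 (Subtype.coe_ne_coe.2 hij)
  simp only [h_ball, ENNReal.tsum_mul_left]
  gcongr
  rw [← measure_iUnion h_disj fun _ => Metric.isClosed_closedBall.measurableSet]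
  exact measure_mono (iUnion_subset fun j x hx => D.isWhitneyFamily.mem_of_dist_lt j.2
    (by linarith [Metric.mem_closedBall.1 hx, D.radius_pos j.2]))

theorem tsum_indicator_cube_le (x : Euc n) :
    ∑' j : D.J, (cube (D.c j) (20 * D.r j)).indicator (fun _ => (1 : ℝ≥0∞)) x
      ≤ ENNReal.ofReal ((3 * (20 * n + 1)) ^ n) := by
  classical
  rw [ENNReal.tsum_eq_iSup_sum]
  refine iSup_le fun s => ?_
  set F := (s.filter fun j : D.J => x ∈ cube (D.c j) (20 * D.r j)).map (.subtype _)
  have h_card : (F.card : ℝ) ≤ (3 * (20 * n + 1)) ^ n := by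
    refine D.card_le (by positivity) le_rfl x fun j hj => ?_
    obtain ⟨i, hi, rfl⟩ := Finset.mem_map.1 hj
    refine ⟨i.2, (dist_le_of_mem_cube ?_ (Finset.mem_filter.1 hi).2).trans_eq ?_⟩
    · linarith [D.radius_pos i.2]
    · simp only [Function.Embedding.subtype_apply]; ring
  have h_sum : ∑ j ∈ s, (cube (D.c j) (20 * D.r j)).indicator (fun _ => (1 : ℝ≥0∞)) x
      = F.card := by
    simp only [F, Finset.card_map, Finset.card_filter, indicator_apply, Nat.cast_sum,
      Nat.cast_ite, Nat.cast_one, Nat.cast_zero]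
  rw [h_sum, ← ENNReal.ofReal_natCast]
  exact ENNReal.ofReal_le_ofReal h_card

theorem exists_integrable_forall_subset_sum_abs_tailTerm_le [NeZero n] {N : ℕ} {B R : ℝ}
    {θ : MultiIdx n N → Euc n → ℝ} (hθ : IsDualSystem B θ) {f g : Euc n → ℝ}
    (hf : LocallyIntegrable f) (hg : IsTestFun 0 R g) {U : Set (Euc n)} (hU : volume U ≠ ∞) :
    ∃ H, Integrable H ∧ ∀ D : WhitneyCover n, D.Ω ⊆ U →
      ∀ (F : Finset ℕ) x, ∑ j ∈ F, |D.tailTerm θ f g j x| ≤ D.Ω.indicator H x := by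
  obtain ⟨ϱ, hϱ⟩ := exists_forall_ball_subset_radius_le volume hU
  obtain ⟨H, hH, h_le⟩ := exists_integrable_forall_sum_abs_tailTerm_le hθ hf hg ϱ
  refine ⟨H, hH, fun D hD => h_le D fun j hj => hϱ (D.c j) _ (D.radius_pos hj) fun x hx => ?_⟩
  exact hD (D.isWhitneyFamily.mem_of_dist_lt hj
    (by linarith [Metric.mem_ball.1 hx, D.radius_pos hj]))

end WhitneyCover

end WhitneyCube

/-! ### Towers of Whitney covers -/

section LevelTower

/-- Whitney covers `D κ` of all dyadic level sets of the tangential maximal function, on which the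
localised moments of `f` at level `κ` have size at most `A * 2 ^ κ`. -/
structure IsLevelTower {n : ℕ} (A : ℝ) (M N : ℕ) (ψ f : Euc n → ℝ) (D : ℤ → WhitneyCover n) :
    Prop where
  Ω_eq : ∀ κ, (D κ).Ω = tangentialSet ψ f M κ
  volume_ne_top : ∀ κ, volume (D κ).Ω ≠ ∞
  hasMomentBound : ∀ κ, (D κ).HasMomentBound N f (fun _ => 1) (A * 2 ^ κ)
  hasMomentBound_succ : ∀ κ j, (D (κ + 1)).HasMomentBound N f ((D κ).weight j) (A * 2 ^ (κ + 1))

theorem exists_isLevelTower {n : ℕ} [NeZero n] {ψ : Euc n → ℝ} (hψ : Continuous ψ)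
    (hψc : HasCompactSupport ψ) (hψ0 : ∫ x, ψ x ≠ 0) (M N : ℕ) :
    ∃ A : ℝ, 0 ≤ A ∧ ∀ f : Euc n → ℝ, LocallyIntegrable f →
      (∀ κ, volume (tangentialSet ψ f M κ) ≠ ∞) → ∃ D, IsLevelTower A M N ψ f D := by
  obtain ⟨A, hA, h⟩ := WhitneyCover.exists_hasMomentBound hψ hψc hψ0 M N
  refine ⟨A, hA, fun f hf hfin => ?_⟩
  choose D hD using fun κ => exists_whitneyCover (isOpen_tangentialSet ψ f M κ) (hfin κ)
  exact ⟨D, hD, fun κ => hD κ ▸ hfin κ, fun κ => (h hf (hD κ)).1, fun κ j => (h hf (hD (κ + 1))).2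
    (by rw [hD, hD]; exact tangentialSet_anti ψ f M (lt_add_one κ).le) j⟩

namespace IsLevelTower

variable {n M N : ℕ} {A B R : ℝ} {ψ f g : Euc n → ℝ} {D : ℤ → WhitneyCover n}
  {θ : MultiIdx n N → Euc n → ℝ}

theorem Ω_anti (hD : IsLevelTower A M N ψ f D) : Antitone fun κ => (D κ).Ω := fun κ κ' h => by
  simpa only [hD.Ω_eq] using tangentialSet_anti ψ f M h

theorem exists_ae_abs_rawAtom_le (hψ : Continuous ψ) (hψc : HasCompactSupport ψ)
    (hψ0 : ∫ x, ψ x ≠ 0) (hθ : IsDualSystem B θ) (A : ℝ) (M : ℕ) :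
    ∃ s : ℕ, ∀ {f : Euc n → ℝ} {D : ℤ → WhitneyCover n}, LocallyIntegrable f →
      IsLevelTower A M N ψ f D → ∀ κ j,
        ∀ᵐ x, |(D κ).rawAtom (D (κ + 1)) θ f j x| ≤ 2 ^ (κ + s) := by
  set I := ∫ x, ψ x
  obtain ⟨s, hs⟩ := pow_unbounded_of_one_lt (2 * |I|⁻¹ + Fintype.card (MultiIdx n N) * (A * B)
    + (3 * ((n : ℝ) + 1)) ^ n * (Fintype.card (MultiIdx n N) * (A * 2 * B))) one_lt_two
  refine ⟨s, fun {f D} hf hD κ j => ?_⟩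
  filter_upwards [ae_abs_le_of_notMem_tangentialSet hψ hψc hψ0 hf M] with x hx
  refine (WhitneyCover.abs_rawAtom_le hθ (hD.hasMomentBound κ) (hD.hasMomentBound_succ κ j)
    (Z := |I|⁻¹ * 2 ^ (κ + 1)) (by positivity) fun h => hx _ (hD.Ω_eq _ ▸ h)).trans ?_
  rw [zpow_add_one₀ two_ne_zero, zpow_add₀ two_ne_zero, zpow_natCast]
  refine (mul_le_mul_of_nonneg_left hs.le (zpow_nonneg zero_le_two κ)).trans' (le_of_eq ?_)
  ring

theorem hasSum_integral_rawAtom_mul [NeZero n] (hD : IsLevelTower A M N ψ f D)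
    (hθ : IsDualSystem B θ) (hf : LocallyIntegrable f) (hg : IsTestFun 0 R g) (κ : ℤ) :
    HasSum (fun j : (D κ).J => ∫ x, (D κ).rawAtom (D (κ + 1)) θ f j x * g x)
      ((D κ).tail θ f g - (D (κ + 1)).tail θ f g) := by
  have h_sub := hD.Ω_anti (lt_add_one κ).le
  obtain ⟨H, hH, h_le⟩ := WhitneyCover.exists_integrable_forall_subset_sum_abs_tailTerm_le hθ hf hg
    (hD.volume_ne_top κ)
  exact WhitneyCover.hasSum_integral_rawAtom_mul h_sub hθ hf (hD.hasMomentBound_succ κ)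
    hg.continuous hH (h_le _ subset_rfl) (h_le _ h_sub)

theorem tendsto_tail_atTop [NeZero n] (hD : IsLevelTower A M N ψ f D) (hθ : IsDualSystem B θ)
    (hf : LocallyIntegrable f) (hg : IsTestFun 0 R g)
    (hv : Filter.Tendsto (fun m : ℕ => volume (tangentialSet ψ f M m)) Filter.atTop (nhds 0)) :
    Filter.Tendsto (fun κ => (D κ).tail θ f g) Filter.atTop (nhds 0) := by
  obtain ⟨H, hH, h_le⟩ := WhitneyCover.exists_integrable_forall_subset_sum_abs_tailTerm_le hθ hf hg
    (hD.volume_ne_top 0)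
  rw [← Nat.map_cast_int_atTop, Filter.tendsto_map'_iff]
  refine squeeze_zero_norm (fun m => ?_) (hH.tendsto_setIntegral_nhds_zero hv)
  rw [← hD.Ω_eq]
  exact WhitneyCover.abs_tail_le hf hg.continuous hH (h_le _ (hD.Ω_anti m.cast_nonneg))

theorem tendsto_tail_atBot (hD : IsLevelTower A M N ψ f D) (hψ : Continuous ψ)
    (hψc : HasCompactSupport ψ) (hψ0 : ∫ x, ψ x ≠ 0) (hθ : IsDualSystem B θ)
    (hf : LocallyIntegrable f) (hg : IsTestFun 0 R g) :
    Filter.Tendsto (fun κ => (D κ).tail θ f g) Filter.atBot (nhds (∫ x, f x * g x)) := by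
  set C := (|∫ x, ψ x|⁻¹ + (3 * ((n : ℝ) + 1)) ^ n * (Fintype.card (MultiIdx n N) * (A * B)))
    * ∫ x, |g x|
  have h_le (κ : ℤ) : |(∫ x, f x * g x) - (D κ).tail θ f g| ≤ 2 ^ κ * C := by
    refine (WhitneyCover.abs_integral_mul_sub_tail_le hθ hf (hD.hasMomentBound κ)
      (Z := |∫ x, ψ x|⁻¹ * 2 ^ κ) (by positivity) ?_ hg).trans_eq (by simp only [C]; ring)
    filter_upwards [ae_abs_le_of_notMem_tangentialSet hψ hψc hψ0 hf M] with x hx h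
    exact hx κ (hD.Ω_eq κ ▸ h)
  have h_zpow : Filter.Tendsto (fun κ : ℤ => (2 : ℝ) ^ κ) Filter.atBot (nhds 0) := by
    simpa only [Function.comp_def, id, Real.rpow_intCast] using
      (tendsto_rpow_atBot_of_base_gt_one 2 one_lt_two).comp
        (tendsto_intCast_atBot_iff.2 Filter.tendsto_id)
  rw [tendsto_iff_dist_tendsto_zero]
  refine squeeze_zero (fun _ => dist_nonneg) (fun κ => ?_) (zero_mul C ▸ h_zpow.mul_const C)
  rw [dist_comm]
  exact h_le κ

theorem tendsto_sum_integral_rawAtom_mul [NeZero n] (hD : IsLevelTower A M N ψ f D)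
    (hψ : Continuous ψ) (hψc : HasCompactSupport ψ) (hψ0 : ∫ x, ψ x ≠ 0) (hθ : IsDualSystem B θ)
    (hf : LocallyIntegrable f) (hg : IsTestFun 0 R g)
    (hv : Filter.Tendsto (fun m : ℕ => volume (tangentialSet ψ f M m)) Filter.atTop (nhds 0))
    (s : ℤ) :
    Filter.Tendsto (fun m : ℕ => ∑ k ∈ Finset.Icc (-(m : ℤ)) m,
      ∑' j : (D (k - s)).J, ∫ x, (D (k - s)).rawAtom (D (k - s + 1)) θ f j x * g x)
      Filter.atTop (nhds (∫ x, f x * g x)) := by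
  have h_telescope (m : ℕ) : ∑ k ∈ Finset.Icc (-(m : ℤ)) m,
      ∑' j : (D (k - s)).J, ∫ x, (D (k - s)).rawAtom (D (k - s + 1)) θ f j x * g x
        = (D (-m - s)).tail θ f g - (D (m + 1 - s)).tail θ f g := by
    have h_diff (k : ℤ) := (hD.hasSum_integral_rawAtom_mul hθ hf hg (k - s)).tsum_eq
    simp only [h_diff]
    simp only [sub_add_eq_add_sub]
    rw [Finset.sum_Icc_eq_sum_Ico_add _ (by omega),
      Finset.sum_Ico_int_sub m fun k => (D (k - s)).tail θ f g, sub_add_sub_cancel]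
  simp only [h_telescope]
  rw [← sub_zero (∫ x, f x * g x)]
  have h_cast : Filter.Tendsto (fun m : ℕ => (m : ℤ)) Filter.atTop Filter.atTop :=
    tendsto_natCast_atTop_atTop
  refine ((hD.tendsto_tail_atBot hψ hψc hψ0 hθ hf hg).comp ?_).sub
    ((hD.tendsto_tail_atTop hθ hf hg hv).comp ?_)
  · exact Filter.tendsto_atBot_add_const_right _ (-s) (Filter.tendsto_neg_atTop_atBot.comp h_cast)
  · exact Filter.tendsto_atTop_add_const_right _ (-s)
      (Filter.tendsto_atTop_add_const_right _ 1 h_cast)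

end IsLevelTower

end LevelTower

/-! ### Atomic decompositions -/

section AtomicDecomposition

theorem isHpAtom_rawAtom {n : ℕ} {p : ℝ} {D D' : WhitneyCover n} {B V v : ℝ} {f : Euc n → ℝ}
    {θ : MultiIdx n ⌊(n : ℝ) * (1 / p - 1)⌋₊ → Euc n → ℝ} {j : ℕ} (h_sub : D'.Ω ⊆ D.Ω)
    (hθ : IsDualSystem B θ) (hfm : Measurable f) (hf : LocallyIntegrable f)
    (hV : D'.HasMomentBound ⌊(n : ℝ) * (1 / p - 1)⌋₊ f (D.weight j) V) (hj : j ∈ D.J)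
    (hv : 0 < v) (h_le : ∀ᵐ x, |D.rawAtom D' θ f j x| ≤ v) :
    IsHpAtom p (fun x => (v * ((2 * (20 * D.r j)) ^ n) ^ (1 / p))⁻¹ * D.rawAtom D' θ f j x)
      (D.c j) (20 * D.r j) := by
  have hr := D.radius_pos hj
  refine ⟨by positivity, (WhitneyCover.measurable_rawAtom hθ hfm hV).const_mul _, fun x hx => ?_,
    h_le.mono fun x hx => ?_, fun α hα => ?_⟩
  · simp only [WhitneyCover.rawAtom_eq_zero h_sub hθ hj hx, mul_zero]
  · rw [abs_mul, abs_of_pos (by positivity), mul_inv]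
    calc v⁻¹ * (((2 * (20 * D.r j)) ^ n) ^ (1 / p))⁻¹ * |D.rawAtom D' θ f j x|
        ≤ v⁻¹ * (((2 * (20 * D.r j)) ^ n) ^ (1 / p))⁻¹ * v := by gcongr
      _ = _ := by field_simp
  · have h_moment := WhitneyCover.integral_rawAtom_mul_monomial h_sub hθ hf hV hj fun i =>
      (Finset.single_le_sum (fun _ _ => Nat.zero_le _) (Finset.mem_univ i)).trans hα
    simp only [mul_left_comm _ (_⁻¹ : ℝ), integral_const_mul, mul_comm (Finset.prod _ _),
      h_moment, mul_zero]

theorem ofReal_two_zpow_mul_rpow_rpow {p x : ℝ} (hp : p ≠ 0) (k : ℤ) (hx : 0 ≤ x) :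
    ENNReal.ofReal (((2 : ℝ) ^ k * x ^ (1 / p)) ^ p) = ((2 : ℝ≥0∞) ^ k) ^ p * ENNReal.ofReal x := by
  rw [Real.mul_rpow (by positivity) (by positivity), ENNReal.ofReal_mul (by positivity),
    ← Real.rpow_mul hx, one_div_mul_cancel hp, Real.rpow_one, two_zpow_eq_ofReal,
    ENNReal.ofReal_rpow_of_pos (by positivity)]

theorem WhitneyCover.tsum_coeff_rpow {n : ℕ} {p : ℝ} (hp : p ≠ 0) (D : WhitneyCover n) (k : ℤ) :
    ∑' j : D.J, ENNReal.ofReal (((2 : ℝ) ^ k * ((2 * (20 * D.r j)) ^ n) ^ (1 / p)) ^ p)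
      = ((2 : ℝ≥0∞) ^ k) ^ p * ∑' j : D.J, ENNReal.ofReal ((2 * (20 * D.r j)) ^ n) := by
  rw [← ENNReal.tsum_mul_left]
  refine tsum_congr fun j => ofReal_two_zpow_mul_rpow_rpow hp k ?_
  have := D.radius_pos j.2
  positivity

/-- The functions `a k j`, `j ∈ J k`, with cubes `cube (ctr k j) (ρ k j)` and coefficients
`2 ^ k * |cube| ^ (1 / p)`, form an atomic decomposition of `f` with overlap constant `C` and norm
constants `c₁`, `c₂`. Convergence is tested against all compactly supported continuous functions. -/
structure IsAtomicDecomposition {n : ℕ} (p : ℝ) (q : ℝ≥0∞) (ψ : Euc n → ℝ) (C c₁ c₂ : ℝ)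
    (f : Euc n → ℝ) (J : ℤ → Set ℕ) (a : ℤ → ℕ → Euc n → ℝ) (ctr : ℤ → ℕ → Euc n)
    (ρ : ℤ → ℕ → ℝ) : Prop where
  isHpAtom : ∀ k, ∀ j ∈ J k, IsHpAtom p (a k j) (ctr k j) (ρ k j)
  overlap : ∀ k x, (∑' j : J k, (cube (ctr k j) (ρ k j)).indicator (fun _ => (1 : ℝ≥0∞)) x)
    ≤ ENNReal.ofReal C
  tendsto : ∀ g : Euc n → ℝ, Continuous g → HasCompactSupport g →
    Filter.Tendsto (fun m : ℕ => ∑ k ∈ Finset.Icc (-(m : ℤ)) (m : ℤ), ∑' j : J k,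
      ((2 : ℝ) ^ k * ((2 * ρ k j) ^ n) ^ (1 / p)) * ∫ x, a k j x * g x)
      Filter.atTop (nhds (∫ x, f x * g x))
  lower : ENNReal.ofReal c₁ * lorentzNorm p q (ntMax ψ f) ≤ ellq q fun k =>
    (∑' j : J k, ENNReal.ofReal (((2 : ℝ) ^ k * ((2 * ρ k j) ^ n) ^ (1 / p)) ^ p)) ^ (1 / p)
  upper : (ellq q fun k =>
      (∑' j : J k, ENNReal.ofReal (((2 : ℝ) ^ k * ((2 * ρ k j) ^ n) ^ (1 / p)) ^ p)) ^ (1 / p))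
    ≤ ENNReal.ofReal c₂ * lorentzNorm p q (ntMax ψ f)

theorem convAt_congr_ae {n : ℕ} {f f' : Euc n → ℝ} (ψ : Euc n → ℝ) (h : f =ᵐ[volume] f') :
    convAt ψ f = convAt ψ f' :=
  funext₂ fun _ _ => integral_congr_ae (h.mono fun x hx => by simp only [hx])

theorem ntMax_congr_ae {n : ℕ} {f f' : Euc n → ℝ} (ψ : Euc n → ℝ) (h : f =ᵐ[volume] f') :
    ntMax ψ f = ntMax ψ f' := by
  unfold ntMax
  rw [convAt_congr_ae ψ h]

theorem IsAtomicDecomposition.congr_ae {n : ℕ} {p : ℝ} {q : ℝ≥0∞} {ψ f f' : Euc n → ℝ}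
    {C c₁ c₂ : ℝ} {J : ℤ → Set ℕ} {a : ℤ → ℕ → Euc n → ℝ} {ctr : ℤ → ℕ → Euc n} {ρ : ℤ → ℕ → ℝ}
    (hD : IsAtomicDecomposition p q ψ C c₁ c₂ f J a ctr ρ) (h : f =ᵐ[volume] f') :
    IsAtomicDecomposition p q ψ C c₁ c₂ f' J a ctr ρ where
  isHpAtom := hD.isHpAtom
  overlap := hD.overlap
  tendsto g hg hgc := by
    have h_eq : ∫ x, f x * g x = ∫ x, f' x * g x :=
      integral_congr_ae (h.mono fun x hx => by simp only [hx])
    exact h_eq ▸ hD.tendsto g hg hgc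
  lower := ntMax_congr_ae ψ h ▸ hD.lower
  upper := ntMax_congr_ae ψ h ▸ hD.upper

namespace IsLevelTower

variable {n M N : ℕ} {A p : ℝ} {q : ℝ≥0∞} {ψ f : Euc n → ℝ} {D : ℤ → WhitneyCover n}

theorem lorentzNorm_le_ellq (hD : IsLevelTower A M N ψ f D) (hp : 0 < p) (q : ℝ≥0∞) (s : ℕ) :
    lorentzNorm p q (ntMax ψ f) ≤ ellq q fun k => (∑' j : (D (k - s)).J, ENNReal.ofReal
      (((2 : ℝ) ^ k * ((2 * (20 * (D (k - s)).r j)) ^ n) ^ (1 / p)) ^ p)) ^ (1 / p) := by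
  rw [lorentzNorm_ntMax]
  refine ellq_mono q fun k => ?_
  rw [WhitneyCover.tsum_coeff_rpow hp.ne', ENNReal.mul_rpow_of_nonneg _ _ (by positivity),
    ← ENNReal.rpow_mul, mul_one_div_cancel hp.ne', ENNReal.rpow_one]
  gcongr
  refine (measure_mono ?_).trans (D (k - s)).volume_le_tsum_cube
  rw [hD.Ω_eq]
  exact (apertureSet_subset_tangentialSet ψ f M k).trans (tangentialSet_anti ψ f M (by omega))

theorem exists_ellq_le_lorentzNorm [NeZero n] (hp : 0 < p) (hq : 0 < q)
    (hM : (n : ℝ) + 2 ≤ M * p) (A : ℝ) (N s : ℕ) : ∃ E : ℝ, 0 < E ∧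
      ∀ {ψ f : Euc n → ℝ} {D : ℤ → WhitneyCover n}, IsLevelTower A M N ψ f D →
        (ellq q fun k => (∑' j : (D (k - s)).J, ENNReal.ofReal
          (((2 : ℝ) ^ k * ((2 * (20 * (D (k - s)).r j)) ^ n) ^ (1 / p)) ^ p)) ^ (1 / p))
          ≤ ENNReal.ofReal E * lorentzNorm p q (ntMax ψ f) := by
  have hω : volume (Metric.ball (0 : Euc n) 1) ≠ 0 := (Metric.measure_ball_pos _ _ one_pos).ne'
  obtain ⟨E, hE, h⟩ := exists_ellq_volume_tangentialSet_le hp hq hM s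
    (ENNReal.div_lt_top (ENNReal.ofReal_ne_top (r := 40 ^ n)) hω).ne
  refine ⟨E.toReal + 1, by positivity, fun {ψ f D} hD => ?_⟩
  have hE_le : E ≤ ENNReal.ofReal (E.toReal + 1) :=
    (ENNReal.le_ofReal_iff_toReal_le hE (by positivity)).2 (le_add_of_nonneg_right zero_le_one)
  refine (ellq_mono q fun k => ?_).trans ((h ψ f).trans (by gcongr))
  rw [WhitneyCover.tsum_coeff_rpow hp.ne', ← hD.Ω_eq]
  gcongr
  exact (D (k - s)).tsum_cube_le

end IsLevelTower

theorem exists_isAtomicDecomposition_of_measurable {n : ℕ} [NeZero n] {p : ℝ} (hp : 0 < p)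
    {q : ℝ≥0∞} (hq : 0 < q) {ψ : Euc n → ℝ} (hψ : Continuous ψ) (hψc : HasCompactSupport ψ)
    (hψ0 : ∫ x, ψ x ≠ 0) :
    ∃ c₂ : ℝ, 0 < c₂ ∧ ∀ f : Euc n → ℝ, Measurable f → LocallyIntegrable f →
      lorentzNorm p q (ntMax ψ f) < ∞ →
        ∃ J a ctr ρ, IsAtomicDecomposition p q ψ ((3 * (20 * n + 1)) ^ n) 1 c₂ f J a ctr ρ := by
  set N := ⌊(n : ℝ) * (1 / p - 1)⌋₊
  obtain ⟨M, hM⟩ := exists_nat_ge (((n : ℝ) + 2) / p)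
  rw [div_le_iff₀ hp] at hM
  obtain ⟨B, θ, hθ⟩ := exists_isDualSystem n N
  obtain ⟨A, -, h_tower⟩ := exists_isLevelTower hψ hψc hψ0 M N
  obtain ⟨s, h_bound⟩ := IsLevelTower.exists_ae_abs_rawAtom_le hψ hψc hψ0 hθ A M
  obtain ⟨E, hE, h_upper⟩ := IsLevelTower.exists_ellq_le_lorentzNorm hp hq hM A N s
  refine ⟨E, hE, fun f hfm hf hl => ?_⟩
  obtain ⟨D, hD⟩ := h_tower f hf (volume_tangentialSet_ne_top hp hq hM hl)
  let coeff (k : ℤ) (j : ℕ) : ℝ := 2 ^ k * ((2 * (20 * (D (k - s)).r j)) ^ n) ^ (1 / p)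
  have h_coeff (k : ℤ) (j : (D (k - s)).J) : coeff k j ≠ 0 := by
    have := (D (k - s)).radius_pos j.2
    positivity
  refine ⟨fun k => (D (k - s)).J,
    fun k j x => (coeff k j)⁻¹ * (D (k - s)).rawAtom (D (k - s + 1)) θ f j x,
    fun k => (D (k - s)).c, fun k j => 20 * (D (k - s)).r j, fun k j hj => ?_,
    fun k => (D (k - s)).tsum_indicator_cube_le, fun g hg hgc => ?_, ?_, h_upper hD⟩
  · exact isHpAtom_rawAtom (hD.Ω_anti (lt_add_one (k - s : ℤ)).le) hθ hfm hf
      (hD.hasMomentBound_succ _ j) hj (by positivity) (by simpa using h_bound hf hD (k - s) j)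
  · obtain ⟨R, -, hgR⟩ := exists_isTestFun_of_hasCompactSupport hg hgc
    refine (hD.tendsto_sum_integral_rawAtom_mul hψ hψc hψ0 hθ hf hgR
      (tendsto_volume_tangentialSet hp hq hM hl) s).congr fun m => ?_
    refine Finset.sum_congr rfl fun k _ => tsum_congr fun j => ?_
    simp only [mul_assoc (_⁻¹ : ℝ), integral_const_mul]
    exact (mul_inv_cancel_left₀ (h_coeff k j) _).symm
  · rw [ENNReal.ofReal_one, one_mul]
    exact hD.lorentzNorm_le_ellq hp q s

end AtomicDecomposition

theorem stmt4_general {n : ℕ} [NeZero n] {p : ℝ} (hp : 0 < p) {q : ℝ≥0∞} (hq : 0 < q)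
    {ψ : Euc n → ℝ} (hψ : Continuous ψ) (hψc : HasCompactSupport ψ) (hψ0 : ∫ x, ψ x ≠ 0) :
    ∃ C c₁ c₂ : ℝ, 0 < C ∧ 0 < c₁ ∧ 0 < c₂ ∧ ∀ f : Euc n → ℝ, LocallyIntegrable f →
      lorentzNorm p q (ntMax ψ f) < ∞ →
        ∃ J a ctr ρ, IsAtomicDecomposition p q ψ C c₁ c₂ f J a ctr ρ := by
  obtain ⟨c₂, hc₂, h⟩ := exists_isAtomicDecomposition_of_measurable hp hq hψ hψc hψ0
  refine ⟨(3 * (20 * n + 1)) ^ n, 1, c₂, by positivity, one_pos, hc₂, fun f hf hl => ?_⟩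
  have hf_ae := hf.aestronglyMeasurable.aemeasurable
  obtain ⟨J, a, ctr, ρ, hD⟩ := h (hf_ae.mk f) hf_ae.measurable_mk
    (locallyIntegrable_congr hf_ae.ae_eq_mk |>.1 hf) (ntMax_congr_ae ψ hf_ae.ae_eq_mk ▸ hl)
  exact ⟨J, a, ctr, ρ, hD.congr_ae hf_ae.ae_eq_mk.symm⟩

/-- Theorem 2.1: atomic decomposition of `H^{p,q}`. -/
theorem stmt4 (n : ℕ) (hn : 1 ≤ n) (p : ℝ) (hp0 : 0 < p) (hp1 : p ≤ 1) (q : ℝ≥0∞) (hq : 0 < q)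
    (ψ : Euc n → ℝ) (hψ : ContDiff ℝ (⊤ : ℕ∞) ψ) (hψc : HasCompactSupport ψ)
    (hψi : (∫ x : Euc n, ψ x) ≠ 0) :
    ∃ C c₁ c₂ : ℝ, 0 < C ∧ 0 < c₁ ∧ 0 < c₂ ∧
      ∀ f : Euc n → ℝ, LocallyIntegrable f volume →
        lorentzNorm p q (ntMax ψ f) < ∞ →
        ∃ (J : ℤ → Set ℕ) (a : ℤ → ℕ → Euc n → ℝ) (ctr : ℤ → ℕ → Euc n) (ρ : ℤ → ℕ → ℝ),
          -- the `a_{j,k}`, `j ∈ J k`, are `H^p` atoms with defining cubes `I_{j,k}`,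
          -- and coefficients `λ_{j,k} = 2^k |I_{j,k}|^{1/p}`
          (∀ (k : ℤ), ∀ j ∈ J k, IsHpAtom p (a k j) (ctr k j) (ρ k j)) ∧
          -- (i) bounded overlap at each level, uniformly in `k`
          (∀ (k : ℤ) (x : Euc n),
            (∑' j : J k, (cube (ctr k j) (ρ k j)).indicator (fun _ => (1:ℝ≥0∞)) x) ≤
              ENNReal.ofReal C) ∧
          -- (ii) convergence to `f` in the sense of distributions
          (∀ g : Euc n → ℝ, ContDiff ℝ (⊤ : ℕ∞) g → HasCompactSupport g →
            Filter.Tendsto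
              (fun m : ℕ => ∑ k ∈ Finset.Icc (-(m : ℤ)) (m : ℤ),
                ∑' j : J k,
                  ((2:ℝ) ^ k * ((2 * ρ k (j : ℕ)) ^ n) ^ (1/p)) *
                    ∫ x : Euc n, a k (j : ℕ) x * g x)
              Filter.atTop (nhds (∫ x : Euc n, f x * g x))) ∧
          -- (iii) the coefficients compute the `H^{p,q}` quasinorm
          ENNReal.ofReal c₁ * lorentzNorm p q (ntMax ψ f) ≤
            ellq q (fun k =>
              (∑' j : J k,
                ENNReal.ofReal (((2:ℝ) ^ k * ((2 * ρ k (j : ℕ)) ^ n) ^ (1/p)) ^ p)) ^ (1/p)) ∧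
          ellq q (fun k =>
              (∑' j : J k,
                ENNReal.ofReal (((2:ℝ) ^ k * ((2 * ρ k (j : ℕ)) ^ n) ^ (1/p)) ^ p)) ^ (1/p)) ≤
            ENNReal.ofReal c₂ * lorentzNorm p q (ntMax ψ f) := by
  have : NeZero n := ⟨Nat.one_le_iff_ne_zero.1 hn⟩
  obtain ⟨C, c₁, c₂, hC, hc₁, hc₂, h⟩ := stmt4_general hp0 hq hψ.continuous hψc hψi
  refine ⟨C, c₁, c₂, hC, hc₁, hc₂, fun f hf hl => ?_⟩
  obtain ⟨J, a, ctr, ρ, hD⟩ := h f hf hl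
  exact ⟨J, a, ctr, ρ, hD.isHpAtom, hD.overlap, fun g hg => hD.tendsto g hg.continuous, hD.lower,
    hD.upper⟩

end
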